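/- arXiv:2205.14111 — 4 statements merged into one kernel-verified Lean document; each statement's English description precedes it below -/
import Mathlib

section
/- Let Ω ⊂ ℝ^d be a convex body with B(0,1) ⊂ Ω ⊂ B(0,d), and let ρ be its Dubiner-type metric. There is a constant C* > 0 depending only on d such that for every n ≥ 1 and every polynomial Q of total degree at most n in d variables with max_{z∈Ω}|Q(z)| ≤ 1, we have |Q(x) − Q(y)| ≤ C* · n · ρ(x,y) for all x, y ∈ Ω. -/
open scoped InnerProductSpace

/-- `a_ξ = min_{z ∈ Ω} z·ξ`. -/
noncomputable def dubA {d : ℕ} (Ω : Set (EuclideanSpace ℝ (Fin d)))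
    (ξ : EuclideanSpace ℝ (Fin d)) : ℝ :=
  sInf ((fun z => ⟪z, ξ⟫_ℝ) '' Ω)

/-- The Dubiner-type metric
`ρ_Ω(x,y) = max_{ξ ∈ S^{d-1}} |√(x·ξ - a_ξ) - √(y·ξ - a_ξ)|`. -/
noncomputable def dubMetric {d : ℕ} (Ω : Set (EuclideanSpace ℝ (Fin d)))
    (x y : EuclideanSpace ℝ (Fin d)) : ℝ :=
  ⨆ ξ : Metric.sphere (0 : EuclideanSpace ℝ (Fin d)) 1,
    |Real.sqrt (⟪x, (ξ : EuclideanSpace ℝ (Fin d))⟫_ℝ - dubA Ω ξ) -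
      Real.sqrt (⟪y, (ξ : EuclideanSpace ℝ (Fin d))⟫_ℝ - dubA Ω ξ)|


open Polynomial in
theorem poly_split (m : ℕ) : ∀ P : ℝ[X], P.natDegree ≤ m → ∃ A B : ℝ[X],
    P = A.comp (X^2) + X * B.comp (X^2) ∧ 2 * A.natDegree ≤ m + 1 ∧ 2 * B.natDegree ≤ m := by
  induction m with
  | zero =>
    intro P hP
    refine ⟨P, 0, ?_, ?_, by simp⟩
    · rw [Polynomial.eq_C_of_natDegree_le_zero hP]; simp
    · omega
  | succ m ih =>
    intro P hP
    obtain ⟨A, B, h, hA, hB⟩ := ih P.divX (by rw [natDegree_divX_eq_natDegree_tsub_one]; omega)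
    refine ⟨C (P.coeff 0) + X * B, A, ?_, ?_, hA⟩
    · conv_lhs => rw [← divX_mul_X_add P, h]
      simp only [add_comp, C_comp, mul_comp, X_comp]
      ring
    · have h1 : (C (P.coeff 0) + X * B).natDegree ≤ 1 + B.natDegree := by
        refine (natDegree_add_le _ _).trans (max_le (by simp) ?_)
        exact natDegree_mul_le.trans (by simp)
      omega

open Polynomial in
theorem bern_zero (m : ℕ) (P : ℝ[X]) (hP : P.natDegree ≤ m)
    (hb : ∀ t : ℝ, |t| ≤ 1 → |P.eval t| ≤ 1) : |(derivative P).eval 0| ≤ 2 * (m + 1) := by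
  obtain ⟨A, B, h, -, hB⟩ := poly_split m P hP
  set R : ℝ[X] := X * B^2 with hR
  have hd0 : (derivative P).eval 0 = B.eval 0 := by
    rw [h]; simp [derivative_comp]
  have hRd : R.natDegree ≤ m + 1 := by
    refine natDegree_mul_le.trans ?_
    have := natDegree_pow_le (p := B) (n := 2)
    have := natDegree_X_le (R := ℝ)
    omega
  have hRb : ∀ s : ℝ, 0 ≤ s → s ≤ 1 → 0 ≤ R.eval s ∧ R.eval s ≤ 1 := by
    intro s h0 h1
    have ht1 : |√s| ≤ 1 := by
      rw [abs_of_nonneg (Real.sqrt_nonneg _)]; exact Real.sqrt_le_one.2 h1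
    have e1 := hb (√s) ht1
    have e2 := hb (-√s) (by rwa [abs_neg])
    rw [h] at e1 e2
    have hs := Real.sq_sqrt h0
    simp [hs] at e1 e2
    rw [abs_le] at e1 e2
    have e3 : R.eval s = (√s * eval s B)^2 := by simp [hR, mul_pow, hs]
    rw [e3]
    refine ⟨sq_nonneg _, ?_⟩
    rw [sq_le_one_iff_abs_le_one, abs_le]
    constructor <;> linarith [e1.1, e1.2, e2.1, e2.2]
  set S : ℝ[X] := -(R.comp (C (1/2) - C (1/2) * X)) with hS
  have hSd : S.degree ≤ (m + 1 : ℕ) := by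
    rw [← natDegree_le_iff_degree_le, hS, natDegree_neg]
    refine natDegree_comp_le.trans ?_
    have : (C (1/2 : ℝ) - C (1/2) * X).natDegree ≤ 1 := by compute_degree
    calc _ ≤ R.natDegree * 1 := Nat.mul_le_mul_left _ this
      _ ≤ _ := by omega
  have key := Chebyshev.eval_iterate_derivative_le_of_forall_abs_le_one (n := m + 1) (P := S) (k := 1) (x := 1) le_rfl hSd
    (by
      intro x hx'
      rw [Set.mem_Icc] at hx'
      have := hRb (1/2 - 1/2 * x) (by linarith) (by linarith)
      rw [hS]
      simp only [eval_neg, eval_comp, eval_sub, eval_C, eval_mul, eval_X, abs_neg]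
      rw [abs_le]
      constructor <;> linarith)
  have hT := Chebyshev.derivative_T_eval_one (R := ℝ) ((m + 1 : ℕ) : ℤ)
  simp only [Function.iterate_one] at key
  rw [hT] at key
  have hS1 : (derivative S).eval 1 = (1/2) * (B.eval 0)^2 := by
    simp [hS, hR]
  rw [hS1] at key
  rw [hd0]
  push_cast at key
  apply abs_le_of_sq_le_sq
  · nlinarith
  · positivity

theorem evalF_differentiable {d : ℕ} (Q : MvPolynomial (Fin d) ℝ) :
    Differentiable ℝ (fun p : EuclideanSpace ℝ (Fin d) => MvPolynomial.eval (fun i => p i) Q) := by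
  induction Q using MvPolynomial.induction_on with
  | C a => simp
  | add p q hp hq =>
    simp only [map_add]
    exact hp.add hq
  | mul_X p i hp =>
    simp only [map_mul, MvPolynomial.eval_X]
    refine hp.mul ?_
    fun_prop

section
variable {d : ℕ} {Ω : Set (EuclideanSpace ℝ (Fin d))}

theorem dubA_le (hc : IsCompact Ω) (ξ : EuclideanSpace ℝ (Fin d)) {p : EuclideanSpace ℝ (Fin d)}
    (hp : p ∈ Ω) : dubA Ω ξ ≤ ⟪p, ξ⟫_ℝ := by
  refine csInf_le ?_ ⟨p, hp, rfl⟩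
  exact (hc.image (by fun_prop)).bddBelow

theorem dubA_le_neg_one (hc : IsCompact Ω)
    (h1 : Metric.closedBall (0 : EuclideanSpace ℝ (Fin d)) 1 ⊆ Ω)
    (ξ : EuclideanSpace ℝ (Fin d)) (hξ : ‖ξ‖ = 1) : dubA Ω ξ ≤ -1 := by
  have := dubA_le hc ξ (h1 (show -ξ ∈ _ by simp [hξ]))
  simpa [inner_neg_left, hξ] using this

theorem abs_inner_le_d (h2 : Ω ⊆ Metric.closedBall (0 : EuclideanSpace ℝ (Fin d)) d)
    (ξ : EuclideanSpace ℝ (Fin d)) (hξ : ‖ξ‖ = 1) {p : EuclideanSpace ℝ (Fin d)}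
    (hp : p ∈ Ω) : |⟪p, ξ⟫_ℝ| ≤ d := by
  have := abs_real_inner_le_norm p ξ
  have h := h2 hp
  rw [mem_closedBall_zero_iff] at h
  rw [hξ, mul_one] at this
  linarith

theorem mem_of_dubA_le (hc : IsCompact Ω) (hconv : Convex ℝ Ω) (hne : Ω.Nonempty)
    {p : EuclideanSpace ℝ (Fin d)}
    (hp : ∀ ξ : EuclideanSpace ℝ (Fin d), ‖ξ‖ = 1 → dubA Ω ξ ≤ ⟪p, ξ⟫_ℝ) : p ∈ Ω := by
  by_contra hn
  obtain ⟨f, u, hfu, hb⟩ := geometric_hahn_banach_point_closed hconv hc.isClosed hn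
  set v := (InnerProductSpace.toDual ℝ (EuclideanSpace ℝ (Fin d))).symm f with hv
  have hf : ∀ z, f z = ⟪z, v⟫_ℝ := by
    intro z
    rw [real_inner_comm, hv, InnerProductSpace.toDual_symm_apply]
  have hv0 : v ≠ 0 := by
    intro h0
    obtain ⟨z, hz⟩ := hne
    have := hb z hz
    rw [hf, h0, inner_zero_right] at this hfu
    linarith
  have hvp : 0 < ‖v‖ := norm_pos_iff.2 hv0
  have h1 := hp (‖v‖⁻¹ • v) (by rw [norm_smul]; simp [hvp.ne'])
  have h2 : ‖v‖⁻¹ * u ≤ dubA Ω (‖v‖⁻¹ • v) := by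
    refine le_csInf (hne.image _) ?_
    rintro _ ⟨z, hz, rfl⟩
    simp only [inner_smul_right]
    rw [← hf]
    exact mul_le_mul_of_nonneg_left (hb z hz).le (by positivity)
  rw [inner_smul_right, ← hf] at h1
  have := lt_of_mul_lt_mul_left (lt_of_lt_of_le
    (mul_lt_mul_of_pos_left hfu (inv_pos.2 hvp)) (h2.trans h1)) (by positivity)
  exact lt_irrefl _ this

theorem deriv_bound (hc : IsCompact Ω) (hconv : Convex ℝ Ω)
    (h1 : Metric.closedBall (0 : EuclideanSpace ℝ (Fin d)) 1 ⊆ Ω)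
    {n : ℕ} (hn : 1 ≤ n) (Q : MvPolynomial (Fin d) ℝ) (hQ : Q.totalDegree ≤ n)
    (hb : ∀ z ∈ Ω, |MvPolynomial.eval (fun i => z i) Q| ≤ 1)
    {p u : EuclideanSpace ℝ (Fin d)} (hp : p ∈ Ω) {A : ℝ} (hA : 0 < A)
    (hu : ∀ ξ : EuclideanSpace ℝ (Fin d), ‖ξ‖ = 1 →
      |⟪u, ξ⟫_ℝ| ≤ A * √(⟪p, ξ⟫_ℝ - dubA Ω ξ)) :
    |fderiv ℝ (fun p : EuclideanSpace ℝ (Fin d) => MvPolynomial.eval (fun i => p i) Q) p u| ≤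
      12 * A * n := by
  set F := fun p : EuclideanSpace ℝ (Fin d) => MvPolynomial.eval (fun i => p i) Q with hF
  have hne : Ω.Nonempty := ⟨p, hp⟩
  set γ : ℝ → EuclideanSpace ℝ (Fin d) :=
    fun s => p + s • ((1 / (2 * A)) • u) - s ^ 2 • ((1/4 : ℝ) • p) with hγ
  set c : Fin d → Polynomial ℝ := fun i => Polynomial.C (p i) +
    Polynomial.C ((1 / (2 * A)) * u i) * Polynomial.X - Polynomial.C ((1/4) * p i) * Polynomial.X ^ 2
    with hcdef
  set P : Polynomial ℝ := MvPolynomial.aeval c Q with hPdef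
  have hPdeg : P.natDegree ≤ n * 2 := by
    refine MvPolynomial.aeval_natDegree_le Q hQ c ?_
    intro i
    simp only [hcdef]
    compute_degree
  have hPe : ∀ s, P.eval s = F (γ s) := by
    intro s
    have : P.eval s = Polynomial.evalRingHom s (MvPolynomial.eval₂ Polynomial.C c Q) := rfl
    have h' : F (γ s) = MvPolynomial.eval₂ (RingHom.id ℝ) (fun i => γ s i) Q := rfl
    rw [this, MvPolynomial.hom_eval₂, h']
    congr 1
    · ext; simp
    · funext i
      simp [hcdef, hγ]
      ring
  have hmem : ∀ s : ℝ, |s| ≤ 1 → γ s ∈ Ω := by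
    intro s hs
    refine mem_of_dubA_le hc hconv hne ?_
    intro ξ hξ
    have ha := dubA_le_neg_one hc h1 ξ hξ
    have hh := dubA_le hc ξ hp
    have hu' := hu ξ hξ
    set a := dubA Ω ξ
    set q := √(⟪p, ξ⟫_ℝ - a) with hq
    have hqs : q ^ 2 = ⟪p, ξ⟫_ℝ - a := Real.sq_sqrt (by linarith)
    have hq0 : 0 ≤ q := Real.sqrt_nonneg _
    have e : ⟪γ s, ξ⟫_ℝ = ⟪p, ξ⟫_ℝ + s * ((1 / (2 * A)) * ⟪u, ξ⟫_ℝ) - s ^ 2 * (1/4 * ⟪p, ξ⟫_ℝ) := by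
      simp only [hγ, inner_sub_left, inner_add_left, real_inner_smul_left]
    rw [e]
    have e2 : |s * ((1 / (2 * A)) * ⟪u, ξ⟫_ℝ)| ≤ |s| * (q / 2) := by
      rw [abs_mul]
      refine mul_le_mul_of_nonneg_left ?_ (abs_nonneg _)
      rw [abs_mul, abs_of_pos (by positivity : 0 < 1 / (2 * A))]
      calc _ ≤ 1 / (2 * A) * (A * q) := mul_le_mul_of_nonneg_left hu' (by positivity)
        _ = q / 2 := by field_simp
    have e3 := (abs_le.1 e2).1
    have e4 : ⟪p, ξ⟫_ℝ = q ^ 2 + a := by linarith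
    generalize s * ((1 / (2 * A)) * ⟪u, ξ⟫_ℝ) = T at *
    clear_value q
    rw [e4]
    have e5 : s ^ 2 = |s| ^ 2 := (sq_abs s).symm
    have e6 : |s| ^ 2 ≤ 1 := by nlinarith [abs_nonneg s]
    rw [e5]
    nlinarith [sq_nonneg (q / 2 - |s| / 2), mul_nonneg (sub_nonneg.2 e6) (sq_nonneg q),
      mul_nonneg (sq_nonneg |s|) (by linarith : 0 ≤ -1 - a), abs_nonneg s]
  have key := bern_zero (n * 2) P hPdeg (fun t ht => by rw [hPe]; exact hb _ (hmem t ht))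
  have hγd : HasDerivAt γ ((1 / (2 * A)) • u) 0 := by
    have a1 : HasDerivAt (fun s : ℝ => s • ((1 / (2 * A)) • u)) ((1:ℝ) • ((1 / (2 * A)) • u)) 0 :=
      (hasDerivAt_id (0:ℝ)).smul_const _
    have a2 : HasDerivAt (fun s : ℝ => s ^ 2 • ((1/4 : ℝ) • p))
        (((2:ℕ) * (0:ℝ) ^ (2-1)) • ((1/4 : ℝ) • p)) 0 :=
      (hasDerivAt_pow 2 (0:ℝ)).smul_const _
    have := (a1.const_add p).sub a2
    refine this.congr_deriv ?_
    simp
  have hγ0 : γ 0 = p := by simp [hγ]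
  have hd : HasDerivAt (fun s => F (γ s)) (fderiv ℝ F p ((1 / (2 * A)) • u)) 0 := by
    have hFd : HasFDerivAt F (fderiv ℝ F p) (γ 0) := by
      rw [hγ0]; exact (evalF_differentiable Q p).hasFDerivAt
    exact hFd.comp_hasDerivAt 0 hγd
  have hd2 : HasDerivAt (fun s => F (γ s)) ((Polynomial.derivative P).eval 0) 0 := by
    have := P.hasDerivAt 0
    exact this.congr_of_eventuallyEq (Filter.Eventually.of_forall fun s => (hPe s).symm)
  rw [hd2.unique hd, map_smul, smul_eq_mul, abs_mul, abs_of_pos (by positivity : 0 < 1 / (2 * A)),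
    div_mul_eq_mul_div, one_mul, div_le_iff₀ (by positivity)] at key
  have hn' : (1:ℝ) ≤ n := by exact_mod_cast hn
  push_cast at key
  nlinarith

theorem path_bound {F : EuclideanSpace ℝ (Fin d) → ℝ} (hF : Differentiable ℝ F)
    {g g' : ℝ → EuclideanSpace ℝ (Fin d)} {b K : ℝ} (hb : 0 ≤ b)
    (hg : ∀ s, HasDerivAt g (g' s) s)
    (hK : ∀ s, 0 < s → s ≤ b → |fderiv ℝ F (g s) (g' s)| ≤ K) :
    |F (g b) - F (g 0)| ≤ K * b := by
  have hd : ∀ s, HasDerivAt (fun s => F (g s)) (fderiv ℝ F (g s) (g' s)) s := fun s =>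
    (hF (g s)).hasFDerivAt.comp_hasDerivAt s (hg s)
  rcases hb.eq_or_lt with rfl | hb
  · simp
  obtain ⟨t, ht, e⟩ := exists_hasDerivAt_eq_slope (fun s => F (g s)) _ hb
    (fun s _ => (hd s).continuousAt.continuousWithinAt) (fun s _ => hd s)
  have := hK t ht.1 ht.2.le
  rw [e, sub_zero, abs_div, abs_of_pos hb, div_le_iff₀ hb] at this
  exact this

theorem core_bound (hd : 1 ≤ d) (hc : IsCompact Ω) (hconv : Convex ℝ Ω)
    (h1 : Metric.closedBall (0 : EuclideanSpace ℝ (Fin d)) 1 ⊆ Ω)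
    (h2 : Ω ⊆ Metric.closedBall (0 : EuclideanSpace ℝ (Fin d)) d)
    {n : ℕ} (hn : 1 ≤ n) (Q : MvPolynomial (Fin d) ℝ) (hQ : Q.totalDegree ≤ n)
    (hb : ∀ z ∈ Ω, |MvPolynomial.eval (fun i => z i) Q| ≤ 1)
    {x y : EuclideanSpace ℝ (Fin d)} (hx : x ∈ Ω) (hy : y ∈ Ω) {r : ℝ} (hr : 0 < r)
    (hrho : ∀ ξ : EuclideanSpace ℝ (Fin d), ‖ξ‖ = 1 →
      |√(⟪x, ξ⟫_ℝ - dubA Ω ξ) - √(⟪y, ξ⟫_ℝ - dubA Ω ξ)| ≤ r) :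
    |MvPolynomial.eval (fun i => x i) Q - MvPolynomial.eval (fun i => y i) Q| ≤
      (48 * d + 60) * n * r := by
  have hn' : (1:ℝ) ≤ n := by exact_mod_cast hn
  have hd' : (1:ℝ) ≤ d := by exact_mod_cast hd
  set F := fun p : EuclideanSpace ℝ (Fin d) => MvPolynomial.eval (fun i => p i) Q with hF
  change |F x - F y| ≤ _
  have hFd : Differentiable ℝ F := evalF_differentiable Q
  rcases lt_or_ge (1/2) r with hr2 | hr2
  · have e1 := abs_le.1 (hb x hx)
    have e2 := abs_le.1 (hb y hy)
    have e3 : |F x - F y| ≤ 2 := by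
      rw [abs_le]; constructor <;> simp only [hF] <;> linarith [e1.1, e1.2, e2.1, e2.2]
    have e4 : (1:ℝ) / 2 ≤ n * r := by nlinarith
    nlinarith
  have hz0 : (0 : EuclideanSpace ℝ (Fin d)) ∈ Ω := h1 (by simp)
  have hscale : ∀ z ∈ Ω, ∀ s : ℝ, 0 ≤ s → s ≤ 1/2 → (1 - s ^ 2) • z ∈ Ω := by
    intro z hz s h0 hs
    have := hconv hz hz0 (a := 1 - s ^ 2) (b := s ^ 2) (by nlinarith) (by positivity) (by ring)
    simpa using this
  have step1 : ∀ z ∈ Ω, |F ((1 - r ^ 2) • z) - F z| ≤ (24 * d * n) * r := by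
    intro z hz
    have hg : ∀ s : ℝ, HasDerivAt (fun s : ℝ => (1 - s ^ 2) • z) ((-(2 * s)) • z) s := by
      intro s
      have := ((hasDerivAt_pow 2 s).const_sub 1).smul_const z
      simpa using this
    have := path_bound hFd (g := fun s : ℝ => (1 - s ^ 2) • z) (K := 24 * d * n) hr.le hg ?_
    · simpa using this
    intro s hs hsr
    have := deriv_bound hc hconv h1 hn Q hQ hb (p := (1 - s ^ 2) • z) (u := (-(2 * s)) • z)
      (hscale z hz s hs.le (hsr.trans hr2)) (A := 2 * d) (by positivity) ?_
    · refine this.trans (le_of_eq (by ring))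
    intro ξ hξ
    have ha := dubA_le_neg_one hc h1 ξ hξ
    have hh := dubA_le hc ξ hz
    have hi := abs_inner_le_d h2 ξ hξ hz
    rw [real_inner_smul_left, real_inner_smul_left, abs_mul, abs_neg,
      abs_of_pos (by positivity : 0 < 2 * s)]
    have : s ≤ √((1 - s ^ 2) * ⟪z, ξ⟫_ℝ - dubA Ω ξ) := by
      apply Real.le_sqrt_of_sq_le
      nlinarith [mul_nonneg (by nlinarith : 0 ≤ 1 - s ^ 2) (sub_nonneg.2 hh), sq_nonneg s]
    calc 2 * s * |⟪z, ξ⟫_ℝ| ≤ 2 * s * d := by gcongr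
      _ = 2 * d * s := by ring
      _ ≤ _ := by gcongr
  have step2 : |F ((1 - r ^ 2) • y) - F ((1 - r ^ 2) • x)| ≤ 60 * r * n := by
    have hg : ∀ s : ℝ, HasDerivAt (fun s : ℝ => (1 - r ^ 2) • (x + s • (y - x)))
        ((1 - r ^ 2) • (y - x)) s := by
      intro s
      have := (((hasDerivAt_id s).smul_const (y - x)).const_add x).const_smul (1 - r ^ 2)
      refine this.congr_deriv ?_
      simp
    have := path_bound hFd (g := fun s : ℝ => (1 - r ^ 2) • (x + s • (y - x)))
      (K := 60 * r * n) zero_le_one hg ?_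
    · simpa using this
    intro s hs hs1
    have hz : x + s • (y - x) ∈ Ω := hconv.add_smul_sub_mem hx hy ⟨hs.le, hs1⟩
    have := deriv_bound hc hconv h1 hn Q hQ hb (p := (1 - r ^ 2) • (x + s • (y - x)))
      (u := (1 - r ^ 2) • (y - x)) (hscale _ hz r hr.le hr2) (A := 5 * r) (by positivity) ?_
    · refine this.trans (le_of_eq (by ring))
    intro ξ hξ
    have ha := dubA_le_neg_one hc h1 ξ hξ
    have hhx := dubA_le hc ξ hx
    have hhy := dubA_le hc ξ hy
    have hab := abs_le.1 (hrho ξ hξ)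
    have habs := hrho ξ hξ
    simp only [real_inner_smul_left, inner_add_left, inner_sub_left]
    set X := ⟪x, ξ⟫_ℝ
    set Y := ⟪y, ξ⟫_ℝ
    set a := dubA Ω ξ
    set α := √(X - a) with hα
    set β := √(Y - a) with hβ
    have hα0 : 0 ≤ α := Real.sqrt_nonneg _
    have hβ0 : 0 ≤ β := Real.sqrt_nonneg _
    have hα2 : α ^ 2 = X - a := Real.sq_sqrt (by linarith)
    have hβ2 : β ^ 2 = Y - a := Real.sq_sqrt (by linarith)
    obtain ⟨m, hm0, hmα, hmβ, hsum⟩ : ∃ m, 0 ≤ m ∧ m ≤ α ∧ m ≤ β ∧ α + β ≤ 2 * m + r := by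
      rcases le_total α β with h | h
      · exact ⟨α, hα0, le_rfl, h, by linarith [hab.1]⟩
      · exact ⟨β, hβ0, h, le_rfl, by linarith [hab.2]⟩
    set w := √((1 - r ^ 2) * (X + s * (Y - X)) - a) with hw
    have hr4 : r ^ 2 ≤ 1 / 4 := by nlinarith
    have hZ : m ^ 2 ≤ X + s * (Y - X) - a := by
      have e1 : m ^ 2 ≤ α ^ 2 := by gcongr
      have e2 : m ^ 2 ≤ β ^ 2 := by gcongr
      rw [hα2] at e1
      rw [hβ2] at e2
      linarith [mul_le_mul_of_nonneg_left e1 (sub_nonneg.2 hs1),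
        mul_le_mul_of_nonneg_left e2 hs.le]
    have hrw : r ≤ w := by
      apply Real.le_sqrt_of_sq_le
      nlinarith [mul_nonneg (by linarith : 0 ≤ 1 - r ^ 2) ((sq_nonneg m).trans hZ), sq_nonneg r]
    have hmw : m / 2 ≤ w := by
      apply Real.le_sqrt_of_sq_le
      nlinarith [mul_nonneg (by linarith : 0 ≤ 1 - r ^ 2) (sub_nonneg.2 hZ), sq_nonneg r,
        mul_nonneg (by linarith : 0 ≤ 1 / 4 - r ^ 2) (sq_nonneg m)]
    have hYX : |Y - X| ≤ r * (α + β) := by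
      have : Y - X = (β - α) * (α + β) := by linear_combination hα2 - hβ2
      rw [this, abs_mul, abs_of_nonneg (by linarith : 0 ≤ α + β)]
      refine mul_le_mul_of_nonneg_right ?_ (by linarith)
      rw [abs_sub_comm]; exact habs
    rw [abs_mul, abs_of_nonneg (by linarith : 0 ≤ 1 - r ^ 2)]
    calc (1 - r ^ 2) * |Y - X| ≤ 1 * |Y - X| := by
          refine mul_le_mul_of_nonneg_right ?_ (abs_nonneg _)
          nlinarith
      _ ≤ r * (α + β) := by rw [one_mul]; exact hYX
      _ ≤ r * (5 * w) := by
          refine mul_le_mul_of_nonneg_left ?_ hr.le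
          linarith
      _ = 5 * r * w := by ring
  have sx := abs_le.1 (step1 x hx)
  have sy := abs_le.1 (step1 y hy)
  have s2 := abs_le.1 step2
  rw [abs_le]
  constructor <;> linarith [sx.1, sx.2, sy.1, sy.2, s2.1, s2.2]

theorem le_dubMetric (hne : Ω.Nonempty)
    (h2 : Ω ⊆ Metric.closedBall (0 : EuclideanSpace ℝ (Fin d)) d)
    {x y : EuclideanSpace ℝ (Fin d)} (hx : x ∈ Ω) (hy : y ∈ Ω)
    (ξ : EuclideanSpace ℝ (Fin d)) (hξ : ‖ξ‖ = 1) :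
    |√(⟪x, ξ⟫_ℝ - dubA Ω ξ) - √(⟪y, ξ⟫_ℝ - dubA Ω ξ)| ≤ dubMetric Ω x y := by
  refine le_ciSup (f := fun ξ : Metric.sphere (0 : EuclideanSpace ℝ (Fin d)) 1 =>
    |√(⟪x, (ξ : EuclideanSpace ℝ (Fin d))⟫_ℝ - dubA Ω ξ) -
      √(⟪y, (ξ : EuclideanSpace ℝ (Fin d))⟫_ℝ - dubA Ω ξ)|) ?_ ⟨ξ, by simpa using hξ⟩
  refine ⟨√(2 * d), ?_⟩
  rintro _ ⟨⟨η, hη⟩, rfl⟩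
  have hη' : ‖η‖ = 1 := by simpa using hη
  have ha : -(d:ℝ) ≤ dubA Ω η := by
    refine le_csInf (hne.image _) ?_
    rintro _ ⟨z, hz, rfl⟩
    exact (abs_le.1 (abs_inner_le_d h2 η hη' hz)).1
  have e1 := (abs_le.1 (abs_inner_le_d h2 η hη' hx)).2
  have e2 := (abs_le.1 (abs_inner_le_d h2 η hη' hy)).2
  have f1 : √(⟪x, η⟫_ℝ - dubA Ω η) ≤ √(2 * d) := Real.sqrt_le_sqrt (by linarith)
  have f2 : √(⟪y, η⟫_ℝ - dubA Ω η) ≤ √(2 * d) := Real.sqrt_le_sqrt (by linarith)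
  have g1 := Real.sqrt_nonneg (⟪x, η⟫_ℝ - dubA Ω η)
  have g2 := Real.sqrt_nonneg (⟪y, η⟫_ℝ - dubA Ω η)
  simp only
  rw [abs_le]
  constructor <;> linarith

end

theorem norm_control {d : ℕ} (hd : 1 ≤ d) :
    ∃ C > (0 : ℝ), ∀ Ω : Set (EuclideanSpace ℝ (Fin d)),
      IsCompact Ω → Convex ℝ Ω →
      Metric.closedBall (0 : EuclideanSpace ℝ (Fin d)) 1 ⊆ Ω →
      Ω ⊆ Metric.closedBall (0 : EuclideanSpace ℝ (Fin d)) d →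
      ∀ n : ℕ, 1 ≤ n → ∀ Q : MvPolynomial (Fin d) ℝ, Q.totalDegree ≤ n →
      (∀ z ∈ Ω, |MvPolynomial.eval (fun i => z i) Q| ≤ 1) →
      ∀ x ∈ Ω, ∀ y ∈ Ω,
        |MvPolynomial.eval (fun i => x i) Q - MvPolynomial.eval (fun i => y i) Q| ≤
          C * n * dubMetric Ω x y := by
  refine ⟨48 * d + 60, by positivity, ?_⟩
  intro Ω hc hconv h1 h2 n hn Q hQ hb x hx y hy
  have hρ0 : 0 ≤ dubMetric Ω x y := Real.iSup_nonneg fun ξ => abs_nonneg _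
  refine le_of_forall_pos_le_add ?_
  intro ε hε
  have hn' : (1:ℝ) ≤ n := by exact_mod_cast hn
  have hK : (0:ℝ) < (48 * d + 60) * n := by positivity
  have := core_bound hd hc hconv h1 h2 hn Q hQ hb hx hy
    (r := dubMetric Ω x y + ε / ((48 * d + 60) * n)) (by positivity) (by
      intro ξ hξ
      have := le_dubMetric ⟨x, hx⟩ h2 hx hy ξ hξ
      have : 0 ≤ ε / ((48 * d + 60) * n) := by positivity
      linarith)
  refine this.trans (le_of_eq ?_)
  rw [mul_add, mul_div_cancel₀ _ hK.ne']
end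

section
/- Let Ω ⊂ ℝ^d be a convex body with B(0,1) ⊂ Ω ⊂ B(0,d) and Dubiner-type metric ρ. There exist constants C > 1 and c ∈ (0,1) depending only on d such that for every x ∈ Ω and n ∈ ℕ there is a polynomial P of total degree at most n in d variables with P(x) = 1 and 0 ≤ P(z) ≤ C·exp(−c√(n·ρ(x,z))) for all z ∈ Ω. -/
open scoped InnerProductSpace

noncomputable def fdF (N : ℕ) (φ : ℝ) : ℝ :=
  (∑ j ∈ Finset.range N, Real.cos (j * φ)) ^ 2 + (∑ j ∈ Finset.range N, Real.sin (j * φ)) ^ 2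

lemma fdF_nonneg (N : ℕ) (φ : ℝ) : 0 ≤ fdF N φ := by unfold fdF; positivity

lemma fdF_zero (N : ℕ) : fdF N 0 = N ^ 2 := by simp [fdF]

lemma fdF_eq (N : ℕ) (φ : ℝ) : fdF N φ =
    ∑ j ∈ Finset.range N, ∑ k ∈ Finset.range N, Real.cos (((j : ℝ) - k) * φ) := by
  unfold fdF
  rw [sq, sq, Finset.sum_mul_sum, Finset.sum_mul_sum, ← Finset.sum_add_distrib]
  refine Finset.sum_congr rfl fun j _ => ?_
  rw [← Finset.sum_add_distrib]
  refine Finset.sum_congr rfl fun k _ => ?_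
  rw [sub_mul, Real.cos_sub]

lemma fdF_le (N : ℕ) (φ : ℝ) : fdF N φ ≤ N ^ 2 := by
  rw [fdF_eq]
  calc _ ≤ ∑ j ∈ Finset.range N, ∑ k ∈ Finset.range N, (1 : ℝ) :=
        Finset.sum_le_sum fun j _ => Finset.sum_le_sum fun k _ => Real.cos_le_one _
    _ = N ^ 2 := by simp [sq]

lemma fd_cos_sum (N : ℕ) (φ : ℝ) : Real.sin (φ / 2) * ∑ j ∈ Finset.range N, Real.cos (j * φ) =
    (Real.sin (N * φ - φ / 2) + Real.sin (φ / 2)) / 2 := by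
  induction N with
  | zero => simp
  | succ n ih =>
    rw [Finset.sum_range_succ, mul_add, ih]
    have h1 : ((n + 1 : ℕ) : ℝ) * φ - φ / 2 = n * φ + φ / 2 := by push_cast; ring
    rw [h1, Real.sin_add, Real.sin_sub]; ring

lemma fd_sin_sum (N : ℕ) (φ : ℝ) : Real.sin (φ / 2) * ∑ j ∈ Finset.range N, Real.sin (j * φ) =
    (Real.cos (φ / 2) - Real.cos (N * φ - φ / 2)) / 2 := by
  induction N with
  | zero => simp
  | succ n ih =>
    rw [Finset.sum_range_succ, mul_add, ih]
    have h1 : ((n + 1 : ℕ) : ℝ) * φ - φ / 2 = n * φ + φ / 2 := by push_cast; ring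
    rw [h1, Real.cos_add, Real.cos_sub]; ring

lemma fdF_mul (N : ℕ) (φ : ℝ) : fdF N φ * Real.sin (φ / 2) ^ 2 ≤ 2 := by
  have : fdF N φ * Real.sin (φ / 2) ^ 2 =
      (Real.sin (φ / 2) * ∑ j ∈ Finset.range N, Real.cos (j * φ)) ^ 2 +
      (Real.sin (φ / 2) * ∑ j ∈ Finset.range N, Real.sin (j * φ)) ^ 2 := by
    unfold fdF; ring
  rw [this, fd_cos_sum, fd_sin_sum]
  nlinarith [Real.sin_sq_add_cos_sq (φ / 2), Real.sin_sq_add_cos_sq (N * φ - φ / 2),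
    sq_nonneg (Real.sin (N * φ - φ / 2) - Real.sin (φ / 2)),
    sq_nonneg (Real.cos (N * φ - φ / 2) + Real.cos (φ / 2))]

open Polynomial in
lemma fd_kernel (L : ℝ) (θ₀ : ℝ) (N : ℕ) : ∃ K : ℝ[X],
    K.natDegree ≤ N ∧ ∀ θ t : ℝ, Real.cos θ = 1 - 2 * t / L →
      K.eval t = (fdF N (θ - θ₀) + fdF N (θ + θ₀)) / N ^ 2 := by
  refine ⟨∑ j ∈ Finset.range N, ∑ k ∈ Finset.range N,
    C (2 / (N : ℝ) ^ 2 * Real.cos (((j : ℝ) - k) * θ₀)) *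
      (Chebyshev.T ℝ ((j : ℤ) - k)).comp (C (-2 / L) * X + C 1), ?_, ?_⟩
  · refine natDegree_sum_le_of_forall_le _ _ fun j hj => natDegree_sum_le_of_forall_le _ _ fun k hk => ?_
    refine (natDegree_C_mul_le _ _).trans (natDegree_comp_le.trans ?_)
    have h1 : (C (-2 / L) * X + C 1 : ℝ[X]).natDegree ≤ 1 := natDegree_linear_le
    have h2 : (Chebyshev.T ℝ ((j : ℤ) - k)).natDegree = ((j : ℤ) - k).natAbs :=
      Chebyshev.natDegree_T _ _
    simp only [Finset.mem_range] at hj hk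
    calc _ ≤ (Chebyshev.T ℝ ((j : ℤ) - k)).natDegree * 1 := by gcongr
      _ ≤ N := by rw [h2]; omega
  · intro θ t h
    rw [fdF_eq, fdF_eq, eval_finsetSum, ← Finset.sum_add_distrib, Finset.sum_div]
    refine Finset.sum_congr rfl fun j _ => ?_
    rw [eval_finsetSum, ← Finset.sum_add_distrib, Finset.sum_div]
    refine Finset.sum_congr rfl fun k _ => ?_
    have h3 : (C (-2 / L) * X + C 1 : ℝ[X]).eval t = Real.cos θ := by
      rw [h]; simp; ring
    rw [eval_mul, eval_C, eval_comp, h3, Chebyshev.T_real_cos]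
    push_cast
    rw [mul_sub, mul_add, Real.cos_sub, Real.cos_add]
    ring

open Polynomial in
lemma fd_oneD (L : ℝ) (hL : 0 < L) (t₀ : ℝ) (ht₀ : t₀ ∈ Set.Icc 0 L) (N : ℕ) : ∃ q : ℝ[X],
    q.natDegree ≤ 2 * N ∧ q.eval t₀ = 1 ∧ ∀ t ∈ Set.Icc 0 L, 0 ≤ q.eval t ∧ q.eval t ≤ 1 ∧
      (√(20 * L) ≤ N * |√t - √t₀| → q.eval t ≤ 15 / 16) := by
  rcases Nat.eq_zero_or_pos N with rfl | hN
  · refine ⟨1, by simp, by simp, fun t _ => ⟨by simp, by simp, fun h => ?_⟩⟩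
    have : 0 < √(20 * L) := by positivity
    rw [Nat.cast_zero, zero_mul] at h; linarith
  have hN' : (0 : ℝ) < N := by exact_mod_cast hN
  have key : ∀ t ∈ Set.Icc 0 L, ∃ θ ∈ Set.Icc 0 Real.pi, Real.cos θ = 1 - 2 * t / L ∧
      √t = √L * Real.sin (θ / 2) := by
    intro t ht
    have h1 : 0 ≤ t / L := div_nonneg ht.1 hL.le
    have h2 : t / L ≤ 1 := (div_le_one hL).2 ht.2
    have hc : Real.cos (Real.arccos (1 - 2 * t / L)) = 1 - 2 * t / L := by
      apply Real.cos_arccos <;> rw [mul_div_assoc] <;> linarith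
    refine ⟨Real.arccos (1 - 2 * t / L), ⟨Real.arccos_nonneg _, Real.arccos_le_pi _⟩, hc, ?_⟩
    rw [Real.sin_half_eq_sqrt (Real.arccos_nonneg _)
      ((Real.arccos_le_pi _).trans (by linarith [Real.pi_pos])), hc, ← Real.sqrt_mul hL.le]
    congr 1; field_simp; ring
  obtain ⟨θ₀, hθ₀, hc₀, hs₀⟩ := key t₀ ht₀
  obtain ⟨K, hKd, hK⟩ := fd_kernel L θ₀ N
  have hK0 : 1 ≤ K.eval t₀ := by
    rw [hK θ₀ t₀ hc₀, sub_self, fdF_zero, le_div_iff₀ (by positivity)]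
    linarith [fdF_nonneg N (θ₀ + θ₀)]
  have hKb : ∀ t ∈ Set.Icc 0 L, 0 ≤ K.eval t ∧ K.eval t ≤ 2 := by
    intro t ht
    obtain ⟨θ, hθ, hc, hs⟩ := key t ht
    rw [hK θ t hc]
    constructor
    · have := fdF_nonneg N (θ - θ₀); have := fdF_nonneg N (θ + θ₀); positivity
    · rw [div_le_iff₀ (by positivity)]
      linarith [fdF_le N (θ - θ₀), fdF_le N (θ + θ₀)]
  have hKs : ∀ t ∈ Set.Icc 0 L, √(20 * L) ≤ N * |√t - √t₀| → K.eval t ≤ 1 / 2 := by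
    intro t ht h
    obtain ⟨θ, hθ, hc, hs⟩ := key t ht
    rw [hK θ t hc, div_le_iff₀ (by positivity)]
    have h20 : 20 * L ≤ N ^ 2 * (L * (Real.sin (θ / 2) - Real.sin (θ₀ / 2)) ^ 2) := by
      have := pow_le_pow_left₀ (Real.sqrt_nonneg _) h 2
      rw [Real.sq_sqrt (by positivity), mul_pow, sq_abs, hs, hs₀, ← mul_sub, mul_pow,
        Real.sq_sqrt hL.le] at this
      exact this
    have h20' : 20 ≤ N ^ 2 * (Real.sin (θ / 2) - Real.sin (θ₀ / 2)) ^ 2 := by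
      have : L * 20 ≤ L * (N ^ 2 * (Real.sin (θ / 2) - Real.sin (θ₀ / 2)) ^ 2) := by linarith
      exact le_of_mul_le_mul_left this hL
    have hlip : (Real.sin (θ / 2) - Real.sin (θ₀ / 2)) ^ 2 ≤ ((θ - θ₀) / 2) ^ 2 := by
      rw [sq_le_sq]
      have := Real.lipschitzWith_sin.dist_le_mul (θ / 2) (θ₀ / 2)
      simp only [Real.dist_eq, NNReal.coe_one, one_mul] at this
      rwa [show (θ - θ₀) / 2 = θ / 2 - θ₀ / 2 by ring]
    have hsin : (2 / Real.pi) ^ 2 * ((θ - θ₀) / 2) ^ 2 ≤ Real.sin ((θ - θ₀) / 2) ^ 2 := by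
      have h1 : |(θ - θ₀) / 2| ≤ Real.pi / 2 := by
        rw [abs_le]; constructor <;> linarith [hθ.1, hθ.2, hθ₀.1, hθ₀.2]
      have h2 := Real.mul_le_sin (abs_nonneg ((θ - θ₀) / 2)) h1
      have h3 := pow_le_pow_left₀ (by have := Real.pi_pos; positivity) h2 2
      rw [mul_pow, sq_abs] at h3
      rcases abs_choice ((θ - θ₀) / 2) with e | e <;> rw [e] at h3
      · exact h3
      · rwa [Real.sin_neg, neg_sq] at h3
    have hpi : (4 : ℝ) / 10 ≤ (2 / Real.pi) ^ 2 := by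
      rw [div_pow, div_le_div_iff₀ (by norm_num) (by have := Real.pi_pos; positivity)]
      nlinarith [Real.pi_lt_d2, Real.pi_pos]
    set m := Real.sin ((θ - θ₀) / 2) ^ 2 with hm
    have hmm : 8 ≤ N ^ 2 * m := by
      have h1 : (4 / 10 : ℝ) * (Real.sin (θ / 2) - Real.sin (θ₀ / 2)) ^ 2 ≤ m :=
        (mul_le_mul hpi hlip (sq_nonneg _) (by positivity)).trans hsin
      have h2 : (N : ℝ) ^ 2 * ((4 / 10 : ℝ) * (Real.sin (θ / 2) - Real.sin (θ₀ / 2)) ^ 2) ≤ N ^ 2 * m := by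
        gcongr
      linarith
    have hm' : m ≤ Real.sin ((θ + θ₀) / 2) ^ 2 := by
      have e : Real.sin ((θ + θ₀) / 2) ^ 2 - m = Real.sin θ * Real.sin θ₀ := by
        rw [hm, show θ = 2 * (θ / 2) by ring, show θ₀ = 2 * (θ₀ / 2) by ring,
          Real.sin_two_mul, Real.sin_two_mul,
          show (2 * (θ / 2) + 2 * (θ₀ / 2)) / 2 = θ / 2 + θ₀ / 2 by ring,
          show (2 * (θ / 2) - 2 * (θ₀ / 2)) / 2 = θ / 2 - θ₀ / 2 by ring,
          Real.sin_add, Real.sin_sub]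
        ring_nf
      have := mul_nonneg (Real.sin_nonneg_of_mem_Icc hθ) (Real.sin_nonneg_of_mem_Icc hθ₀)
      linarith
    have f1 := fdF_mul N (θ - θ₀)
    have f2 := fdF_mul N (θ + θ₀)
    rw [← hm] at f1
    have f2' : fdF N (θ + θ₀) * m ≤ 2 :=
      (mul_le_mul_of_nonneg_left hm' (fdF_nonneg _ _)).trans f2
    have mpos : 0 < m := by
      by_contra hcon
      have : (N : ℝ) ^ 2 * m ≤ 0 := mul_nonpos_of_nonneg_of_nonpos (by positivity) (by linarith)
      linarith
    refine le_of_mul_le_mul_right ?_ mpos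
    linarith
  refine ⟨1 - (C (1 / 2) * (C (K.eval t₀) - K)) ^ 2, ?_, ?_, ?_⟩
  · refine (natDegree_sub_le _ _).trans ?_
    rw [natDegree_one]
    refine max_le (Nat.zero_le _) (natDegree_pow_le.trans ?_)
    gcongr
    refine (natDegree_C_mul_le _ _).trans ((natDegree_sub_le _ _).trans ?_)
    simp [hKd]
  · simp
  · intro t ht
    have h0 := hKb t₀ ht₀
    have h1 := hKb t ht
    simp only [eval_sub, eval_one, eval_pow, eval_mul, eval_C]
    refine ⟨by nlinarith, by nlinarith [sq_nonneg (1 / 2 * (eval t₀ K - eval t K))], fun h => ?_⟩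
    have := hKs t ht h
    nlinarith

open scoped Nat in
/-- Near-extremal choice of `d` directions for a positive weight `h` on the sphere. -/
lemma fd_directions {d : ℕ} (h : EuclideanSpace ℝ (Fin d) → ℝ) (ε : ℝ) (hε : 0 < ε)
    (hh : ∀ ξ, ε ≤ h ξ) :
    ∃ f : Fin d → EuclideanSpace ℝ (Fin d), (∀ i, ‖f i‖ = 1) ∧
      ∀ w : EuclideanSpace ℝ (Fin d), (∀ i, |⟪w, f i⟫_ℝ| ≤ h (f i)) →
        ∀ ξ : EuclideanSpace ℝ (Fin d), ‖ξ‖ = 1 → |⟪w, ξ⟫_ℝ| ≤ 2 * d * h ξ := by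
  have hpos : ∀ ξ, 0 < h ξ := fun ξ => hε.trans_le (hh ξ)
  let A : (Fin d → EuclideanSpace ℝ (Fin d)) → Matrix (Fin d) (Fin d) ℝ :=
    fun f => Matrix.of fun j i => f i j / h (f i)
  let S : Set ℝ := {s | ∃ f : Fin d → EuclideanSpace ℝ (Fin d), (∀ i, ‖f i‖ = 1) ∧ s = |(A f).det|}
  have hbdd : BddAbove S := by
    refine ⟨d ! * (1 / ε) ^ d, ?_⟩
    rintro s ⟨f, hf, rfl⟩
    have := Matrix.det_le (A := A f) (abv := AbsoluteValue.abs) (x := 1 / ε) (by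
      intro j i
      have h1 : |f i j| ≤ 1 := by
        have := PiLp.norm_apply_le (f i) j
        rwa [hf i, Real.norm_eq_abs] at this
      change |f i j / h (f i)| ≤ 1 / ε
      rw [abs_div, abs_of_pos (hpos _)]
      exact div_le_div₀ zero_le_one h1 hε (hh _))
    simpa [nsmul_eq_mul] using this
  let e : Fin d → EuclideanSpace ℝ (Fin d) := fun i => EuclideanSpace.single i 1
  have hdete : 0 < |(A e).det| := by
    have : A e = Matrix.diagonal fun i => 1 / h (e i) := by
      ext j i
      by_cases hij : j = i
      · subst hij; simp [A, e]
      · simp [A, e, hij]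
    rw [this, Matrix.det_diagonal, abs_pos]
    exact Finset.prod_ne_zero_iff.2 fun i _ => (one_div_pos.2 (hpos _)).ne'
  have heS : |(A e).det| ∈ S := ⟨e, fun i => by simp [e], rfl⟩
  have hSpos : 0 < sSup S := hdete.trans_le (le_csSup hbdd heS)
  obtain ⟨s, ⟨f, hf, rfl⟩, hs⟩ := exists_lt_of_lt_csSup ⟨_, heS⟩ (half_lt_self hSpos)
  refine ⟨f, hf, fun w hw ξ hξ => ?_⟩
  have hdpos : 0 < |(A f).det| := (half_pos hSpos).trans hs
  let v : Fin d → ℝ := fun j => ξ j / h ξ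
  have hcr : ∀ i, |(A f).cramer v i| ≤ 2 * |(A f).det| := by
    intro i
    rw [Matrix.cramer_apply]
    have : (A f).updateCol i v = A (Function.update f i ξ) := by
      ext j k
      by_cases hk : k = i
      · subst hk; simp [A, v]
      · simp [A, hk]
    rw [this]
    have hle : |(A (Function.update f i ξ)).det| ≤ sSup S := by
      refine le_csSup hbdd ⟨_, fun k => ?_, rfl⟩
      by_cases hk : k = i
      · subst hk; simpa using hξ
      · simpa [hk] using hf k
    linarith
  have hmain : (A f).det * (⟪w, ξ⟫_ℝ / h ξ) =
      ∑ i, (A f).cramer v i * (⟪w, f i⟫_ℝ / h (f i)) := by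
    have h1 := Matrix.mulVec_cramer (A f) v
    have h2 : ∀ j, ∑ i, f i j / h (f i) * (A f).cramer v i = (A f).det * (ξ j / h ξ) := by
      intro j
      have := congrFun h1 j
      simpa [Matrix.mulVec, dotProduct, A, v] using this
    simp only [PiLp.inner_apply, RCLike.inner_apply, conj_trivial, Finset.sum_div, Finset.mul_sum]
    rw [Finset.sum_comm]
    refine Finset.sum_congr rfl fun j _ => ?_
    calc _ = (A f).det * (ξ j / h ξ) * w j := by ring
      _ = _ := by
        rw [← h2, Finset.sum_mul]
        exact Finset.sum_congr rfl fun i _ => by ring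
  have hfin : |(A f).det| * (|⟪w, ξ⟫_ℝ| / h ξ) ≤ |(A f).det| * (2 * d) := by
    calc _ = |(A f).det * (⟪w, ξ⟫_ℝ / h ξ)| := by
          rw [abs_mul, abs_div, abs_of_pos (hpos ξ)]
      _ ≤ ∑ i, |(A f).cramer v i * (⟪w, f i⟫_ℝ / h (f i))| := by
          rw [hmain]; exact Finset.abs_sum_le_sum_abs _ _
      _ ≤ ∑ i : Fin d, 2 * |(A f).det| := by
          refine Finset.sum_le_sum fun i _ => ?_
          rw [abs_mul, abs_div, abs_of_pos (hpos (f i))]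
          have : |⟪w, f i⟫_ℝ| / h (f i) ≤ 1 := (div_le_one (hpos _)).2 (hw i)
          calc _ ≤ |(A f).cramer v i| * 1 := by gcongr
            _ ≤ _ := by rw [mul_one]; exact hcr i
      _ = _ := by simp; ring
  have := le_of_mul_le_mul_left hfin hdpos
  rwa [div_le_iff₀ (hpos ξ)] at this

lemma fd_range {d : ℕ} {Ω : Set (EuclideanSpace ℝ (Fin d))}
    (hΩ : Ω ⊆ Metric.closedBall (0 : EuclideanSpace ℝ (Fin d)) d)
    {ξ : EuclideanSpace ℝ (Fin d)} (hξ : ‖ξ‖ = 1) {z : EuclideanSpace ℝ (Fin d)} (hz : z ∈ Ω) :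
    ⟪z, ξ⟫_ℝ - dubA Ω ξ ∈ Set.Icc (0 : ℝ) (2 * d) := by
  have hb : ∀ y ∈ Ω, |⟪y, ξ⟫_ℝ| ≤ d := by
    intro y hy
    have h1 := abs_real_inner_le_norm y ξ
    have h2 := hΩ hy
    rw [mem_closedBall_zero_iff] at h2
    rw [hξ, mul_one] at h1
    exact h1.trans h2
  have hlow : ∀ s ∈ (fun z => ⟪z, ξ⟫_ℝ) '' Ω, -(d : ℝ) ≤ s := by
    rintro _ ⟨y, hy, rfl⟩; exact (abs_le.1 (hb y hy)).1
  have h1 : dubA Ω ξ ≤ ⟪z, ξ⟫_ℝ := csInf_le ⟨_, hlow⟩ ⟨z, hz, rfl⟩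
  have h2 : -(d : ℝ) ≤ dubA Ω ξ := le_csInf ⟨_, ⟨z, hz, rfl⟩⟩ hlow
  have h3 := (abs_le.1 (hb z hz)).2
  exact ⟨by linarith, by linarith⟩

lemma fd_metric_nonneg {d : ℕ} (Ω : Set (EuclideanSpace ℝ (Fin d)))
    (x z : EuclideanSpace ℝ (Fin d)) : 0 ≤ dubMetric Ω x z :=
  Real.iSup_nonneg fun _ => abs_nonneg _

lemma fd_sphere_nonempty {d : ℕ} (hd : 1 ≤ d) :
    Nonempty (Metric.sphere (0 : EuclideanSpace ℝ (Fin d)) 1) :=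
  ⟨⟨EuclideanSpace.single ⟨0, hd⟩ 1, by simp⟩⟩

lemma fd_metric_le {d : ℕ} (hd : 1 ≤ d) {Ω : Set (EuclideanSpace ℝ (Fin d))}
    (hΩ : Ω ⊆ Metric.closedBall (0 : EuclideanSpace ℝ (Fin d)) d)
    {x z : EuclideanSpace ℝ (Fin d)} (hx : x ∈ Ω) (hz : z ∈ Ω) :
    dubMetric Ω x z ≤ √(2 * d) := by
  have := fd_sphere_nonempty hd
  refine ciSup_le fun ξ => ?_
  have hξ : ‖(ξ : EuclideanSpace ℝ (Fin d))‖ = 1 := by simpa using ξ.2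
  have h1 := fd_range hΩ hξ hx
  have h2 := fd_range hΩ hξ hz
  have := Real.sqrt_le_sqrt h1.2
  have := Real.sqrt_le_sqrt h2.2
  rw [abs_le]
  constructor
  · linarith [Real.sqrt_nonneg (⟪x, (ξ : EuclideanSpace ℝ (Fin d))⟫_ℝ - dubA Ω ξ)]
  · linarith [Real.sqrt_nonneg (⟪z, (ξ : EuclideanSpace ℝ (Fin d))⟫_ℝ - dubA Ω ξ)]

/-- At scale `r`, `d` directions suffice to control the metric. -/
lemma fd_scale {d : ℕ} (hd : 1 ≤ d) {Ω : Set (EuclideanSpace ℝ (Fin d))}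
    (hΩ : Ω ⊆ Metric.closedBall (0 : EuclideanSpace ℝ (Fin d)) d)
    {x : EuclideanSpace ℝ (Fin d)} (hx : x ∈ Ω) (r : ℝ) (hr : 0 < r) :
    ∃ f : Fin d → EuclideanSpace ℝ (Fin d), (∀ i, ‖f i‖ = 1) ∧
      ∀ z ∈ Ω, (∀ i, |√(⟪z, f i⟫_ℝ - dubA Ω (f i)) - √(⟪x, f i⟫_ℝ - dubA Ω (f i))| < r) →
        dubMetric Ω x z ≤ 6 * d * r := by
  have hd' : (1 : ℝ) ≤ d := by exact_mod_cast hd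
  obtain ⟨f, hf, H⟩ := fd_directions
    (fun ξ : EuclideanSpace ℝ (Fin d) => r ^ 2 + 2 * r * √(⟪x, ξ⟫_ℝ - dubA Ω ξ)) (r ^ 2)
    (by positivity) (fun ξ => by
      have : 0 ≤ 2 * r * √(⟪x, ξ⟫_ℝ - dubA Ω ξ) := by positivity
      linarith)
  refine ⟨f, hf, fun z hz hclose => ?_⟩
  have hid : ∀ ξ : EuclideanSpace ℝ (Fin d), ‖ξ‖ = 1 → |⟪z - x, ξ⟫_ℝ| =
      |√(⟪x, ξ⟫_ℝ - dubA Ω ξ) - √(⟪z, ξ⟫_ℝ - dubA Ω ξ)| *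
        (√(⟪z, ξ⟫_ℝ - dubA Ω ξ) + √(⟪x, ξ⟫_ℝ - dubA Ω ξ)) := by
    intro ξ hξ
    have h1 := Real.sq_sqrt (fd_range hΩ hξ hx).1
    have h2 := Real.sq_sqrt (fd_range hΩ hξ hz).1
    set u := √(⟪x, ξ⟫_ℝ - dubA Ω ξ)
    set v := √(⟪z, ξ⟫_ℝ - dubA Ω ξ)
    have h3 : ⟪z - x, ξ⟫_ℝ = -((u - v) * (v + u)) := by
      rw [inner_sub_left]; linear_combination h1 - h2
    rw [h3, abs_neg, abs_mul, abs_of_nonneg (a := v + u) (by positivity)]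
  have hw := H (z - x) (fun i => by
    rw [hid _ (hf i)]
    have h1 := hclose i
    rw [abs_sub_comm] at h1
    set u := √(⟪x, f i⟫_ℝ - dubA Ω (f i))
    set v := √(⟪z, f i⟫_ℝ - dubA Ω (f i))
    have hu : 0 ≤ u := Real.sqrt_nonneg _
    have hv : 0 ≤ v := Real.sqrt_nonneg _
    have h2 : v + u ≤ r + 2 * u := by linarith [(abs_lt.1 h1).1]
    calc _ ≤ r * (r + 2 * u) := by gcongr
      _ = _ := by ring)
  have := fd_sphere_nonempty hd
  refine ciSup_le fun ξ => ?_
  obtain ⟨ξ, hξ⟩ := ξ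
  have hξ : ‖ξ‖ = 1 := by simpa using hξ
  have h1 := hw ξ hξ
  rw [hid ξ hξ] at h1
  simp only
  set u := √(⟪x, ξ⟫_ℝ - dubA Ω ξ)
  set v := √(⟪z, ξ⟫_ℝ - dubA Ω ξ)
  have hu : 0 ≤ u := Real.sqrt_nonneg _
  have hv : 0 ≤ v := Real.sqrt_nonneg _
  have hS : |u - v| ≤ v + u := by rw [abs_le]; constructor <;> linarith
  by_contra hcon
  push Not at hcon
  have hdr : 0 < d * r := by positivity
  have h2 : 6 * d * r * (v + u) ≤ |u - v| * (v + u) := by gcongr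
  have h3 : d * r * (6 * d * r) < d * r * (v + u) := by
    apply mul_lt_mul_of_pos_left (hcon.trans_le hS) hdr
  have h4 : d * r * u ≤ d * r * (v + u) := by gcongr; linarith
  have h5 : d * r * (1 * r) ≤ d * r * (d * r) := by gcongr
  nlinarith

open Polynomial in
lemma fd_ridge {d : ℕ} (q : ℝ[X]) (ξ : EuclideanSpace ℝ (Fin d)) (a : ℝ) :
    ∃ Q : MvPolynomial (Fin d) ℝ, Q.totalDegree ≤ q.natDegree ∧
      ∀ z : EuclideanSpace ℝ (Fin d),
        MvPolynomial.eval (fun i => z i) Q = q.eval (⟪z, ξ⟫_ℝ - a) := by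
  let l : MvPolynomial (Fin d) ℝ :=
    (∑ j, MvPolynomial.C (ξ j) * MvPolynomial.X j) - MvPolynomial.C a
  have hl : l.totalDegree ≤ 1 := by
    refine (MvPolynomial.totalDegree_sub_C_le _ _).trans ?_
    refine (MvPolynomial.totalDegree_finset_sum _ _).trans (Finset.sup_le fun j _ => ?_)
    refine (MvPolynomial.totalDegree_mul _ _).trans ?_
    simp
  have hle : ∀ z : EuclideanSpace ℝ (Fin d), MvPolynomial.eval (fun i => z i) l = ⟪z, ξ⟫_ℝ - a := by
    intro z
    simp [l, PiLp.inner_apply]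
  refine ⟨∑ k ∈ Finset.range (q.natDegree + 1), MvPolynomial.C (q.coeff k) * l ^ k, ?_, ?_⟩
  · refine (MvPolynomial.totalDegree_finset_sum _ _).trans (Finset.sup_le fun k hk => ?_)
    refine (MvPolynomial.totalDegree_mul _ _).trans ?_
    rw [MvPolynomial.totalDegree_C, zero_add]
    refine (MvPolynomial.totalDegree_pow _ _).trans ?_
    have := Finset.mem_range.1 hk
    calc k * l.totalDegree ≤ k * 1 := by gcongr
      _ ≤ _ := by omega
  · intro z
    rw [eval_eq_sum_range, map_sum]
    simp [hle]

/-- One-scale polynomial. -/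
lemma fd_oneScale {d : ℕ} (hd : 1 ≤ d) {Ω : Set (EuclideanSpace ℝ (Fin d))}
    (hΩ : Ω ⊆ Metric.closedBall (0 : EuclideanSpace ℝ (Fin d)) d)
    {x : EuclideanSpace ℝ (Fin d)} (hx : x ∈ Ω) (N : ℕ) :
    ∃ Q : MvPolynomial (Fin d) ℝ, Q.totalDegree ≤ 2 * d * N ∧
      MvPolynomial.eval (fun i => x i) Q = 1 ∧
      ∀ z ∈ Ω, 0 ≤ MvPolynomial.eval (fun i => z i) Q ∧ MvPolynomial.eval (fun i => z i) Q ≤ 1 ∧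
        (6 * d * √(20 * (2 * d)) < N * dubMetric Ω x z →
          MvPolynomial.eval (fun i => z i) Q ≤ 15 / 16) := by
  have hd' : (1 : ℝ) ≤ d := by exact_mod_cast hd
  set B := √(20 * (2 * (d : ℝ))) with hB
  have hBpos : 0 < B := by positivity
  rcases Nat.eq_zero_or_pos N with rfl | hN
  · refine ⟨1, by simp, by simp, fun z _ => ⟨by simp, by simp, fun h => ?_⟩⟩
    rw [Nat.cast_zero, zero_mul] at h
    have : 0 < 6 * d * B := by positivity
    linarith
  have hN' : (0 : ℝ) < N := by exact_mod_cast hN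
  obtain ⟨f, hf, H⟩ := fd_scale hd hΩ hx (B / N) (by positivity)
  choose q hq1 hq2 hq3 using fun i => fd_oneD (2 * (d : ℝ)) (by positivity)
    (⟪x, f i⟫_ℝ - dubA Ω (f i)) (fd_range hΩ (hf i) hx) N
  choose Q hQ1 hQ2 using fun i => fd_ridge (q i) (f i) (dubA Ω (f i))
  refine ⟨∏ i, Q i, ?_, ?_, fun z hz => ?_⟩
  · refine (MvPolynomial.totalDegree_finsetProd _ _).trans ?_
    calc _ ≤ ∑ i : Fin d, 2 * N := Finset.sum_le_sum fun i _ => (hQ1 i).trans (hq1 i)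
      _ = _ := by simp; ring
  · rw [map_prod]
    exact Finset.prod_eq_one fun i _ => by rw [hQ2, hq2]
  · rw [map_prod]
    have hb := fun i => hq3 i _ (fd_range hΩ (hf i) hz)
    refine ⟨Finset.prod_nonneg fun i _ => by rw [hQ2]; exact (hb i).1,
      Finset.prod_le_one (fun i _ => by rw [hQ2]; exact (hb i).1)
        (fun i _ => by rw [hQ2]; exact (hb i).2.1), fun hfar => ?_⟩
    have : ∃ i, B / N ≤ |√(⟪z, f i⟫_ℝ - dubA Ω (f i)) - √(⟪x, f i⟫_ℝ - dubA Ω (f i))| := by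
      by_contra hcon
      push Not at hcon
      have h1 := H z hz hcon
      have h2 : N * dubMetric Ω x z ≤ N * (6 * d * (B / N)) := by gcongr
      have h3 : N * (6 * d * (B / N)) = 6 * d * B := by field_simp
      linarith
    obtain ⟨i, hi⟩ := this
    have h15 := (hb i).2.2 (by rwa [div_le_iff₀ hN', mul_comm] at hi)
    rw [← Finset.mul_prod_erase _ _ (Finset.mem_univ i)]
    have hle : ∏ j ∈ Finset.univ.erase i, MvPolynomial.eval (fun i => z i) (Q j) ≤ 1 :=
      Finset.prod_le_one (fun i _ => by rw [hQ2]; exact (hb i).1)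
        (fun i _ => by rw [hQ2]; exact (hb i).2.1)
    rw [hQ2 i]
    calc _ ≤ Polynomial.eval (⟪z, f i⟫_ℝ - dubA Ω (f i)) (q i) * 1 := by
          gcongr; exact (hb i).1
      _ ≤ _ := by rw [mul_one]; exact h15

theorem fast_decreasing_polynomials {d : ℕ} (hd : 1 ≤ d) :
    ∃ C > (1 : ℝ), ∃ c ∈ Set.Ioo (0 : ℝ) 1,
      ∀ Ω : Set (EuclideanSpace ℝ (Fin d)),
      IsCompact Ω → Convex ℝ Ω →
      Metric.closedBall (0 : EuclideanSpace ℝ (Fin d)) 1 ⊆ Ω →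
      Ω ⊆ Metric.closedBall (0 : EuclideanSpace ℝ (Fin d)) d →
      ∀ x ∈ Ω, ∀ n : ℕ, 1 ≤ n →
      ∃ P : MvPolynomial (Fin d) ℝ, P.totalDegree ≤ n ∧
        MvPolynomial.eval (fun i => x i) P = 1 ∧
        ∀ z ∈ Ω, 0 ≤ MvPolynomial.eval (fun i => z i) P ∧
          MvPolynomial.eval (fun i => z i) P ≤
            C * Real.exp (-c * Real.sqrt (n * dubMetric Ω x z)) := by
  have hd' : (1 : ℝ) ≤ d := by exact_mod_cast hd
  -- `D` is a (slightly enlarged) far threshold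
  obtain ⟨D, hD⟩ : ∃ D : ℝ, D = 6 * d * √(20 * (2 * d)) + 1 := ⟨_, rfl⟩
  have hDR : √(2 * d) ≤ D := by
    have h1 : √(2 * (d : ℝ)) ≤ √(20 * (2 * d)) := Real.sqrt_le_sqrt (by linarith)
    have h2 := Real.sqrt_nonneg (20 * (2 * (d : ℝ)))
    nlinarith
  have hD1 : 1 ≤ D := by
    have : 0 ≤ 6 * d * √(20 * (2 * (d : ℝ))) := by positivity
    linarith
  obtain ⟨E, hE⟩ : ∃ E : ℝ, E = 2 * (4 * d) * D := ⟨_, rfl⟩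
  have hE8 : 8 ≤ E := by rw [hE]; nlinarith
  have hEs : 1 ≤ √E := by rw [Real.one_le_sqrt]; linarith
  have hc1 : 1 / (32 * √E) ≤ 1 / 32 := by
    apply one_div_le_one_div_of_le <;> linarith
  refine ⟨2, by norm_num, 1 / (32 * √E), ⟨by positivity, by linarith⟩, ?_⟩
  intro Ω _ _ _ hΩ x hx n hn
  choose Q hQ1 hQ2 hQ3 using fun N => fd_oneScale hd hΩ hx N
  have hn' : (1 : ℝ) ≤ n := by exact_mod_cast hn
  refine ⟨∏ k ∈ Finset.range n, Q (n / (4 * d * 4 ^ k)) ^ (2 ^ k), ?_, ?_, fun z hz => ?_⟩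
  · refine (MvPolynomial.totalDegree_finsetProd _ _).trans ?_
    have h1 : ∀ k, ((Q (n / (4 * d * 4 ^ k)) ^ (2 ^ k)).totalDegree : ℝ) ≤ n / 2 * (1 / 2) ^ k := by
      intro k
      have h2 : (Q (n / (4 * d * 4 ^ k)) ^ (2 ^ k)).totalDegree
          ≤ 2 ^ k * (2 * d * (n / (4 * d * 4 ^ k))) :=
        (MvPolynomial.totalDegree_pow _ _).trans (by gcongr; exact hQ1 _)
      have h3 : ((n / (4 * d * 4 ^ k) : ℕ) : ℝ) ≤ n / (4 * d * 4 ^ k) := by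
        have := @Nat.cast_div_le ℝ _ _ _ n (4 * d * 4 ^ k)
        push_cast at this
        exact this
      calc ((Q (n / (4 * d * 4 ^ k)) ^ (2 ^ k)).totalDegree : ℝ)
          ≤ 2 ^ k * (2 * d * ((n / (4 * d * 4 ^ k) : ℕ) : ℝ)) := by exact_mod_cast h2
        _ ≤ 2 ^ k * (2 * d * (n / (4 * d * 4 ^ k))) := by gcongr
        _ = _ := by
          rw [show (4 : ℝ) ^ k = 2 ^ k * 2 ^ k by rw [← mul_pow]; norm_num, one_div, inv_pow]
          field_simp; norm_num
    have h2 : ∑ k ∈ Finset.range n, (1 / 2 : ℝ) ^ k ≤ 2 := sum_geometric_two_le n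
    have h3 : ((∑ k ∈ Finset.range n, (Q (n / (4 * d * 4 ^ k)) ^ (2 ^ k)).totalDegree : ℕ) : ℝ)
        ≤ n := by
      push_cast
      calc _ ≤ ∑ k ∈ Finset.range n, (n : ℝ) / 2 * (1 / 2) ^ k := Finset.sum_le_sum fun k _ => h1 k
        _ = n / 2 * ∑ k ∈ Finset.range n, (1 / 2 : ℝ) ^ k := by rw [Finset.mul_sum]
        _ ≤ n / 2 * 2 := by gcongr
        _ = n := by ring
    exact_mod_cast h3
  · simp [map_prod, hQ2]
  · rw [map_prod]
    simp only [map_pow]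
    have hnn : ∀ k, 0 ≤ MvPolynomial.eval (fun i => z i) (Q (n / (4 * d * 4 ^ k))) ^ (2 ^ k) :=
      fun k => pow_nonneg (hQ3 _ z hz).1 _
    have hle1 : ∀ k, MvPolynomial.eval (fun i => z i) (Q (n / (4 * d * 4 ^ k))) ^ (2 ^ k) ≤ 1 :=
      fun k => pow_le_one₀ (hQ3 _ z hz).1 (hQ3 _ z hz).2.1
    refine ⟨Finset.prod_nonneg fun k _ => hnn k, ?_⟩
    have hρ0 := fd_metric_nonneg Ω x z
    have hρ1 := (fd_metric_le hd hΩ hx hz).trans hDR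
    set ρ := dubMetric Ω x z with hρ
    have hnρ : 0 ≤ n * ρ := by positivity
    by_cases hcase : n * ρ < E
    · have h1 : √(n * ρ) ≤ √E := Real.sqrt_le_sqrt hcase.le
      have h2 : 1 / (32 * √E) * √(n * ρ) ≤ 1 / 32 := by
        rw [one_div, inv_mul_le_iff₀ (by positivity)]; linarith
      have h3 := Real.add_one_le_exp (-(1 / (32 * √E)) * √(n * ρ))
      have h4 := Finset.prod_le_one (s := Finset.range n) (fun k _ => hnn k) (fun k _ => hle1 k)
      linarith
    · push Not at hcase
      obtain ⟨k, hk1, hk2⟩ := exists_nat_pow_near (x := n * ρ / E) (y := (4 : ℝ))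
        ((one_le_div (by linarith)).2 hcase) (by norm_num)
      have hEpos : 0 < E := by linarith
      have h4k : (0 : ℝ) < 4 ^ k := by positivity
      have hkE : 4 ^ k * E ≤ n * ρ := by rwa [le_div_iff₀ hEpos] at hk1
      have hden : (0 : ℝ) < 4 * d * 4 ^ k := by positivity
      have hkn : 2 * (4 * d * 4 ^ k) * D ≤ n * ρ := by rw [hE] at hkE; linarith
      have hbig : 2 * (4 * d * 4 ^ k) ≤ (n : ℝ) := by
        have : 2 * (4 * d * 4 ^ k) * D ≤ n * D := hkn.trans (by gcongr)
        exact le_of_mul_le_mul_right this (by linarith)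
      have hklt : k < n := by
        have h1 : k < 4 ^ k := Nat.lt_pow_self (by norm_num)
        have h2 : (4 : ℝ) ^ k ≤ n := by nlinarith
        have h3 : 4 ^ k ≤ n := by exact_mod_cast h2
        omega
      have hN : (n : ℝ) ≤ 2 * (4 * d * 4 ^ k) * ((n / (4 * d * 4 ^ k) : ℕ) : ℝ) := by
        have hbig' : 2 * (4 * d * 4 ^ k) ≤ n := by exact_mod_cast hbig
        have hp : 0 < 4 * d * 4 ^ k := by positivity
        have h1 := Nat.lt_mul_div_succ n hp
        have h2 : n ≤ 2 * (4 * d * 4 ^ k) * (n / (4 * d * 4 ^ k)) := by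
          have h3 : 1 ≤ n / (4 * d * 4 ^ k) := (Nat.one_le_div_iff hp).2 (by omega)
          nlinarith
        exact_mod_cast h2
      have hfar : 6 * d * √(20 * (2 * d)) < ((n / (4 * d * 4 ^ k) : ℕ) : ℝ) * ρ := by
        have h1 : 2 * (4 * d * 4 ^ k) * D
            ≤ 2 * (4 * d * 4 ^ k) * (((n / (4 * d * 4 ^ k) : ℕ) : ℝ) * ρ) := by
          calc _ ≤ n * ρ := hkn
            _ ≤ 2 * (4 * d * 4 ^ k) * ((n / (4 * d * 4 ^ k) : ℕ) : ℝ) * ρ := by gcongr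
            _ = _ := by ring
        have h2 := le_of_mul_le_mul_left h1 (by linarith)
        linarith
      have h15 := (hQ3 _ z hz).2.2 hfar
      have hexp : (15 / 16 : ℝ) ≤ Real.exp (-(1 / 16)) := by
        have := Real.add_one_le_exp (-(1 / 16 : ℝ)); linarith
      have h2k : √(n * ρ) ≤ √E * (2 * 2 ^ k) := by
        have h1 : n * ρ ≤ E * (2 * 2 ^ k) ^ 2 := by
          rw [div_lt_iff₀ hEpos] at hk2
          have : (4 : ℝ) ^ (k + 1) = (2 * 2 ^ k) ^ 2 := by
            rw [← pow_succ', ← pow_mul, mul_comm, pow_mul]; norm_num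
          rw [this] at hk2; linarith
        calc _ ≤ √(E * (2 * 2 ^ k) ^ 2) := Real.sqrt_le_sqrt h1
          _ = _ := by rw [Real.sqrt_mul hEpos.le, Real.sqrt_sq (by positivity)]
      have hfac : MvPolynomial.eval (fun i => z i) (Q (n / (4 * d * 4 ^ k))) ^ (2 ^ k) ≤
          Real.exp (-(1 / (32 * √E)) * √(n * ρ)) := by
        calc _ ≤ Real.exp (-(1 / 16)) ^ (2 ^ k) :=
              pow_le_pow_left₀ (hQ3 _ z hz).1 (h15.trans hexp) _
          _ = Real.exp (2 ^ k * (-(1 / 16))) := by rw [← Real.exp_nat_mul]; norm_num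
          _ ≤ _ := by
            rw [Real.exp_le_exp]
            have : 1 / (32 * √E) * √(n * ρ) ≤ 2 ^ k / 16 := by
              rw [one_div, inv_mul_le_iff₀ (by positivity)]; linarith
            linarith
      have hrest : ∏ j ∈ (Finset.range n).erase k,
          MvPolynomial.eval (fun i => z i) (Q (n / (4 * d * 4 ^ j))) ^ (2 ^ j) ≤ 1 :=
        Finset.prod_le_one (fun k _ => hnn k) (fun k _ => hle1 k)
      rw [← Finset.mul_prod_erase _ _ (Finset.mem_range.2 hklt)]
      calc _ ≤ MvPolynomial.eval (fun i => z i) (Q (n / (4 * d * 4 ^ k))) ^ (2 ^ k) * 1 :=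
            mul_le_mul_of_nonneg_left hrest (hnn k)
        _ ≤ _ := by
          have := Real.exp_pos (-(1 / (32 * √E)) * √(n * ρ))
          linarith
end

section
/- There exists a constant C depending only on d such that for every positive integer n and every convex body Ω ⊂ ℝ^d, there exist points x_1, …, x_N ∈ Ω with N ≤ C·n^d such that for every real polynomial Q in d variables of total degree at most n, max_{z∈Ω} |Q(z)| ≤ 2·max_{1≤j≤N} |Q(x_j)|. -/
open MeasureTheory

/-- The affine function `y ↦ a ⬝ y + b` is nonnegative on `Ω`. -/
def PosOn {d : ℕ} (Ω : Set (Fin d → ℝ)) (a : Fin d → ℝ) (b : ℝ) : Prop :=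
  ∀ y ∈ Ω, 0 ≤ a ⬝ᵥ y + b

lemma exists_center {d : ℕ} (Ω : Set (Fin d → ℝ)) (hc : IsCompact Ω) (hconv : Convex ℝ Ω)
    (hne : Ω.Nonempty) :
    ∃ c ∈ Ω, ∀ a b, PosOn Ω a b → ∀ y ∈ Ω, a ⬝ᵥ y + b ≤ (d + 1) * (a ⬝ᵥ c + b) := by
  let F : Ω → Set (Fin d → ℝ) := fun y =>
    Ω ∩ {p | ∀ a b, PosOn Ω a b → a ⬝ᵥ (y : Fin d → ℝ) + b ≤ (d + 1) * (a ⬝ᵥ p + b)}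
  have hclosed : ∀ y : Ω, IsClosed {p : Fin d → ℝ | ∀ a b, PosOn Ω a b →
      a ⬝ᵥ (y : Fin d → ℝ) + b ≤ (d + 1) * (a ⬝ᵥ p + b)} := by
    intro y
    simp only [Set.ofPred_forall]
    refine isClosed_iInter fun a => isClosed_iInter fun b => isClosed_iInter fun h => ?_
    refine isClosed_le continuous_const ?_
    unfold dotProduct
    fun_prop
  have key : (⋂ i, F i).Nonempty := by
    refine Convex.helly_theorem_compact' (𝕜 := ℝ) ?_ ?_ ?_
    · intro y
      refine hconv.inter ?_
      intro p hp q hq s t hs ht hst a b hab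
      have h1 := hp a b hab
      have h2 := hq a b hab
      simp only [dotProduct_add, dotProduct_smul, smul_eq_mul]
      have e : (d + 1 : ℝ) * (s * a ⬝ᵥ p + t * a ⬝ᵥ q + b)
        = s * ((d + 1) * (a ⬝ᵥ p + b)) + t * ((d + 1) * (a ⬝ᵥ q + b)) := by
        have : t = 1 - s := by linarith
        subst this; ring
      rw [e]
      have := mul_le_mul_of_nonneg_left h1 hs
      have := mul_le_mul_of_nonneg_left h2 ht
      have e2 : a ⬝ᵥ (y : Fin d → ℝ) + b = s * (a ⬝ᵥ (y : Fin d → ℝ) + b) + t * (a ⬝ᵥ (y : Fin d → ℝ) + b) := by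
        rw [← add_mul, hst, one_mul]
      linarith
    · intro y
      exact hc.inter_right (hclosed y)
    · intro I hI
      rcases I.eq_empty_or_nonempty with rfl | hIne
      · simp
      have hcard : (0 : ℝ) < I.card := by exact_mod_cast hIne.card_pos
      refine ⟨∑ i ∈ I, (I.card : ℝ)⁻¹ • (i : Fin d → ℝ), ?_⟩
      simp only [Set.mem_iInter]
      intro y hy
      refine ⟨?_, ?_⟩
      · refine hconv.sum_mem (fun _ _ => by positivity) ?_ (fun i _ => i.2)
        simp [hcard.ne']
      · intro a b hab
        have hI' : (I.card : ℝ) ≤ d + 1 := by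
          simpa using (show (I.card : ℝ) ≤ ((Module.finrank ℝ (Fin d → ℝ) + 1 : ℕ) : ℝ) from by exact_mod_cast hI)
        have e : a ⬝ᵥ (∑ i ∈ I, (I.card : ℝ)⁻¹ • (i : Fin d → ℝ)) + b
            = (I.card : ℝ)⁻¹ * ∑ i ∈ I, (a ⬝ᵥ (i : Fin d → ℝ) + b) := by
          rw [dotProduct_sum, Finset.mul_sum]
          simp only [dotProduct_smul, smul_eq_mul, mul_add, Finset.sum_add_distrib]
          simp [hcard.ne']
        rw [e]
        have h1 : a ⬝ᵥ (y : Fin d → ℝ) + b ≤ ∑ i ∈ I, (a ⬝ᵥ (i : Fin d → ℝ) + b) :=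
          Finset.single_le_sum (f := fun i : Ω => a ⬝ᵥ (i : Fin d → ℝ) + b) (fun i _ => hab i i.2) hy
        have h0 := hab y y.2
        rw [← mul_assoc]
        have : 1 ≤ (d + 1 : ℝ) * (I.card : ℝ)⁻¹ := by
          rw [← div_eq_mul_inv, one_le_div hcard]; exact hI'
        nlinarith
  obtain ⟨c, hcF⟩ := key
  simp only [Set.mem_iInter] at hcF
  obtain ⟨y0, hy0⟩ := hne
  exact ⟨c, (hcF ⟨y0, hy0⟩).1, fun a b hab y hy => (hcF ⟨y, hy⟩).2 a b hab⟩

lemma poly_disc (p : Polynomial ℂ) (M : ℝ) (h : ∀ z : ℂ, ‖z‖ = 1 → ‖p.eval z‖ ≤ M)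
    (z : ℂ) (hz : ‖z‖ ≤ 1) : ‖p.eval z‖ ≤ M := by
  refine Complex.norm_le_of_forall_mem_frontier_norm_le (U := Metric.ball (0:ℂ) 1)
    (f := fun z => p.eval z) Metric.isBounded_ball ?_ ?_ ?_
  · exact p.differentiable.diffContOnCl
  · intro w hw
    rw [frontier_ball _ one_ne_zero] at hw
    exact h w (by simpa using hw)
  · rw [closure_ball _ one_ne_zero]; simpa using hz

lemma poly_growth (p : Polynomial ℂ) (N : ℕ) (hp : p.natDegree ≤ N) (M : ℝ)
    (h : ∀ z : ℂ, ‖z‖ = 1 → ‖p.eval z‖ ≤ M)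
    (z : ℂ) (R : ℝ) (hR : 1 ≤ R) (hz : ‖z‖ ≤ R) : ‖p.eval z‖ ≤ M * R ^ N := by
  have hM : 0 ≤ M := (norm_nonneg _).trans (h 1 (by simp))
  rcases le_total ‖z‖ 1 with h1 | h1
  · refine (poly_disc p M h z h1).trans ?_
    exact le_mul_of_one_le_right hM (one_le_pow₀ hR)
  · have refl : ∀ x : ℂ, x ≠ 0 → (Polynomial.reflect N p).eval x⁻¹ * x ^ N = p.eval x := by
      intro x hx
      let _ := invertibleOfNonzero hx
      have := Polynomial.eval₂_reflect_mul_pow (RingHom.id ℂ) x N p hp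
      simpa [Polynomial.eval₂_id] using this
    have hz0 : z ≠ 0 := by rintro rfl; simp at h1; linarith
    rw [← refl z hz0, norm_mul, norm_pow]
    have h2 : ‖(Polynomial.reflect N p).eval z⁻¹‖ ≤ M := by
      apply poly_disc
      · intro w hw
        have hw0 : w ≠ 0 := by rintro rfl; simp at hw
        have := refl w⁻¹ (inv_ne_zero hw0)
        rw [inv_inv] at this
        have h3 := h w⁻¹ (by simp [hw])
        rw [← this, norm_mul, norm_pow, norm_inv, hw] at h3
        simpa using h3
      · rw [norm_inv]; exact inv_le_one_of_one_le₀ h1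
    gcongr

/-- The algebraic polynomial representing a trigonometric polynomial on an ellipse. -/
lemma exists_circle_poly {d : ℕ} (Q : MvPolynomial (Fin d) ℝ) (n : ℕ) (hQ : Q.totalDegree ≤ n)
    (c u v : Fin d → ℝ) :
    ∃ p : Polynomial ℂ, p.natDegree ≤ 2 * n ∧ ∀ θ : ℝ,
      p.eval (Complex.exp (θ * Complex.I)) = Complex.exp (θ * Complex.I) ^ n *
        ((MvPolynomial.eval (c + Real.cos θ • u + Real.sin θ • v) Q : ℝ) : ℂ) := by
  let q : Fin d → Polynomial ℂ := fun i =>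
    Polynomial.C ((u i - v i * Complex.I) / 2) * Polynomial.X ^ 2 + Polynomial.C (c i : ℂ) * Polynomial.X
      + Polynomial.C ((u i + v i * Complex.I) / 2)
  have hq : ∀ i, (q i).natDegree ≤ 2 := fun i => Polynomial.natDegree_quadratic_le
  refine ⟨∑ s ∈ Q.support, Polynomial.C ((Q.coeff s : ℝ) : ℂ) *
    (Polynomial.X ^ (n - ∑ i, s i) * ∏ i, q i ^ s i), ?_, ?_⟩
  · have hs : ∀ s ∈ Q.support, ∑ i, s i ≤ n := by
      intro s hs
      have := MvPolynomial.le_totalDegree hs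
      rw [Finsupp.sum_fintype _ _ (by simp)] at this
      exact this.trans hQ
    refine Polynomial.natDegree_sum_le_of_forall_le _ _ ?_
    intro s hs'
    refine (Polynomial.natDegree_C_mul_le _ _).trans ?_
    refine Polynomial.natDegree_mul_le.trans ?_
    have h1 : (∏ i, q i ^ s i).natDegree ≤ ∑ i, s i * 2 := by
      refine (Polynomial.natDegree_prod_le _ _).trans ?_
      refine Finset.sum_le_sum fun i _ => ?_
      exact Polynomial.natDegree_pow_le.trans (Nat.mul_le_mul_left _ (hq i))
    rw [← Finset.sum_mul] at h1
    rw [Polynomial.natDegree_X_pow]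
    have := hs s hs'
    omega
  · intro θ
    set e := Complex.exp (θ * Complex.I) with he
    have he0 : e ≠ 0 := Complex.exp_ne_zero _
    have hqe : ∀ i, (q i).eval e = e * (((c + Real.cos θ • u + Real.sin θ • v) i : ℝ) : ℂ) := by
      intro i
      have h1 : Complex.cos θ = (e + e⁻¹) / 2 := by
        rw [Complex.cos, he, ← Complex.exp_neg, neg_mul]
      have h2 : Complex.sin θ = (e⁻¹ - e) * Complex.I / 2 := by
        rw [Complex.sin, he, ← Complex.exp_neg, neg_mul]
      simp only [q, Polynomial.eval_add, Polynomial.eval_mul, Polynomial.eval_C, Polynomial.eval_pow,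
        Polynomial.eval_X, Pi.add_apply, Pi.smul_apply, smul_eq_mul, Complex.ofReal_add, Complex.ofReal_mul,
        Complex.ofReal_cos, Complex.ofReal_sin]
      rw [h1, h2]
      field_simp
      ring
    rw [Polynomial.eval_finsetSum, MvPolynomial.eval_eq', Complex.ofReal_sum, Finset.mul_sum]
    refine Finset.sum_congr rfl fun s hs => ?_
    have hsn : ∑ i, s i ≤ n := by
      have := MvPolynomial.le_totalDegree hs
      rw [Finsupp.sum_fintype _ _ (by simp)] at this
      exact this.trans hQ
    simp only [Polynomial.eval_mul, Polynomial.eval_C, Polynomial.eval_pow, Polynomial.eval_X,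
      Polynomial.eval_prod, hqe, Complex.ofReal_mul, Complex.ofReal_prod, Complex.ofReal_pow, mul_pow,
      Finset.prod_mul_distrib, Finset.prod_pow_eq_pow_sum]
    have : e ^ n = e ^ (n - ∑ i, s i) * e ^ (∑ i, s i) := by rw [← pow_add]; congr 1; omega
    rw [this]; ring

lemma trig_lip {d : ℕ} (Q : MvPolynomial (Fin d) ℝ) (n : ℕ) (hn : 0 < n) (hQ : Q.totalDegree ≤ n)
    (c u v : Fin d → ℝ) (M : ℝ)
    (hM : ∀ θ : ℝ, |MvPolynomial.eval (c + Real.cos θ • u + Real.sin θ • v) Q| ≤ M)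
    (θ : ℝ) (h0 : 0 ≤ θ) (h1 : θ * n < 1) :
    |MvPolynomial.eval (c + Real.cos θ • u + Real.sin θ • v) Q - MvPolynomial.eval (c + u) Q|
      ≤ 11 * (n * θ) * M := by
  obtain ⟨p, hp, hpe⟩ := exists_circle_poly Q n hQ c u v
  have hn' : (0 : ℝ) < n := by exact_mod_cast hn
  have hM0 : 0 ≤ M := (abs_nonneg _).trans (hM 0)
  have hcirc : ∀ z : ℂ, ‖z‖ = 1 → ‖p.eval z‖ ≤ M := by
    intro z hz
    have : z = Complex.exp (z.arg * Complex.I) := by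
      conv_lhs => rw [← Complex.norm_mul_exp_arg_mul_I z, hz]
      simp
    rw [this, hpe, norm_mul, norm_pow, Complex.norm_exp_ofReal_mul_I, one_pow, one_mul,
      Complex.norm_real]
    exact hM _
  have hexp : (1 + 1 / (n : ℝ)) ^ (2 * n) ≤ 9 := by
    have h2 : 1 + 1 / (n : ℝ) ≤ Real.exp (1 / n) := by
      rw [add_comm]; exact Real.add_one_le_exp _
    calc (1 + 1 / (n : ℝ)) ^ (2 * n) ≤ (Real.exp (1 / n)) ^ (2 * n) := by gcongr
      _ = Real.exp 1 ^ 2 := by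
        rw [← Real.exp_nat_mul, ← Real.exp_nat_mul]; congr 1; push_cast; field_simp
      _ ≤ 3 ^ 2 := by gcongr; exact Real.exp_one_lt_three.le
      _ = 9 := by norm_num
  have hbig : ∀ z ∈ Metric.ball (1:ℂ) (1 / n), ‖p.eval z‖ ≤ 9 * M := by
    intro z hz
    have hz' : ‖z‖ ≤ 1 + 1 / n := by
      have h3 : ‖z - 1‖ < 1 / n := by simpa [dist_eq_norm] using hz
      have h4 : ‖z‖ ≤ ‖z - 1‖ + ‖(1:ℂ)‖ := by simpa using norm_add_le (z - 1) 1
      simp only [norm_one] at h4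
      linarith
    refine (poly_growth p (2 * n) hp M hcirc z (1 + 1 / n) (by simp) hz').trans ?_
    rw [mul_comm]; gcongr
  set e := Complex.exp (θ * Complex.I) with he
  have he1 : ‖e‖ = 1 := Complex.norm_exp_ofReal_mul_I θ
  have hdist : ‖e - 1‖ ≤ θ := by
    have := Real.norm_exp_I_mul_ofReal_sub_one_le (x := θ)
    rw [mul_comm Complex.I] at this
    rw [he]; refine this.trans ?_
    simp [abs_of_nonneg h0]
  have hmem : e ∈ Metric.ball (1:ℂ) (1 / n) := by
    rw [Metric.mem_ball, dist_eq_norm]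
    refine hdist.trans_lt ?_
    rwa [lt_div_iff₀ hn']
  have hsch := Complex.dist_le_div_mul_dist_of_mapsTo_ball (R₁ := 1 / (n:ℝ)) (R₂ := 10 * M)
    (f := fun z => p.eval z) (c := 1) (z := e) p.differentiable.differentiableOn
    (by
      intro z hz
      rw [Metric.mem_closedBall, dist_eq_norm]
      have h5 := hbig z hz
      have h6 := hcirc 1 (by simp)
      have := norm_sub_le (p.eval z) (p.eval 1)
      simp only; linarith) hmem
  have hp1 : p.eval 1 = ((MvPolynomial.eval (c + u) Q : ℝ) : ℂ) := by
    have := hpe 0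
    simpa using this
  have hpθ := hpe θ
  rw [← he] at hpθ
  set T := MvPolynomial.eval (c + Real.cos θ • u + Real.sin θ • v) Q with hT
  set T0 := MvPolynomial.eval (c + u) Q with hT0
  simp only [dist_eq_norm] at hsch
  have hTM : |T| ≤ M := hM θ
  have hpow : ‖e ^ n - 1‖ ≤ n * θ := by
    have : e ^ n = Complex.exp (Complex.I * ((n * θ : ℝ) : ℂ)) := by
      rw [he, ← Complex.exp_nat_mul]; congr 1; push_cast; ring
    rw [this]
    refine Real.norm_exp_I_mul_ofReal_sub_one_le.trans ?_
    rw [Real.norm_of_nonneg (by positivity)]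
  have hkey : ((T - T0 : ℝ) : ℂ) = (p.eval e - p.eval 1) - (e ^ n - 1) * T := by
    rw [hpθ, hp1]; push_cast; ring
  have : |T - T0| = ‖((T - T0 : ℝ) : ℂ)‖ := by rw [Complex.norm_real, Real.norm_eq_abs]
  rw [this, hkey]
  refine (norm_sub_le _ _).trans ?_
  rw [norm_mul, Complex.norm_real, Real.norm_eq_abs]
  have h7 : ‖p.eval e - p.eval 1‖ ≤ 10 * (n * θ) * M := by
    refine hsch.trans ?_
    calc 10 * M / (1 / n) * ‖e - 1‖ ≤ 10 * M / (1 / n) * θ := by gcongr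
      _ = _ := by field_simp
  have h8 : ‖e ^ n - 1‖ * |T| ≤ (n * θ) * M := by gcongr
  linarith


lemma mem_of_posOn {d : ℕ} (Ω : Set (Fin d → ℝ)) (hc : IsCompact Ω) (hconv : Convex ℝ Ω)
    (y : Fin d → ℝ) (h : ∀ a b, PosOn Ω a b → 0 ≤ a ⬝ᵥ y + b) : y ∈ Ω := by
  by_contra hy
  obtain ⟨f, u, hf, hu⟩ := geometric_hahn_banach_closed_point hconv hc.isClosed hy
  have hrep : ∀ w : Fin d → ℝ, (fun i => - f (Pi.single i 1)) ⬝ᵥ w = - f w := by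
    intro w
    have := LinearMap.pi_apply_eq_sum_univ (f : (Fin d → ℝ) →ₗ[ℝ] ℝ) w
    simp only [ContinuousLinearMap.coe_coe] at this
    rw [this, dotProduct, ← Finset.sum_neg_distrib]
    refine Finset.sum_congr rfl fun i _ => ?_
    have e : (fun j => if i = j then (1:ℝ) else 0) = Pi.single i 1 := by
      ext j; simp [Pi.single_apply, eq_comm]
    rw [e]; simp [mul_comm]
  have h1 := h (fun i => - f (Pi.single i 1)) u (by
    intro w hw
    rw [hrep]; linarith [hf w hw])
  rw [hrep] at h1
  linarith

lemma ellipse_mem {d : ℕ} (Ω : Set (Fin d → ℝ)) (hc : IsCompact Ω) (hconv : Convex ℝ Ω)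
    (c x v : Fin d → ℝ) (hcΩ : c ∈ Ω) (hxΩ : x ∈ Ω)
    (hv : ∀ a b, PosOn Ω a b → (a ⬝ᵥ v) ^ 2 ≤ (a ⬝ᵥ x + b) * (a ⬝ᵥ c + b)) (θ : ℝ) :
    (1 / 2 : ℝ) • (c + x) + Real.cos θ • ((1 / 2 : ℝ) • (x - c)) + Real.sin θ • v ∈ Ω := by
  refine mem_of_posOn Ω hc hconv _ fun a b hab => ?_
  have h := hv a b hab
  have hX := hab x hxΩ
  have hY := hab c hcΩ
  simp only [dotProduct_add, dotProduct_smul, dotProduct_sub, smul_eq_mul]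
  set X := a ⬝ᵥ x
  set Y := a ⬝ᵥ c
  set D := a ⬝ᵥ v
  have hcs := Real.sin_sq_add_cos_sq θ
  set C := Real.cos θ
  set S := Real.sin θ
  have h2 : (C * ((X - Y) / 2) + S * D) ^ 2 ≤ ((X + Y) / 2 + b) ^ 2 := by
    have : (C * ((X - Y) / 2) + S * D) ^ 2 ≤ (S ^ 2 + C ^ 2) * (((X - Y) / 2) ^ 2 + D ^ 2) := by
      nlinarith [sq_nonneg (C * D - S * ((X - Y) / 2))]
    rw [hcs] at this
    nlinarith
  have h3 := abs_le_of_sq_le_sq h2 (by linarith)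
  have := (abs_le.1 h3).1
  linarith

lemma near_aux (θ S C X Y D k : ℝ) {η : ℝ} (hθ0 : 0 < θ) (hsin : θ / 2 ≤ S)
    (hcos : 1 - C ≤ θ ^ 2 / 2) (hcos0 : 0 ≤ 1 - C) (hX : 0 ≤ X) (hY : 0 ≤ Y)
    (hθη : θ ^ 2 ≤ η) (hθd : θ ^ 2 * k ≤ 1) (h2 : η * Y ≤ X) (h3 : X ≤ k * Y)
    (h1 : |D| ≤ θ / 4 * Real.sqrt (X * Y)) :
    (S⁻¹ * (D + (1 - C) / 2 * (X - Y))) ^ 2 ≤ X * Y := by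
  have hsin0 : 0 < S := by linarith
  have hg : Real.sqrt (X * Y) ^ 2 = X * Y := Real.sq_sqrt (by positivity)
  have hg0 := Real.sqrt_nonneg (X * Y)
  have hXg : θ * X ≤ Real.sqrt (X * Y) := by
    apply Real.le_sqrt_of_sq_le
    have : θ ^ 2 * X ≤ Y := by
      calc θ ^ 2 * X ≤ θ ^ 2 * (k * Y) := by gcongr
        _ = (θ ^ 2 * k) * Y := by ring
        _ ≤ 1 * Y := by gcongr
        _ = Y := one_mul _
    have := mul_le_mul_of_nonneg_right this hX
    linarith
  have hYg : θ * Y ≤ Real.sqrt (X * Y) := by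
    apply Real.le_sqrt_of_sq_le
    have : θ ^ 2 * Y ≤ X := (mul_le_mul_of_nonneg_right hθη hY).trans h2
    have := mul_le_mul_of_nonneg_right this hY
    linarith
  generalize Real.sqrt (X * Y) = g at *
  rw [← hg]
  have hXY : |X - Y| * θ ≤ g := by
    have := mul_nonneg hθ0.le hX
    have := mul_nonneg hθ0.le hY
    rcases abs_cases (X - Y) with ⟨h, _⟩ | ⟨h, _⟩ <;> rw [h] <;> linarith
  have hb : |D + (1 - C) / 2 * (X - Y)| ≤ S * g := by
    refine (abs_add_le _ _).trans ?_
    rw [abs_mul, abs_of_nonneg (show 0 ≤ (1 - C) / 2 by linarith)]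
    have h4 : (1 - C) / 2 * |X - Y| ≤ θ / 4 * g := by
      calc (1 - C) / 2 * |X - Y| ≤ (θ ^ 2 / 2) / 2 * |X - Y| := by gcongr
        _ = θ / 4 * (|X - Y| * θ) := by ring
        _ ≤ _ := by gcongr
    have := mul_le_mul_of_nonneg_right hsin hg0
    linarith
  rw [abs_le] at hb
  rw [inv_mul_eq_div]
  apply sq_le_sq'
  · rw [le_div_iff₀ hsin0]; linarith [hb.1]
  · rw [div_le_iff₀ hsin0]; linarith [hb.2]

lemma near_lip {d : ℕ} (Ω : Set (Fin d → ℝ)) (hc : IsCompact Ω) (hconv : Convex ℝ Ω)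
    (c x z : Fin d → ℝ) (hcΩ : c ∈ Ω) (hxΩ : x ∈ Ω)
    (hcen : ∀ a b, PosOn Ω a b → a ⬝ᵥ x + b ≤ (d + 1) * (a ⬝ᵥ c + b))
    (η θ : ℝ) (hη : ∀ a b, PosOn Ω a b → η * (a ⬝ᵥ c + b) ≤ a ⬝ᵥ x + b)
    (hθ0 : 0 < θ) (hθ1 : θ ≤ 1) (hθη : θ ^ 2 ≤ η) (hθd : θ ^ 2 * (d + 1) ≤ 1)
    (hz : ∀ a b, PosOn Ω a b →
      |a ⬝ᵥ (z - x)| ≤ θ / 4 * Real.sqrt ((a ⬝ᵥ x + b) * (a ⬝ᵥ c + b)))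
    (Q : MvPolynomial (Fin d) ℝ) (m : ℕ) (hm : 0 < m) (hQ : Q.totalDegree ≤ m) (M : ℝ)
    (hM : ∀ y ∈ Ω, |MvPolynomial.eval y Q| ≤ M) (hmθ : θ * m < 1) :
    |MvPolynomial.eval z Q - MvPolynomial.eval x Q| ≤ 11 * (m * θ) * M := by
  have hsin : θ / 2 ≤ Real.sin θ := by
    have := Real.sin_gt_sub_cube hθ0
    nlinarith [mul_pos hθ0 hθ0]
  have hsin0 : 0 < Real.sin θ := by linarith
  have hcos : 1 - Real.cos θ ≤ θ ^ 2 / 2 := by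
    linarith [Real.one_sub_sq_div_two_le_cos (x := θ)]
  have hcos0 : 0 ≤ 1 - Real.cos θ := by linarith [Real.cos_le_one θ]
  set S := Real.sin θ with hS
  set C := Real.cos θ with hC
  set v : Fin d → ℝ := S⁻¹ • (z - x + ((1 - C) / 2) • (x - c)) with hv
  have hin : ∀ φ : ℝ, (1 / 2 : ℝ) • (c + x) + Real.cos φ • ((1 / 2 : ℝ) • (x - c)) + Real.sin φ • v ∈ Ω := by
    refine ellipse_mem Ω hc hconv c x v hcΩ hxΩ fun a b hab => ?_
    have h1 := hz a b hab
    have h2 := hη a b hab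
    have h3 := hcen a b hab
    have hX := hab x hxΩ
    have hY := hab c hcΩ
    have e : a ⬝ᵥ v = S⁻¹ * (a ⬝ᵥ (z - x) + (1 - C) / 2 * ((a ⬝ᵥ x + b) - (a ⬝ᵥ c + b))) := by
      rw [hv]; simp only [dotProduct_add, dotProduct_smul, dotProduct_sub, smul_eq_mul]; ring
    rw [e]
    exact near_aux θ S C _ _ _ (d + 1) hθ0 hsin hcos hcos0 hX hY hθη hθd h2 h3 h1
  have h := trig_lip Q m hm hQ ((1 / 2 : ℝ) • (c + x)) ((1 / 2 : ℝ) • (x - c)) v M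
    (fun φ => hM _ (hin φ)) θ hθ0.le hmθ
  have ez : (1 / 2 : ℝ) • (c + x) + Real.cos θ • ((1 / 2 : ℝ) • (x - c)) + Real.sin θ • v = z := by
    ext i
    simp only [hv, Pi.add_apply, Pi.smul_apply, Pi.sub_apply, smul_eq_mul]
    rw [← hS, ← hC]
    field_simp
    ring
  have ex : (1 / 2 : ℝ) • (c + x) + (1 / 2 : ℝ) • (x - c) = x := by
    ext i
    simp only [Pi.add_apply, Pi.smul_apply, Pi.sub_apply, smul_eq_mul]
    ring
  rwa [ez, ex] at h

lemma shrink_lip {d : ℕ} (Ω : Set (Fin d → ℝ)) (hc : IsCompact Ω) (hconv : Convex ℝ Ω)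
    (c z : Fin d → ℝ) (hcΩ : c ∈ Ω) (hzΩ : z ∈ Ω) (θ : ℝ) (hθ0 : 0 ≤ θ)
    (Q : MvPolynomial (Fin d) ℝ) (m : ℕ) (hm : 0 < m) (hQ : Q.totalDegree ≤ m) (M : ℝ)
    (hM : ∀ y ∈ Ω, |MvPolynomial.eval y Q| ≤ M) (hmθ : θ * m < 1) :
    |MvPolynomial.eval ((1 - (1 - Real.cos θ) / 2) • z + ((1 - Real.cos θ) / 2) • c) Q
      - MvPolynomial.eval z Q| ≤ 11 * (m * θ) * M := by
  have hin := ellipse_mem Ω hc hconv c z 0 hcΩ hzΩ (fun a b hab => by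
    have := mul_nonneg (hab z hzΩ) (hab c hcΩ)
    simpa using this)
  have h := trig_lip Q m hm hQ ((1 / 2 : ℝ) • (c + z)) ((1 / 2 : ℝ) • (z - c)) 0 M
    (fun φ => hM _ (hin φ)) θ hθ0 hmθ
  have ez : (1 / 2 : ℝ) • (c + z) + Real.cos θ • ((1 / 2 : ℝ) • (z - c)) + Real.sin θ • (0 : Fin d → ℝ)
      = (1 - (1 - Real.cos θ) / 2) • z + ((1 - Real.cos θ) / 2) • c := by
    ext i
    simp only [Pi.add_apply, Pi.smul_apply, Pi.sub_apply, smul_eq_mul, Pi.zero_apply]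
    ring
  have ex : (1 / 2 : ℝ) • (c + z) + (1 / 2 : ℝ) • (z - c) = z := by
    ext i
    simp only [Pi.add_apply, Pi.smul_apply, Pi.sub_apply, smul_eq_mul]
    ring
  rwa [ez, ex] at h


lemma exists_freq (φ : ℝ) (h0 : 0 < φ) (h1 : φ ≤ Real.pi / 2) (n : ℕ) :
    ∃ k : ℕ, n ≤ k ∧ (k : ℝ) ≤ n + 2 * Real.pi / φ ∧ 1 / 2 ≤ |Real.sin (k * φ)| := by
  have hpi := Real.pi_pos
  set q : ℕ := ⌈n * φ / Real.pi⌉₊ with hq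
  have hq1 : n * φ ≤ Real.pi * q := by
    have := Nat.le_ceil (n * φ / Real.pi)
    rw [div_le_iff₀ hpi] at this; linarith
  have hq2 : Real.pi * q < n * φ + Real.pi := by
    have := Nat.ceil_lt_add_one (show 0 ≤ n * φ / Real.pi by positivity)
    have h2 : (q : ℝ) * Real.pi < (n * φ / Real.pi + 1) * Real.pi := by gcongr
    rw [add_mul, div_mul_cancel₀ _ hpi.ne'] at h2
    linarith
  set k : ℕ := ⌈(Real.pi * q + Real.pi / 6) / φ⌉₊ with hk
  have hk1 : Real.pi * q + Real.pi / 6 ≤ k * φ := by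
    have := Nat.le_ceil ((Real.pi * q + Real.pi / 6) / φ)
    rwa [div_le_iff₀ h0] at this
  have hk2 : k * φ < Real.pi * q + Real.pi / 6 + φ := by
    have := Nat.ceil_lt_add_one (show 0 ≤ (Real.pi * q + Real.pi / 6) / φ by positivity)
    have h2 : (k : ℝ) * φ < ((Real.pi * q + Real.pi / 6) / φ + 1) * φ := by gcongr
    rwa [add_mul, div_mul_cancel₀ _ h0.ne', one_mul] at h2
  refine ⟨k, ?_, ?_, ?_⟩
  · have : (n : ℝ) * φ ≤ k * φ := by linarith
    exact_mod_cast le_of_mul_le_mul_right this h0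
  · rw [← sub_le_iff_le_add', le_div_iff₀ h0]
    nlinarith
  · have e : (k : ℝ) * φ = (k * φ - q * Real.pi) + q * Real.pi := by ring
    rw [e, Real.sin_add_nat_mul_pi, abs_mul, abs_pow, abs_neg, abs_one, one_pow, one_mul]
    set w := k * φ - q * Real.pi
    have hw1 : Real.pi / 6 ≤ w := by simp only [w]; linarith
    have hw2 : w ≤ Real.pi - Real.pi / 6 := by simp only [w]; linarith
    refine le_trans ?_ (le_abs_self _)
    rw [← Real.sin_pi_div_six]
    rcases le_total w (Real.pi / 2) with h | h
    · exact Real.sin_le_sin_of_le_of_le_pi_div_two (by linarith) h hw1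
    · rw [← Real.sin_pi_sub w]
      exact Real.sin_le_sin_of_le_of_le_pi_div_two (by linarith) (by linarith) (by linarith)

lemma one_dim_poly (κ : ℝ) (hκ : 0 < κ) : ∃ K : ℕ, 0 < K ∧ ∀ n : ℕ, 0 < n → ∀ t : ℝ, 0 < t → t ≤ 1 →
    κ / n ^ 2 ≤ t → ∃ p : Polynomial ℝ, p.natDegree ≤ K * n ∧ p.eval t = 1 ∧
      ∀ s, 0 ≤ s → s ≤ 1 → |p.eval s| ≤ 10 ∧ |p.eval s| * |s - t| ≤ 10 * (Real.sqrt t / n) := by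
  have hpi := Real.pi_pos
  refine ⟨1 + ⌈2 * Real.pi / Real.sqrt κ⌉₊, by omega, ?_⟩
  intro n hn t ht0 ht1 htκ
  have hn' : (0 : ℝ) < n := by exact_mod_cast hn
  set φ := Real.arccos (1 - t) with hφ
  have hcosφ : Real.cos φ = 1 - t := Real.cos_arccos (by linarith) (by linarith)
  have hφ0 : 0 < φ := Real.arccos_pos.2 (by linarith)
  have hφ1 : φ ≤ Real.pi / 2 := Real.arccos_le_pi_div_two.2 (by linarith)
  have hφt : Real.sqrt κ / n ≤ φ := by
    have h1 := Real.one_sub_sq_div_two_le_cos (x := φ)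
    have h2 : κ / n ^ 2 ≤ φ ^ 2 := by nlinarith
    have h3 := Real.sqrt_le_sqrt h2
    rwa [Real.sqrt_sq hφ0.le, Real.sqrt_div hκ.le, Real.sqrt_sq hn'.le] at h3
  obtain ⟨k, hk1, hk2, hk3⟩ := exists_freq φ hφ0 hφ1 n
  have hk0 : 0 < k := by omega
  have hk0' : (0 : ℝ) < k := by exact_mod_cast hk0
  have hkn : (n : ℝ) ≤ k := by exact_mod_cast hk1
  have hkK : k ≤ (1 + ⌈2 * Real.pi / Real.sqrt κ⌉₊) * n := by
    have hsq := Real.sqrt_pos.2 hκ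
    have h1 : 2 * Real.pi / φ ≤ 2 * Real.pi / Real.sqrt κ * n := by
      calc 2 * Real.pi / φ ≤ 2 * Real.pi / (Real.sqrt κ / n) := by gcongr
        _ = _ := by field_simp
    have h2 : 2 * Real.pi / Real.sqrt κ * n ≤ ⌈2 * Real.pi / Real.sqrt κ⌉₊ * n := by
      gcongr; exact Nat.le_ceil _
    have : (k : ℝ) ≤ ((1 + ⌈2 * Real.pi / Real.sqrt κ⌉₊) * n : ℕ) := by
      push_cast; linarith
    exact_mod_cast this
  have hsinφ : 0 < Real.sin φ := Real.sin_pos_of_pos_of_lt_pi hφ0 (by linarith)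
  set G : Polynomial ℝ := (Polynomial.Chebyshev.T ℝ k).comp (1 - Polynomial.X) with hG
  have hGev : ∀ s, 0 ≤ s → s ≤ 1 → G.eval s = Real.cos (k * Real.arccos (1 - s)) := by
    intro s hs0 hs1
    rw [hG, Polynomial.eval_comp]
    simp only [Polynomial.eval_sub, Polynomial.eval_one, Polynomial.eval_X]
    conv_lhs => rw [← Real.cos_arccos (x := 1 - s) (by linarith) (by linarith)]
    rw [Polynomial.Chebyshev.T_real_cos]; simp
  have hGdeg : G.natDegree ≤ k := by
    rw [hG, Polynomial.natDegree_comp]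
    have h1 : (1 - Polynomial.X : Polynomial ℝ).natDegree ≤ 1 := by
      refine (Polynomial.natDegree_sub_le _ _).trans ?_
      simp
    have h2 : (Polynomial.Chebyshev.T ℝ k).natDegree ≤ k := by
      rw [Polynomial.Chebyshev.natDegree_T]; simp
    calc _ ≤ k * 1 := Nat.mul_le_mul h2 h1
      _ = k := mul_one k
  obtain ⟨q, hq⟩ := Polynomial.dvd_iff_isRoot.2
    (show (G - Polynomial.C (G.eval t)).IsRoot t by simp)
  have hqev : ∀ s, G.eval s - G.eval t = (s - t) * q.eval s := by
    intro s
    have := congrArg (Polynomial.eval s) hq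
    simpa using this
  have hqdeg : q.natDegree ≤ k := by
    by_cases hq0 : q = 0
    · simp [hq0]
    have h1 : ((Polynomial.X - Polynomial.C t) * q).natDegree = 1 + q.natDegree := by
      rw [Polynomial.natDegree_mul (Polynomial.X_sub_C_ne_zero t) hq0, Polynomial.natDegree_X_sub_C]
    have h2 : (G - Polynomial.C (G.eval t)).natDegree ≤ k := by
      refine (Polynomial.natDegree_sub_le _ _).trans ?_
      simp [hGdeg]
    rw [hq, h1] at h2
    omega
  have hqt : q.eval t = - (k * Real.sin (k * φ) / Real.sin φ) := by
    have h1 : G.derivative.eval t = q.eval t := by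
      have := congrArg (fun r => Polynomial.eval t (Polynomial.derivative r)) hq
      simpa [Polynomial.derivative_mul] using this
    rw [← h1, hG, Polynomial.derivative_comp]
    simp only [Polynomial.derivative_sub, Polynomial.derivative_one, Polynomial.derivative_X,
      Polynomial.Chebyshev.T_derivative_eq_U, Polynomial.eval_mul, Polynomial.eval_comp,
      Polynomial.eval_sub, Polynomial.eval_one, Polynomial.eval_X, Polynomial.eval_zero,
      Polynomial.eval_intCast]
    have h2 := Polynomial.Chebyshev.U_real_cos φ (k - 1)
    rw [hcosφ] at h2
    rw [eq_div_of_mul_eq hsinφ.ne' h2]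
    push_cast
    rw [sub_add_cancel]; ring
  have hqt' : k / (2 * Real.sin φ) ≤ |q.eval t| := by
    rw [hqt, abs_neg, abs_div, abs_mul, abs_of_pos hk0', abs_of_pos hsinφ]
    rw [div_le_div_iff₀ (by positivity) hsinφ]
    nlinarith [mul_pos hk0' hsinφ]
  have hqtpos : 0 < |q.eval t| := lt_of_lt_of_le (by positivity) hqt'
  have hinv : |q.eval t|⁻¹ ≤ 2 * Real.sin φ / k := by
    rw [inv_le_comm₀ hqtpos (by positivity), inv_div]; exact hqt'
  have hsint : Real.sin φ ≤ 2 * Real.sqrt t := by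
    have h1 : Real.sin φ ^ 2 ≤ (2 * Real.sqrt t) ^ 2 := by
      rw [mul_pow, Real.sq_sqrt ht0.le, Real.sin_sq, hcosφ]; nlinarith
    exact le_of_sq_le_sq h1 (by positivity)
  refine ⟨Polynomial.C (q.eval t)⁻¹ * q, ?_, ?_, ?_⟩
  · exact (Polynomial.natDegree_C_mul_le _ _).trans (hqdeg.trans hkK)
  · simp [inv_mul_cancel₀ (abs_pos.1 hqtpos)]
  · intro s hs0 hs1
    have hGs := hGev s hs0 hs1
    have hGt := hGev t ht0.le ht1
    rw [← hφ] at hGt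
    set ψ := Real.arccos (1 - s) with hψ
    have hcosψ : Real.cos ψ = 1 - s := Real.cos_arccos (by linarith) (by linarith)
    have hψ0 : 0 ≤ ψ := Real.arccos_nonneg _
    have hψ1 : ψ ≤ Real.pi / 2 := Real.arccos_le_pi_div_two.2 (by linarith)
    have hqs := hqev s
    rw [hGs, hGt] at hqs
    simp only [Polynomial.eval_mul, Polynomial.eval_C, abs_mul, abs_inv]
    have hb2 : |q.eval s| * |s - t| ≤ 2 := by
      rw [← abs_mul, mul_comm, ← hqs]
      have h1 := Real.abs_cos_le_one (k * ψ)
      have h2 := Real.abs_cos_le_one (k * φ)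
      exact (abs_sub _ _).trans (by linarith)
    constructor
    · 
      by_cases hst : s = t
      · subst hst
        rw [inv_mul_cancel₀ hqtpos.ne']; norm_num
      have hne : ψ ≠ φ := by
        intro h
        apply hst
        have := congrArg Real.cos h
        rw [hcosψ, hcosφ] at this; linarith
      have hd : 0 < |ψ - φ| := abs_pos.2 (sub_ne_zero.2 hne)
      have h1 : |q.eval s| * |s - t| ≤ k * |ψ - φ| := by
        rw [← abs_mul, mul_comm, ← hqs]
        have h2 := Real.abs_cos_sub_cos_le (k * ψ) (k * φ)
        rw [← mul_sub, abs_mul, abs_of_pos hk0'] at h2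
        exact h2
      have h3 : 2 / Real.pi ^ 2 * φ * |ψ - φ| ≤ |s - t| := by
        have e : s - t = 2 * Real.sin ((ψ + φ) / 2) * Real.sin ((ψ - φ) / 2) := by
          have := Real.cos_sub_cos ψ φ
          rw [hcosψ, hcosφ] at this; linarith
        rw [e, abs_mul, abs_mul]
        have hA : 2 / Real.pi * ((ψ + φ) / 2) ≤ Real.sin ((ψ + φ) / 2) :=
          Real.mul_le_sin (by linarith) (by linarith)
        have hB : 2 / Real.pi * (|ψ - φ| / 2) ≤ |Real.sin ((ψ - φ) / 2)| := by
          have h4 : |ψ - φ| / 2 ≤ Real.pi / 2 := by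
            have : |ψ - φ| ≤ Real.pi := abs_le.2 ⟨by linarith, by linarith⟩
            linarith
          have := Real.mul_le_sin (x := |ψ - φ| / 2) (by positivity) h4
          refine this.trans ?_
          rcases abs_cases (ψ - φ) with ⟨h, _⟩ | ⟨h, _⟩ <;> rw [h]
          · exact le_abs_self _
          · rw [neg_div, Real.sin_neg]; exact neg_le_abs _
        have hA' : 2 / Real.pi * (φ / 2) ≤ |Real.sin ((ψ + φ) / 2)| := by
          refine le_trans ?_ (hA.trans (le_abs_self _))
          gcongr; linarith
        calc 2 / Real.pi ^ 2 * φ * |ψ - φ|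
            = 2 * (2 / Real.pi * (φ / 2)) * (2 / Real.pi * (|ψ - φ| / 2)) := by field_simp; try ring
          _ ≤ |2| * |Real.sin ((ψ + φ) / 2)| * |Real.sin ((ψ - φ) / 2)| := by
            rw [abs_two]; gcongr
      have h5 : |q.eval s| * (2 / Real.pi ^ 2 * φ) ≤ k := by
        have : (|q.eval s| * (2 / Real.pi ^ 2 * φ)) * |ψ - φ| ≤ k * |ψ - φ| := by
          refine le_trans ?_ h1
          rw [mul_assoc]; gcongr
        exact le_of_mul_le_mul_right this hd
      have h6 : |q.eval s| ≤ k * Real.pi ^ 2 / (2 * φ) := by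
        rw [le_div_iff₀ (by positivity)]
        have := mul_le_mul_of_nonneg_right h5 (sq_nonneg Real.pi)
        calc |q.eval s| * (2 * φ) = |q.eval s| * (2 / Real.pi ^ 2 * φ) * Real.pi ^ 2 := by field_simp
          _ ≤ _ := this
      have h7 : Real.sin φ ≤ φ := Real.sin_le hφ0.le
      calc |q.eval t|⁻¹ * |q.eval s| ≤ (2 * Real.sin φ / k) * (k * Real.pi ^ 2 / (2 * φ)) := by gcongr
        _ ≤ (2 * φ / k) * (k * Real.pi ^ 2 / (2 * φ)) := by gcongr
        _ = Real.pi ^ 2 := by field_simp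
        _ ≤ 10 := by nlinarith [Real.pi_lt_d2]
    · calc |q.eval t|⁻¹ * |q.eval s| * |s - t| = |q.eval t|⁻¹ * (|q.eval s| * |s - t|) := by ring
        _ ≤ (2 * Real.sin φ / k) * 2 := by gcongr
        _ ≤ (2 * (2 * Real.sqrt t) / n) * 2 := by gcongr
        _ ≤ 10 * (Real.sqrt t / n) := by
          have : 0 ≤ Real.sqrt t / n := by positivity
          calc _ = 8 * (Real.sqrt t / n) := by ring
            _ ≤ _ := by linarith

lemma auerbach {d : ℕ} (S : Set (Fin d → ℝ)) (B : ℝ) (hB : ∀ a ∈ S, ∀ i, |a i| ≤ B)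
    (hspan : Submodule.span ℝ S = ⊤) :
    ∃ A : Matrix (Fin d) (Fin d) ℝ, (∀ i, A i ∈ S) ∧ A.det ≠ 0 ∧
      ∀ a ∈ S, ∃ t : Fin d → ℝ, (∀ i, |t i| ≤ 2) ∧ a = ∑ i, t i • A i := by
  classical
  let D : Set ℝ := {r | ∃ A : Matrix (Fin d) (Fin d) ℝ, (∀ i, A i ∈ S) ∧ r = |A.det|}
  have hbdd : BddAbove D := by
    refine ⟨(Fintype.card (Fin d)).factorial • B ^ Fintype.card (Fin d), ?_⟩
    rintro r ⟨A, hA, rfl⟩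
    exact Matrix.det_le (abv := AbsoluteValue.abs) (fun i j => hB _ (hA i) j)
  obtain ⟨A0, hA0, hdet0⟩ : ∃ A : Matrix (Fin d) (Fin d) ℝ, (∀ i, A i ∈ S) ∧ A.det ≠ 0 := by
    obtain ⟨b, hbS, hbspan, hbli⟩ := exists_linearIndependent ℝ S
    rw [hspan] at hbspan
    let bas := Module.Basis.mk hbli (by rw [Subtype.range_coe]; exact hbspan.ge)
    have : Fintype b := FiniteDimensional.fintypeBasisIndex bas
    have hcard : Fintype.card b = d := by
      have := Module.finrank_eq_card_basis bas
      simpa using this.symm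
    let e : Fin d ≃ b := (Fintype.equivFinOfCardEq hcard).symm
    refine ⟨fun i => (e i : Fin d → ℝ), fun i => hbS (e i).2, ?_⟩
    have hli : LinearIndependent ℝ (fun i => (e i : Fin d → ℝ)) := hbli.comp e e.injective
    have := Matrix.linearIndependent_rows_iff_isUnit (A := (fun i => (e i : Fin d → ℝ) : Matrix (Fin d) (Fin d) ℝ))
    have h2 := this.1 hli
    exact ((Matrix.isUnit_iff_isUnit_det _).1 h2).ne_zero
  have hD0 : 0 < sSup D := lt_of_lt_of_le (abs_pos.2 hdet0) (le_csSup hbdd ⟨A0, hA0, rfl⟩)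
  obtain ⟨r, ⟨A, hA, rfl⟩, hr⟩ := exists_lt_of_lt_csSup (s := D) ⟨_, A0, hA0, rfl⟩
    (show sSup D / 2 < sSup D by linarith)
  have hdet : A.det ≠ 0 := abs_pos.1 (by linarith)
  refine ⟨A, hA, hdet, fun a ha => ?_⟩
  refine ⟨fun i => (A.updateRow i a).det / A.det, ?_, ?_⟩
  · intro i
    rw [abs_div, div_le_iff₀ (abs_pos.2 hdet)]
    have : |(A.updateRow i a).det| ≤ sSup D := by
      refine le_csSup hbdd ⟨_, ?_, rfl⟩
      intro j
      by_cases h : j = i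
      · subst h; rwa [Matrix.updateRow_self]
      · rw [Matrix.updateRow_ne h]; exact hA j
    linarith
  · have h := Matrix.mulVec_cramer A.transpose a
    rw [Matrix.det_transpose] at h
    ext j
    have hj := congrFun h j
    simp only [Matrix.mulVec, dotProduct, Matrix.transpose_apply, Matrix.cramer_transpose_apply,
      Pi.smul_apply, smul_eq_mul] at hj
    simp only [Finset.sum_apply, Pi.smul_apply, smul_eq_mul]
    have : ∑ i, (A.updateRow i a).det / A.det * A i j = (∑ i, A i j * (A.updateRow i a).det) / A.det := by
      rw [Finset.sum_div]; refine Finset.sum_congr rfl fun i _ => by ring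
    rw [this, hj]; field_simp

lemma hilbert_count {H : Type*} [NormedAddCommGroup H] [InnerProductSpace ℝ H] {ι : Type*} [Fintype ι]
    (u : ι → H) (hu : Orthonormal ℝ u) (W : Submodule ℝ H) [FiniteDimensional ℝ W]
    (w : ι → H) (hw : ∀ j, w j ∈ W) (β : ℝ)
    (h : ∀ j, β * ‖w j‖ ^ 2 ≤ (inner ℝ (u j) (w j)) ^ 2) (hw0 : ∀ j, w j ≠ 0) :
    β * Fintype.card ι ≤ Module.finrank ℝ W := by
  let e := stdOrthonormalBasis ℝ W
  have h1 : ∀ j, β ≤ ∑ i, (inner ℝ (u j) (e i : H)) ^ 2 := by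
    intro j
    have hexp : w j = ∑ i, inner ℝ (e i : H) (w j) • (e i : H) := by
      have := e.sum_repr' ⟨w j, hw j⟩
      have h2 := congrArg (fun x : W => (x : H)) this
      simpa using h2.symm
    have hn : ‖w j‖ ^ 2 = ∑ i, (inner ℝ (e i : H) (w j)) ^ 2 := by
      have := e.sum_sq_norm_inner_right ⟨w j, hw j⟩
      simpa using this.symm
    have hin : inner ℝ (u j) (w j) = ∑ i, inner ℝ (e i : H) (w j) * inner ℝ (u j) (e i : H) := by
      conv_lhs => rw [hexp]
      rw [inner_sum]; simp only [inner_smul_right]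
    have hcs := Finset.sum_mul_sq_le_sq_mul_sq Finset.univ (fun i => inner ℝ (e i : H) (w j))
      (fun i => inner ℝ (u j) (e i : H))
    rw [← hin, ← hn] at hcs
    have h3 := (h j).trans hcs
    rw [mul_comm] at h3
    exact le_of_mul_le_mul_left h3 (by have := norm_pos_iff.2 (hw0 j); positivity)
  calc β * Fintype.card ι = ∑ j : ι, β := by simp [mul_comm]
    _ ≤ ∑ j, ∑ i, (inner ℝ (u j) (e i : H)) ^ 2 := Finset.sum_le_sum fun j _ => h1 j
    _ = ∑ i, ∑ j, (inner ℝ (u j) (e i : H)) ^ 2 := Finset.sum_comm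
    _ ≤ ∑ i : Fin (Module.finrank ℝ W), (1:ℝ) := by
      refine Finset.sum_le_sum fun i _ => ?_
      have := hu.sum_inner_products_le (e i : H) (s := Finset.univ)
      have h4 : ‖(e i : H)‖ = 1 := by
        exact e.orthonormal.1 i
      rw [h4] at this
      simpa using this
    _ = _ := by simp


lemma l2_inner {α : Type*} [MeasurableSpace α] {μ : Measure α} {f g : α → ℝ} (hf : MemLp f 2 μ) (hg : MemLp g 2 μ) :
    inner ℝ (hf.toLp f) (hg.toLp g) = ∫ x, f x * g x ∂μ := by
  rw [L2.inner_def]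
  refine integral_congr_ae ?_
  filter_upwards [hf.coeFn_toLp, hg.coeFn_toLp] with x h1 h2
  rw [h1, h2]; simp [mul_comm]

lemma mv_continuous {d : ℕ} (P : MvPolynomial (Fin d) ℝ) :
    Continuous (fun y : Fin d → ℝ => MvPolynomial.eval y P) := MvPolynomial.continuous_eval P

lemma mv_memLp {d : ℕ} (Ω : Set (Fin d → ℝ)) (hc : IsCompact Ω) (P : MvPolynomial (Fin d) ℝ) :
    MemLp (fun y : Fin d → ℝ => MvPolynomial.eval y P) 2 (volume.restrict Ω) := by
  obtain ⟨B, hB⟩ := hc.exists_bound_of_continuousOn (mv_continuous P).continuousOn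
  have : IsFiniteMeasure (volume.restrict Ω) := ⟨by simpa using hc.measure_lt_top⟩
  refine MemLp.of_bound (mv_continuous P).aestronglyMeasurable B ?_
  filter_upwards [ae_restrict_mem hc.measurableSet] with y hy using hB y hy

lemma l2_count {d : ℕ} (Ω : Set (Fin d → ℝ)) (hc : IsCompact Ω) {ι : Type*} [Fintype ι]
    (D : ι → Set (Fin d → ℝ)) (hDm : ∀ j, MeasurableSet (D j)) (hDΩ : ∀ j, D j ⊆ Ω)
    (hdisj : ∀ j k, j ≠ k → Disjoint (D j) (D k)) (hV : ∀ j, 0 < volume.real (D j))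
    (m : ℕ) (P : ι → MvPolynomial (Fin d) ℝ) (hP : ∀ j, (P j).totalDegree ≤ m)
    (hlow : ∀ j, ∀ y ∈ D j, 1 / 2 ≤ |MvPolynomial.eval y (P j)|) (A : ℝ) (hA : 0 < A)
    (hIntr : ∀ j, ∫ y in Ω, (MvPolynomial.eval y (P j)) ^ 2 ≤ A * volume.real (D j)) :
    (Fintype.card ι : ℝ) ≤ 4 * A * (m + 1) ^ d := by
  classical
  let μ : Measure (Fin d → ℝ) := volume.restrict Ω
  let Φ : MvPolynomial (Fin d) ℝ →ₗ[ℝ] Lp ℝ 2 μ :=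
    { toFun := fun Q => (mv_memLp Ω hc Q).toLp _
      map_add' := by
        intro Q R
        rw [← MemLp.toLp_add]
        congr 1; ext y; simp
      map_smul' := by
        intro r Q
        rw [RingHom.id_apply, ← MemLp.toLp_const_smul]
        congr 1; ext y; simp [MvPolynomial.smul_eval] }
  let mon : (Fin d → Fin (m + 1)) → Lp ℝ 2 μ := fun s =>
    Φ (MvPolynomial.monomial (Finsupp.equivFunOnFinite.symm fun i => (s i : ℕ)) 1)
  let W : Submodule ℝ (Lp ℝ 2 μ) := Submodule.span ℝ (Set.range mon)
  have hWfin : FiniteDimensional ℝ W := FiniteDimensional.span_of_finite ℝ (Set.finite_range mon)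
  have hWdim : Module.finrank ℝ W ≤ (m + 1) ^ d := by
    have := finrank_range_le_card (R := ℝ) mon
    simpa [Set.finrank, W] using this
  have hPW : ∀ j, Φ (P j) ∈ W := by
    intro j
    rw [(P j).as_sum, map_sum]
    refine Submodule.sum_mem _ fun s hs => ?_
    have h1 : MvPolynomial.monomial s ((P j).coeff s) = (P j).coeff s • MvPolynomial.monomial s (1:ℝ) := by
      rw [MvPolynomial.smul_monomial, smul_eq_mul, mul_one]
    rw [h1, map_smul]
    refine Submodule.smul_mem _ _ (Submodule.subset_span ?_)
    have hsm : ∀ i, s i < m + 1 := by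
      intro i
      have h2 := MvPolynomial.le_totalDegree hs
      rw [Finsupp.sum_fintype _ _ (by simp)] at h2
      have h3 : s i ≤ ∑ i, s i := Finset.single_le_sum (fun _ _ => Nat.zero_le _) (Finset.mem_univ i)
      have := hP j
      omega
    refine ⟨fun i => ⟨s i, hsm i⟩, ?_⟩
    simp only [mon]
    congr 2
    exact congrArg _ (by ext i; simp)
  have hindL : ∀ j, MemLp ((D j).indicator fun y => MvPolynomial.eval y (P j)) 2 μ := fun j =>
    (mv_memLp Ω hc (P j)).indicator (hDm j)
  let a : ι → ℝ := fun j => ∫ y in D j, (MvPolynomial.eval y (P j)) ^ 2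
  have hDfin : ∀ j, volume (D j) ≠ ⊤ := fun j => ((measure_mono (hDΩ j)).trans_lt hc.measure_lt_top).ne
  have hIntD : ∀ j, IntegrableOn (fun y => (MvPolynomial.eval y (P j)) ^ 2) (D j) := fun j =>
    (((mv_continuous (P j)).pow 2).continuousOn.integrableOn_compact hc).mono_set (hDΩ j)
  have ha : ∀ j, volume.real (D j) / 4 ≤ a j := by
    intro j
    have h1 : ∫ y in D j, (1 / 4 : ℝ) = volume.real (D j) / 4 := by
      rw [setIntegral_const, smul_eq_mul]; ring
    rw [← h1]
    refine setIntegral_mono_on (integrableOn_const (hDfin j)) (hIntD j) (hDm j) fun y hy => ?_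
    have := hlow j y hy
    rw [← sq_abs]; nlinarith
  have ha0 : ∀ j, 0 < a j := fun j => lt_of_lt_of_le (by have := hV j; positivity) (ha j)
  have hinter : ∀ j, Ω ∩ D j = D j := fun j => Set.inter_eq_right.2 (hDΩ j)
  have hww : ∀ j, inner ℝ ((hindL j).toLp _) (Φ (P j)) = a j := by
    intro j
    have : Φ (P j) = (mv_memLp Ω hc (P j)).toLp _ := rfl
    rw [this, l2_inner]
    have e : (fun y => (D j).indicator (fun y => MvPolynomial.eval y (P j)) y * MvPolynomial.eval y (P j))
      = (D j).indicator (fun y => (MvPolynomial.eval y (P j)) ^ 2) := by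
      ext y; by_cases hy : y ∈ D j <;> simp [hy, sq]
    rw [e]
    simp only [μ, a]
    rw [setIntegral_indicator (hDm j), hinter]
  have huu : ∀ j, inner ℝ ((hindL j).toLp _) ((hindL j).toLp _) = a j := by
    intro j
    rw [l2_inner]
    have e : (fun y => (D j).indicator (fun y => MvPolynomial.eval y (P j)) y *
        (D j).indicator (fun y => MvPolynomial.eval y (P j)) y)
      = (D j).indicator (fun y => (MvPolynomial.eval y (P j)) ^ 2) := by
      ext y; by_cases hy : y ∈ D j <;> simp [hy, sq]
    rw [e]
    simp only [μ, a]
    rw [setIntegral_indicator (hDm j), hinter]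
  have huv : ∀ j k, j ≠ k → inner ℝ ((hindL j).toLp _) ((hindL k).toLp _) = 0 := by
    intro j k hjk
    rw [l2_inner]
    have e : (fun y => (D j).indicator (fun y => MvPolynomial.eval y (P j)) y *
        (D k).indicator (fun y => MvPolynomial.eval y (P k)) y) = fun _ => 0 := by
      ext y
      by_cases hy : y ∈ D j
      · have : y ∉ D k := Set.disjoint_left.1 (hdisj j k hjk) hy
        simp [this]
      · simp [hy]
    rw [e]; simp
  let u : ι → Lp ℝ 2 μ := fun j => (Real.sqrt (a j))⁻¹ • (hindL j).toLp _
  have hu : Orthonormal ℝ u := by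
    rw [orthonormal_iff_ite]
    intro j k
    simp only [u, inner_smul_left, inner_smul_right]
    split_ifs with h
    · subst h
      rw [huu]
      have h1 := Real.sqrt_pos.2 (ha0 j)
      have h2 := Real.mul_self_sqrt (ha0 j).le
      simp only [conj_trivial]
      field_simp
      nlinarith
    · rw [huv j k h]; simp
  have hinn : ∀ j, (inner ℝ (u j) (Φ (P j))) ^ 2 = a j := by
    intro j
    simp only [u, inner_smul_left]
    rw [hww, conj_trivial, mul_pow, inv_pow, Real.sq_sqrt (ha0 j).le]
    have := (ha0 j).ne'
    field_simp
  have hnorm : ∀ j, ‖Φ (P j)‖ ^ 2 ≤ A * volume.real (D j) := by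
    intro j
    rw [← real_inner_self_eq_norm_sq]
    have : Φ (P j) = (mv_memLp Ω hc (P j)).toLp _ := rfl
    rw [this, l2_inner]
    refine le_trans (le_of_eq ?_) (hIntr j)
    simp only [sq]
  have h := hilbert_count u hu W (fun j => Φ (P j)) hPW (1 / (4 * A)) (by
      intro j
      rw [hinn]
      refine le_trans ?_ (ha j)
      calc 1 / (4 * A) * ‖Φ (P j)‖ ^ 2 ≤ 1 / (4 * A) * (A * volume.real (D j)) := by
            have := hnorm j
            gcongr
        _ = _ := by field_simp) (by
      intro j h0
      have := hinn j
      rw [h0, inner_zero_right] at this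
      have := ha0 j
      simp_all)
  have h2 : (Module.finrank ℝ W : ℝ) ≤ (m + 1) ^ d := by exact_mod_cast hWdim
  have h3 := h.trans h2
  rw [one_div, inv_mul_le_iff₀ (by positivity)] at h3
  exact h3

lemma vol_box {d : ℕ} (A : Matrix (Fin d) (Fin d) ℝ) (hA : A.det ≠ 0) (x r : Fin d → ℝ)
    (hr : ∀ i, 0 ≤ r i) :
    volume.real {y : Fin d → ℝ | ∀ i, |A i ⬝ᵥ (y - x)| ≤ r i} = |A.det⁻¹| * ∏ i, (2 * r i) := by
  have e : {y : Fin d → ℝ | ∀ i, |A i ⬝ᵥ (y - x)| ≤ r i}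
      = (Matrix.toLin' A) ⁻¹' (Set.Icc (fun i => A i ⬝ᵥ x - r i) (fun i => A i ⬝ᵥ x + r i)) := by
    ext y
    simp only [Set.mem_ofPred_eq, Set.mem_preimage, Set.mem_Icc, Pi.le_def, Matrix.toLin'_apply,
      Matrix.mulVec, dotProduct_sub, abs_le]
    constructor
    · intro h
      exact ⟨fun i => by linarith [(h i).1], fun i => by linarith [(h i).2]⟩
    · rintro ⟨h1, h2⟩ i
      exact ⟨by linarith [h1 i], by linarith [h2 i]⟩
  rw [e, Measure.real, Measure.addHaar_preimage_linearMap _ (by simpa using hA), LinearMap.det_toLin',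
    Real.volume_Icc_pi, ENNReal.toReal_mul, ENNReal.toReal_ofReal (abs_nonneg _), ENNReal.toReal_prod]
  congr 1
  refine Finset.prod_congr rfl fun i _ => ?_
  rw [ENNReal.toReal_ofReal (by linarith [hr i])]
  ring

lemma int_bound {d : ℕ} (A : Matrix (Fin d) (Fin d) ℝ) (hA : A.det ≠ 0) (Ω : Set (Fin d → ℝ))
    (hΩ : MeasurableSet Ω) (F : (Fin d → ℝ) → ℝ) (hFi : IntegrableOn F Ω) (e δ : Fin d → ℝ)
    (hδ : ∀ i, 0 < δ i)
    (hF : ∀ y ∈ Ω, F y ≤ ∏ i, (200 * (1 + ((A i ⬝ᵥ y - e i) / δ i) ^ 2)⁻¹)) :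
    ∫ y in Ω, F y ≤ |A.det⁻¹| * ∏ i, (200 * Real.pi * δ i) := by
  let h : Fin d → ℝ → ℝ := fun i w => 200 * (1 + ((w - e i) / δ i) ^ 2)⁻¹
  let H : (Fin d → ℝ) → ℝ := fun w => ∏ i, h i (w i)
  have hhi : ∀ i, Integrable (h i) := by
    intro i
    have h1 := ((integrable_inv_one_add_sq.comp_div (hδ i).ne').comp_sub_right (e i)).const_mul 200
    exact h1
  have hhIntr : ∀ i, ∫ w, h i w = 200 * Real.pi * δ i := by
    intro i
    simp only [h]
    rw [integral_const_mul, integral_sub_right_eq_self (fun w => (1 + (w / δ i) ^ 2)⁻¹),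
      Measure.integral_comp_div (fun w => (1 + w ^ 2)⁻¹), integral_univ_inv_one_add_sq, abs_of_pos (hδ i),
      smul_eq_mul]
    ring
  have hHi : Integrable H := Integrable.fintype_prod hhi
  have hmap := Real.map_matrix_volume_pi_eq_smul_volume_pi hA
  have hcont : Continuous (Matrix.toLin' A) := LinearMap.continuous_of_finiteDimensional _
  have hHi' : Integrable H (Measure.map (Matrix.toLin' A) volume) := by
    rw [hmap]; exact hHi.smul_measure ENNReal.ofReal_ne_top
  have hHc : Integrable (fun y => H (Matrix.toLin' A y)) :=
    (integrable_map_measure hHi'.1 hcont.aemeasurable).1 hHi'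
  have hHint : ∫ y, H (Matrix.toLin' A y) = |A.det⁻¹| * ∏ i, (200 * Real.pi * δ i) := by
    rw [← integral_map hcont.aemeasurable hHi'.1, hmap, integral_smul_measure,
      ENNReal.toReal_ofReal (abs_nonneg _), smul_eq_mul]
    congr 1
    simp only [H]
    rw [integral_fintype_prod_volume_eq_prod]
    exact Finset.prod_congr rfl fun i _ => hhIntr i
  rw [← hHint]
  have hnn : ∀ y, 0 ≤ H (Matrix.toLin' A y) := fun y =>
    Finset.prod_nonneg fun i _ => by simp only [h]; positivity
  calc ∫ y in Ω, F y ≤ ∫ y in Ω, H (Matrix.toLin' A y) :=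
        setIntegral_mono_on hFi hHc.integrableOn hΩ hF
    _ ≤ ∫ y, H (Matrix.toLin' A y) := setIntegral_le_integral hHc (Filter.Eventually.of_forall hnn)


lemma coef_bound {d : ℕ} (Ω : Set (Fin d → ℝ)) (hIntr : (interior Ω).Nonempty) (c : Fin d → ℝ)
    (hcen : ∀ a b, PosOn Ω a b → ∀ y ∈ Ω, a ⬝ᵥ y + b ≤ (d + 1) * (a ⬝ᵥ c + b)) :
    ∃ ε : ℝ, 0 < ε ∧ ∀ a b, PosOn Ω a b → ∀ i, |a i| * ε ≤ (d + 1) * (a ⬝ᵥ c + b) := by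
  obtain ⟨x0, hx0⟩ := hIntr
  have hx0Ω : x0 ∈ Ω := interior_subset hx0
  rw [mem_interior_iff_mem_nhds, Metric.mem_nhds_iff] at hx0
  obtain ⟨ε, hε, hball⟩ := hx0
  refine ⟨ε / 2, by positivity, fun a b hab i => ?_⟩
  have key : ∀ s : ℝ, |s| = ε / 2 → x0 + Pi.single i s ∈ Ω := by
    intro s hs
    apply hball
    rw [Metric.mem_ball, dist_eq_norm, add_sub_cancel_left, Pi.norm_single, Real.norm_eq_abs, hs]
    linarith
  have h1 := key (ε / 2) (abs_of_pos (by positivity))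
  have h2 := key (-(ε / 2)) (by rw [abs_neg]; exact abs_of_pos (by positivity))
  have e1 := hab _ h1
  have e2 := hab _ h2
  have f1 := hcen a b hab _ h1
  have f2 := hcen a b hab _ h2
  have g1 := hcen a b hab _ hx0Ω
  have g2 := hab _ hx0Ω
  simp only [dotProduct_add, dotProduct_single] at e1 e2 f1 f2
  rcases abs_cases (a i) with ⟨h, _⟩ | ⟨h, _⟩ <;> rw [h] <;> linarith

lemma cell_frame {d : ℕ} (Ω : Set (Fin d → ℝ)) (hc : IsCompact Ω)
    (hIntr : (interior Ω).Nonempty) (c : Fin d → ℝ) (hcΩ : c ∈ Ω)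
    (hcen : ∀ a b, PosOn Ω a b → ∀ y ∈ Ω, a ⬝ᵥ y + b ≤ (d + 1) * (a ⬝ᵥ c + b))
    (x : Fin d → ℝ) (η : ℝ) (hη0 : 0 < η)
    (hη : ∀ a b, PosOn Ω a b → η * (a ⬝ᵥ c + b) ≤ a ⬝ᵥ x + b) :
    ∃ (A : Matrix (Fin d) (Fin d) ℝ) (a : Fin d → Fin d → ℝ) (b : Fin d → ℝ),
      A.det ≠ 0 ∧ (∀ i, PosOn Ω (a i) (b i)) ∧ (∀ i, a i ⬝ᵥ c + b i = 1 / (d + 1)) ∧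
      (∀ i, A i = (Real.sqrt ((a i ⬝ᵥ x + b i) * (1 / (d + 1))))⁻¹ • a i) ∧
      ∀ a' b', PosOn Ω a' b' → ∃ t : Fin d → ℝ, (∀ i, |t i| ≤ 2) ∧
        a' = Real.sqrt ((a' ⬝ᵥ x + b') * (a' ⬝ᵥ c + b')) • ∑ i, t i • A i := by
  obtain ⟨ε, hε, hbd⟩ := coef_bound Ω hIntr c hcen
  have hd1 : (0 : ℝ) < d + 1 := by positivity
  set S : Set (Fin d → ℝ) := {v | ∃ a b, PosOn Ω a b ∧ a ⬝ᵥ c + b = 1 / (d + 1) ∧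
    v = (Real.sqrt ((a ⬝ᵥ x + b) * (1 / (d + 1))))⁻¹ • a} with hS
  have hpos : ∀ a b, PosOn Ω a b → a ≠ 0 → 0 < a ⬝ᵥ c + b := by
    intro a b hab ha
    obtain ⟨i, hi⟩ := Function.ne_iff.mp ha
    have h := hbd a b hab i
    have : 0 < |a i| := abs_pos.mpr hi
    have : 0 < |a i| * ε := by positivity
    by_contra hcon
    push Not at hcon
    nlinarith
  have hmemS : ∀ a b, PosOn Ω a b → a ≠ 0 →
      (Real.sqrt ((a ⬝ᵥ x + b) * (a ⬝ᵥ c + b)))⁻¹ • a ∈ S := by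
    intro a b hab ha
    have hp := hpos a b hab ha
    set s : ℝ := ((d + 1) * (a ⬝ᵥ c + b))⁻¹ with hs
    have hs0 : 0 < s := by positivity
    have hsc : s * (a ⬝ᵥ c + b) = 1 / (d + 1) := by rw [hs]; field_simp
    refine ⟨s • a, s * b, fun y hy => ?_, ?_, ?_⟩
    · rw [smul_dotProduct, smul_eq_mul, ← mul_add]
      exact mul_nonneg hs0.le (hab y hy)
    · rw [smul_dotProduct, smul_eq_mul, ← mul_add, hsc]
    · rw [smul_dotProduct, smul_eq_mul, ← mul_add, ← hsc,
        show s * (a ⬝ᵥ x + b) * (s * (a ⬝ᵥ c + b)) = s ^ 2 * ((a ⬝ᵥ x + b) * (a ⬝ᵥ c + b)) by ring,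
        Real.sqrt_mul (sq_nonneg s), Real.sqrt_sq hs0.le, smul_smul]
      congr 1
      rw [mul_inv]; field_simp
  have hg : ∀ a b, PosOn Ω a b → a ≠ 0 → 0 < Real.sqrt ((a ⬝ᵥ x + b) * (a ⬝ᵥ c + b)) := by
    intro a b hab ha
    have hp := hpos a b hab ha
    have := hη a b hab
    apply Real.sqrt_pos.mpr
    have : 0 < η * (a ⬝ᵥ c + b) := by positivity
    apply mul_pos <;> linarith
  have hspan : Submodule.span ℝ S = ⊤ := by
    rw [eq_top_iff]
    rintro a -
    by_cases ha : a = 0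
    · rw [ha]; exact Submodule.zero_mem _
    have hcont : Continuous (fun y : Fin d → ℝ => a ⬝ᵥ y) := by
      unfold dotProduct; fun_prop
    obtain ⟨y0, hy0, hmin⟩ := hc.exists_isMinOn ⟨c, hcΩ⟩ hcont.continuousOn
    have hab : PosOn Ω a (-(a ⬝ᵥ y0)) := by
      intro y hy
      have : a ⬝ᵥ y0 ≤ a ⬝ᵥ y := hmin hy
      linarith
    have h1 := Submodule.subset_span (R := ℝ) (hmemS a _ hab ha)
    have h2 := hg a _ hab ha
    have h3 := Submodule.smul_mem _ (Real.sqrt ((a ⬝ᵥ x + -(a ⬝ᵥ y0)) * (a ⬝ᵥ c + -(a ⬝ᵥ y0)))) h1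
    rwa [smul_smul, mul_inv_cancel₀ h2.ne', one_smul] at h3
  have hB : ∀ v ∈ S, ∀ i, |v i| ≤ (Real.sqrt (η * (1 / (d + 1)) * (1 / (d + 1))))⁻¹ * (1 / ε) := by
    rintro v ⟨a, b, hab, hac, rfl⟩ i
    rw [Pi.smul_apply, smul_eq_mul, abs_mul, abs_of_nonneg (by positivity)]
    have h1 := hη a b hab
    rw [hac] at h1
    have h2 := hbd a b hab i
    rw [hac, mul_one_div_cancel hd1.ne'] at h2
    have h3 : 0 < Real.sqrt (η * (1 / (d + 1)) * (1 / (d + 1))) := Real.sqrt_pos.mpr (by positivity)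
    apply mul_le_mul _ _ (abs_nonneg _) (by positivity)
    · apply inv_anti₀ h3
      apply Real.sqrt_le_sqrt
      gcongr
    · rw [le_div_iff₀ hε]; exact h2
  obtain ⟨A, hAS, hdet, hA⟩ := auerbach S _ hB hspan
  choose a b hab hac hAe using hAS
  refine ⟨A, a, b, hdet, hab, hac, hAe, fun a' b' hab' => ?_⟩
  by_cases ha : a' = 0
  · refine ⟨0, by simp, ?_⟩
    subst ha
    simp
  · obtain ⟨t, ht, hte⟩ := hA _ (hmemS a' b' hab' ha)
    refine ⟨t, ht, ?_⟩
    rw [← hte, smul_smul, mul_inv_cancel₀ (hg a' b' hab' ha).ne', one_smul]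


def Cell {d : ℕ} (Ω : Set (Fin d → ℝ)) (c x : Fin d → ℝ) (ρ : ℝ) : Set (Fin d → ℝ) :=
  {y | ∀ a b, PosOn Ω a b → |a ⬝ᵥ (y - x)| ≤ ρ * Real.sqrt ((a ⬝ᵥ x + b) * (a ⬝ᵥ c + b))}

lemma cell_half {d : ℕ} (Ω : Set (Fin d → ℝ)) (c x y : Fin d → ℝ) (hcΩ : c ∈ Ω) (hxΩ : x ∈ Ω)
    (η ρ : ℝ) (hη : ∀ a b, PosOn Ω a b → η * (a ⬝ᵥ c + b) ≤ a ⬝ᵥ x + b) (hρ0 : 0 < ρ)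
    (hρ : 4 * ρ ^ 2 ≤ η) (hy : y ∈ Cell Ω c x ρ) (a : Fin d → ℝ) (b : ℝ) (hab : PosOn Ω a b) :
    (a ⬝ᵥ x + b) / 2 ≤ a ⬝ᵥ y + b ∧ a ⬝ᵥ y + b ≤ 3 / 2 * (a ⬝ᵥ x + b) := by
  have h1 := hy a b hab
  have h2 := hη a b hab
  have hc0 := hab c hcΩ
  have hx0 := hab x hxΩ
  have h3 : ρ * Real.sqrt ((a ⬝ᵥ x + b) * (a ⬝ᵥ c + b)) ≤ (a ⬝ᵥ x + b) / 2 := by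
    have : Real.sqrt ((a ⬝ᵥ x + b) * (a ⬝ᵥ c + b)) ≤ (a ⬝ᵥ x + b) / 2 / ρ := by
      apply Real.sqrt_le_iff.mpr
      refine ⟨by positivity, ?_⟩
      rw [div_pow, le_div_iff₀ (by positivity)]
      have : 4 * ρ ^ 2 * (a ⬝ᵥ c + b) ≤ a ⬝ᵥ x + b := by nlinarith
      nlinarith
    rw [le_div_iff₀ hρ0] at this
    linarith
  rw [dotProduct_sub] at h1
  have := abs_le.mp (h1.trans h3)
  constructor <;> linarith

lemma cell_closed {d : ℕ} (Ω : Set (Fin d → ℝ)) (c x : Fin d → ℝ) (ρ : ℝ) :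
    IsClosed (Cell Ω c x ρ) := by
  have : Cell Ω c x ρ = ⋂ a : Fin d → ℝ, ⋂ b : ℝ, ⋂ _ : PosOn Ω a b,
      {y | |a ⬝ᵥ (y - x)| ≤ ρ * Real.sqrt ((a ⬝ᵥ x + b) * (a ⬝ᵥ c + b))} := by
    ext y; simp [Cell]
  rw [this]
  refine isClosed_iInter fun a => isClosed_iInter fun b => isClosed_iInter fun _ => ?_
  apply isClosed_le _ continuous_const
  unfold dotProduct
  fun_prop

lemma cell_sub {d : ℕ} (Ω : Set (Fin d → ℝ)) (hc : IsCompact Ω) (hconv : Convex ℝ Ω)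
    (c x : Fin d → ℝ) (hcΩ : c ∈ Ω) (hxΩ : x ∈ Ω)
    (η ρ : ℝ) (hη : ∀ a b, PosOn Ω a b → η * (a ⬝ᵥ c + b) ≤ a ⬝ᵥ x + b) (hρ0 : 0 < ρ)
    (hρ : 4 * ρ ^ 2 ≤ η) : Cell Ω c x ρ ⊆ Ω := by
  intro y hy
  apply mem_of_posOn Ω hc hconv
  intro a b hab
  have h1 := (cell_half Ω c x y hcΩ hxΩ η ρ hη hρ0 hρ hy a b hab).1
  have hx0 := hab x hxΩ
  linarith

lemma exists_lin_poly {d : ℕ} (a : Fin d → ℝ) (b : ℝ) (p : Polynomial ℝ) (k : ℕ) (hp : p.natDegree ≤ k) :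
    ∃ P : MvPolynomial (Fin d) ℝ, P.totalDegree ≤ k ∧
      ∀ y, MvPolynomial.eval y P = p.eval (a ⬝ᵥ y + b) := by
  set L : MvPolynomial (Fin d) ℝ := ∑ j, MvPolynomial.C (a j) * MvPolynomial.X j + MvPolynomial.C b with hL
  have hLd : L.totalDegree ≤ 1 := by
    refine (MvPolynomial.totalDegree_add _ _).trans (max_le ?_ (by simp))
    refine MvPolynomial.totalDegree_finsetSum_le fun j _ => ?_
    refine (MvPolynomial.totalDegree_mul _ _).trans ?_
    simp
  refine ⟨∑ j ∈ Finset.range (k + 1), MvPolynomial.C (p.coeff j) * L ^ j, ?_, ?_⟩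
  · refine MvPolynomial.totalDegree_finsetSum_le fun j hj => ?_
    refine (MvPolynomial.totalDegree_mul _ _).trans ?_
    have := MvPolynomial.totalDegree_pow L j
    have h2 := Finset.mem_range.mp hj
    rw [MvPolynomial.totalDegree_C]
    nlinarith
  · intro y
    rw [Polynomial.eval_eq_sum_range' (Nat.lt_succ_of_le hp)]
    simp [hL, dotProduct]

lemma sq_bound (u v w : ℝ) (hw : 0 < w) (h1 : |u| ≤ 10) (h2 : |u| * |v| ≤ 10 * w) :
    u ^ 2 ≤ 200 * (1 + (v / w) ^ 2)⁻¹ := by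
  rw [← div_eq_mul_inv, le_div_iff₀ (by positivity), div_pow]
  have e1 : u ^ 2 ≤ 100 := by rw [← sq_abs]; nlinarith [abs_nonneg u]
  have e2 : u ^ 2 * v ^ 2 ≤ 100 * w ^ 2 := by
    rw [← sq_abs u, ← sq_abs v, ← mul_pow, show 100 * w ^ 2 = (10 * w) ^ 2 by ring]
    gcongr
  have e3 : u ^ 2 * (v ^ 2 / w ^ 2) ≤ 100 := by
    rw [← mul_div_assoc, div_le_iff₀ (by positivity)]; exact e2
  linarith

lemma cell_poly {d : ℕ} (hd : 1 ≤ d) (Ω : Set (Fin d → ℝ)) (hc : IsCompact Ω) (hconv : Convex ℝ Ω)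
    (hIntr : (interior Ω).Nonempty) (c : Fin d → ℝ) (hcΩ : c ∈ Ω)
    (hcen : ∀ a b, PosOn Ω a b → ∀ y ∈ Ω, a ⬝ᵥ y + b ≤ (d + 1) * (a ⬝ᵥ c + b))
    (x : Fin d → ℝ) (hxΩ : x ∈ Ω) (η ρ κ : ℝ) (hη0 : 0 < η)
    (hη : ∀ a b, PosOn Ω a b → η * (a ⬝ᵥ c + b) ≤ a ⬝ᵥ x + b) (hρ0 : 0 < ρ)
    (hρ : 4 * ρ ^ 2 ≤ η) (n K : ℕ) (hn : 0 < n)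
    (hκ : κ / n ^ 2 ≤ η * (1 / (d + 1)))
    (hK : ∀ t : ℝ, 0 < t → t ≤ 1 →
      κ / n ^ 2 ≤ t → ∃ p : Polynomial ℝ, p.natDegree ≤ K * n ∧ p.eval t = 1 ∧
      ∀ s, 0 ≤ s → s ≤ 1 → |p.eval s| ≤ 10 ∧ |p.eval s| * |s - t| ≤ 10 * (Real.sqrt t / n)) :
    0 < volume.real (Cell Ω c x ρ) ∧ ∃ P : MvPolynomial (Fin d) ℝ, P.totalDegree ≤ d * (K * n) ∧
      MvPolynomial.eval x P = 1 ∧ (∀ y ∈ Ω, |MvPolynomial.eval y P| ≤ 10 ^ d) ∧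
      ∫ y in Ω, (MvPolynomial.eval y P) ^ 2 ≤
        (200 * Real.pi * Real.sqrt (d + 1) * d / (n * ρ)) ^ d * volume.real (Cell Ω c x ρ) := by
  obtain ⟨A, a, b, hdet, hab, hac, hA, hall⟩ := cell_frame Ω hc hIntr c hcΩ hcen x η hη0 hη
  have hd1 : (0 : ℝ) < d + 1 := by positivity
  have hd0 : (0 : ℝ) < d := by exact_mod_cast hd
  have hn0 : (0 : ℝ) < n := by exact_mod_cast hn
  have hvol : |A.det⁻¹| * (ρ / d) ^ d ≤ volume.real (Cell Ω c x ρ) := by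
    have h1 := vol_box A hdet x (fun _ => ρ / (2 * d)) (fun _ => by positivity)
    have e : ∏ i : Fin d, (2 * (ρ / (2 * (d : ℝ)))) = (ρ / d) ^ d := by
      rw [Finset.prod_const, Finset.card_univ, Fintype.card_fin]
      congr 1; field_simp
    rw [e] at h1
    rw [← h1]
    apply measureReal_mono _ ((measure_mono
      (cell_sub Ω hc hconv c x hcΩ hxΩ η ρ hη hρ0 hρ)).trans_lt hc.measure_lt_top).ne
    intro y hy a' b' hab'
    obtain ⟨t, ht, hte⟩ := hall a' b' hab'
    have e2 : a' ⬝ᵥ (y - x) = Real.sqrt ((a' ⬝ᵥ x + b') * (a' ⬝ᵥ c + b')) *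
        ∑ i, t i * (A i ⬝ᵥ (y - x)) := by
      conv_lhs => rw [hte]
      rw [smul_dotProduct, sum_dotProduct, smul_eq_mul]
      simp only [smul_dotProduct, smul_eq_mul]
    rw [e2, abs_mul, abs_of_nonneg (Real.sqrt_nonneg _), mul_comm]
    gcongr
    calc |∑ i, t i * (A i ⬝ᵥ (y - x))| ≤ ∑ i, |t i * (A i ⬝ᵥ (y - x))| :=
          Finset.abs_sum_le_sum_abs _ _
      _ ≤ ∑ i : Fin d, 2 * (ρ / (2 * d)) := by
          refine Finset.sum_le_sum fun i _ => ?_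
          rw [abs_mul]
          exact mul_le_mul (ht i) (hy i) (abs_nonneg _) (by norm_num)
      _ = ρ := by
          rw [Finset.sum_const, Finset.card_univ, Fintype.card_fin, nsmul_eq_mul]
          field_simp
  have hdp : 0 < |A.det⁻¹| := abs_pos.mpr (inv_ne_zero hdet)
  refine ⟨lt_of_lt_of_le (by positivity) hvol, ?_⟩
  have ht1 : ∀ i, η * (1 / (d + 1)) ≤ a i ⬝ᵥ x + b i := by
    intro i
    have := hη _ _ (hab i)
    rwa [hac i] at this
  have hle1 : ∀ i, ∀ y ∈ Ω, a i ⬝ᵥ y + b i ≤ 1 := by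
    intro i y hy
    have := hcen _ _ (hab i) y hy
    rwa [hac i, mul_one_div_cancel hd1.ne'] at this
  have ht0 : ∀ i, 0 < a i ⬝ᵥ x + b i := fun i => lt_of_lt_of_le (by positivity) (ht1 i)
  have hex : ∀ i, ∃ p : Polynomial ℝ, p.natDegree ≤ K * n ∧ p.eval (a i ⬝ᵥ x + b i) = 1 ∧
      ∀ s, 0 ≤ s → s ≤ 1 → |p.eval s| ≤ 10 ∧
        |p.eval s| * |s - (a i ⬝ᵥ x + b i)| ≤ 10 * (Real.sqrt (a i ⬝ᵥ x + b i) / n) :=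
    fun i => hK _ (ht0 i) (hle1 i x hxΩ) (hκ.trans (ht1 i))
  choose p hpd hpt hps using hex
  choose P hPd hPe using fun i => exists_lin_poly (a i) (b i) (p i) (K * n) (hpd i)
  refine ⟨∏ i, P i, ?_, ?_, ?_, ?_⟩
  · refine (MvPolynomial.totalDegree_finsetProd _ _).trans ?_
    refine (Finset.sum_le_sum fun i _ => hPd i).trans ?_
    simp
  · rw [map_prod]
    exact Finset.prod_eq_one fun i _ => by rw [hPe, hpt]
  · intro y hy
    rw [map_prod, Finset.abs_prod]
    refine (Finset.prod_le_prod (fun i _ => abs_nonneg _) (fun i _ => ?_)).trans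
      (by simp : ∏ i : Fin d, (10 : ℝ) ≤ 10 ^ d)
    rw [hPe]
    exact (hps i _ (hab i y hy) (hle1 i y hy)).1
  · have hib := int_bound A hdet Ω hc.measurableSet
      (fun y => (MvPolynomial.eval y (∏ i, P i)) ^ 2)
      ((((mv_continuous (∏ i, P i)).pow 2).continuousOn).integrableOn_compact hc)
      (fun i => A i ⬝ᵥ x) (fun _ => Real.sqrt (d + 1) / n) (fun _ => by positivity) (by
        intro y hy
        rw [map_prod, ← Finset.prod_pow]
        refine Finset.prod_le_prod (fun i _ => sq_nonneg _) (fun i _ => ?_)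
        obtain ⟨h1, h2⟩ := hps i _ (hab i y hy) (hle1 i y hy)
        rw [hPe]
        have hs := Real.sqrt_pos.mpr (ht0 i)
        refine (sq_bound _ _ _ (div_pos hs hn0) h1 h2).trans_eq ?_
        congr 3
        rw [hA i, smul_dotProduct, smul_dotProduct, smul_eq_mul, smul_eq_mul,
          Real.sqrt_mul (ht0 i).le, Real.sqrt_div (by norm_num), Real.sqrt_one]
        have hs2 := Real.sqrt_pos.mpr hd1
        field_simp
        ring)
    refine hib.trans ?_
    rw [Finset.prod_const, Finset.card_univ, Fintype.card_fin]
    refine le_trans (le_of_eq ?_) (mul_le_mul_of_nonneg_left hvol (by positivity))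
    rw [mul_left_comm, ← mul_pow]
    congr 2
    field_simp


lemma shrunk_mem {d : ℕ} (Ω : Set (Fin d → ℝ)) (hconv : Convex ℝ Ω) (c z : Fin d → ℝ)
    (hcΩ : c ∈ Ω) (hzΩ : z ∈ Ω) (η : ℝ) (h0 : 0 ≤ η) (h1 : η ≤ 1) :
    (1 - η) • z + η • c ∈ Ω ∧ ∀ a b, PosOn Ω a b →
      η * (a ⬝ᵥ c + b) ≤ a ⬝ᵥ ((1 - η) • z + η • c) + b := by
  refine ⟨hconv hzΩ hcΩ (by linarith) h0 (by ring), fun a b hab => ?_⟩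
  have := hab z hzΩ
  rw [dotProduct_add, dotProduct_smul, dotProduct_smul, smul_eq_mul, smul_eq_mul]
  nlinarith

lemma cell_meet {d : ℕ} (Ω : Set (Fin d → ℝ)) (c x z y : Fin d → ℝ)
    (hcΩ : c ∈ Ω) (hxΩ : x ∈ Ω) (hzΩ : z ∈ Ω) (η ρ : ℝ)
    (hηx : ∀ a b, PosOn Ω a b → η * (a ⬝ᵥ c + b) ≤ a ⬝ᵥ x + b)
    (hηz : ∀ a b, PosOn Ω a b → η * (a ⬝ᵥ c + b) ≤ a ⬝ᵥ z + b)
    (hρ0 : 0 < ρ) (hρ : 4 * ρ ^ 2 ≤ η) (hyx : y ∈ Cell Ω c x ρ) (hyz : y ∈ Cell Ω c z ρ)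
    (a : Fin d → ℝ) (b : ℝ) (hab : PosOn Ω a b) :
    |a ⬝ᵥ (z - x)| ≤ 3 * ρ * Real.sqrt ((a ⬝ᵥ x + b) * (a ⬝ᵥ c + b)) := by
  have h1 := (cell_half Ω c x y hcΩ hxΩ η ρ hηx hρ0 hρ hyx a b hab).2
  have h2 := (cell_half Ω c z y hcΩ hzΩ η ρ hηz hρ0 hρ hyz a b hab).1
  have h3 := hyx a b hab
  have h4 := hyz a b hab
  have hc0 := hab c hcΩ
  have hx0 := hab x hxΩ
  have h5 : Real.sqrt ((a ⬝ᵥ z + b) * (a ⬝ᵥ c + b)) ≤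
      2 * Real.sqrt ((a ⬝ᵥ x + b) * (a ⬝ᵥ c + b)) := by
    rw [show (2 : ℝ) * Real.sqrt ((a ⬝ᵥ x + b) * (a ⬝ᵥ c + b)) =
      Real.sqrt (2 ^ 2 * ((a ⬝ᵥ x + b) * (a ⬝ᵥ c + b))) by
        rw [Real.sqrt_mul (by norm_num : (0 : ℝ) ≤ 2 ^ 2), Real.sqrt_sq (by norm_num)]]
    apply Real.sqrt_le_sqrt
    nlinarith
  have h6 : ρ * Real.sqrt ((a ⬝ᵥ z + b) * (a ⬝ᵥ c + b)) ≤
      ρ * (2 * Real.sqrt ((a ⬝ᵥ x + b) * (a ⬝ᵥ c + b))) := by gcongr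
  rw [dotProduct_sub] at h3 h4 ⊢
  rw [abs_le] at *
  constructor <;> linarith

lemma exists_max_finset {α : Type*} (p : Finset α → Prop) (h0 : p ∅) (B : ℝ)
    (hB : ∀ T, p T → (T.card : ℝ) ≤ B) : ∃ T, p T ∧ ∀ T', p T' → T'.card ≤ T.card := by
  have hne : {k | ∃ T, p T ∧ T.card = k}.Nonempty := ⟨0, ∅, h0, rfl⟩
  have hbd : BddAbove {k | ∃ T, p T ∧ T.card = k} := by
    refine ⟨⌊B⌋₊, ?_⟩
    rintro k ⟨T, hT, rfl⟩
    exact Nat.le_floor (hB T hT)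
  obtain ⟨T, hT, hk⟩ := Nat.sSup_mem hne hbd
  refine ⟨T, hT, fun T' hT' => ?_⟩
  rw [hk]
  exact le_csSup hbd ⟨T', hT', rfl⟩

set_option maxHeartbeats 1000000 in
lemma core {d : ℕ} (hd : 1 ≤ d) : ∃ C : ℝ, 0 < C ∧ ∀ n : ℕ, 0 < n → ∀ Ω : Set (Fin d → ℝ),
    IsCompact Ω → Convex ℝ Ω → (interior Ω).Nonempty →
    ∃ T : Finset (Fin d → ℝ), (T.card : ℝ) ≤ C * n ^ d ∧ (∀ x ∈ T, x ∈ Ω) ∧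
      ∀ Q : MvPolynomial (Fin d) ℝ, Q.totalDegree ≤ n → ∀ z ∈ Ω, ∃ x ∈ T,
        |MvPolynomial.eval z Q| ≤ 2 * |MvPolynomial.eval x Q| := by
  classical
  have hd1 : (0 : ℝ) < d + 1 := by positivity
  have hd0 : (0 : ℝ) < d := by exact_mod_cast hd
  obtain ⟨K, hK0, hK⟩ := one_dim_poly (1 / (176 ^ 2 * (d + 1))) (by positivity)
  have hKr : (1 : ℝ) ≤ K := by exact_mod_cast hK0
  have hten : (1 : ℝ) ≤ 10 ^ d := one_le_pow₀ (by norm_num)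
  obtain ⟨β, hβ⟩ : ∃ β : ℝ, β = 1 / (176 * (d + 1) * K * 10 ^ d) := ⟨_, rfl⟩
  have hβ0 : 0 < β := by rw [hβ]; positivity
  have hβe : β * ((d + 1) * K * 10 ^ d) = 1 / 176 := by rw [hβ]; field_simp
  have hβ1 : β * (d + 1) ≤ 1 / 176 := by
    rw [← hβe]
    have : (1 : ℝ) ≤ K * 10 ^ d := one_le_mul_of_one_le_of_one_le hKr hten
    have h2 : 0 < β * (d + 1) := by positivity
    nlinarith
  have hβ2 : β ≤ 1 / 176 := by nlinarith
  have hβ3 : d * K * β * 10 ^ d ≤ 1 / 176 := by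
    rw [← hβe]
    have : 0 < K * β * 10 ^ d := by positivity
    nlinarith
  have hβ4 : d * K * β ≤ 1 / 176 := by
    have : 0 < d * K * β := by positivity
    nlinarith
  obtain ⟨A0, hA0⟩ : ∃ A0 : ℝ, A0 = (200 * Real.pi * Real.sqrt (d + 1) * d / (β / 12)) ^ d := ⟨_, rfl⟩
  have hA0p : 0 < A0 := by rw [hA0]; have := Real.pi_pos; positivity
  refine ⟨4 * A0 * (2 * d * K) ^ d, by positivity, fun n hn Ω hc hconv hIntr => ?_⟩
  have hn0 : (0 : ℝ) < n := by exact_mod_cast hn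
  have hn1 : (1 : ℝ) ≤ n := by exact_mod_cast hn
  obtain ⟨c, hcΩ, hcen⟩ := exists_center Ω hc hconv (hIntr.mono interior_subset)
  obtain ⟨θ, hθ⟩ : ∃ θ : ℝ, θ = 1 / (44 * n) := ⟨_, rfl⟩
  have hθ0 : 0 < θ := by rw [hθ]; positivity
  have hθn : θ * n = 1 / 44 := by rw [hθ]; field_simp
  have hθ1 : θ ≤ 1 / 44 := by nlinarith
  obtain ⟨η, hη⟩ : ∃ η : ℝ, η = (1 - Real.cos θ) / 2 := ⟨_, rfl⟩
  have hηl : (1 / (176 * n)) ^ 2 ≤ η := by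
    have h1 := Real.cos_le_one_sub_mul_cos_sq (x := θ)
      (by rw [abs_of_pos hθ0]; linarith [Real.pi_gt_three])
    have h2 : 1 / 8 ≤ 2 / Real.pi ^ 2 := by
      rw [div_le_div_iff₀ (by norm_num) (by have := Real.pi_pos; positivity)]
      nlinarith [Real.pi_le_four, Real.pi_pos]
    have h3 : 1 / 8 * θ ^ 2 ≤ 2 / Real.pi ^ 2 * θ ^ 2 := by gcongr
    have h4 : (1 / (176 * n) : ℝ) ^ 2 = θ ^ 2 / 16 := by rw [hθ]; field_simp; norm_num
    rw [h4, hη]; linarith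
  have hη0 : 0 < η := lt_of_lt_of_le (by positivity) hηl
  have hη1 : η ≤ 1 := by rw [hη]; linarith [Real.neg_one_le_cos θ]
  obtain ⟨θ', hθ'⟩ : ∃ θ' : ℝ, θ' = β / n := ⟨_, rfl⟩
  have hθ'0 : 0 < θ' := by rw [hθ']; positivity
  have hθ'n : θ' * n = β := by rw [hθ']; field_simp
  have hθ'β : θ' ≤ β := by nlinarith
  have hθ'1 : θ' ≤ 1 := by linarith
  have hθ'η : θ' ^ 2 ≤ η := by
    refine le_trans ?_ hηl
    have : θ' ≤ 1 / (176 * n) := by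
      rw [le_div_iff₀ (by positivity)]; linarith
    gcongr
  have hθ'd : θ' ^ 2 * (d + 1) ≤ 1 := by
    have : θ' * (d + 1) ≤ 1 := by nlinarith
    have h0 : 0 < θ' * (d + 1) := by positivity
    nlinarith
  obtain ⟨ρ, hρe⟩ : ∃ ρ : ℝ, ρ = θ' / 12 := ⟨_, rfl⟩
  have hρ0 : 0 < ρ := by rw [hρe]; positivity
  have hρ : 4 * ρ ^ 2 ≤ η := by rw [hρe]; nlinarith [sq_nonneg θ']
  have hκ : 1 / (176 ^ 2 * ((d : ℝ) + 1)) / n ^ 2 ≤ η * (1 / (d + 1)) := by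
    refine le_trans (le_of_eq ?_) (mul_le_mul_of_nonneg_right hηl (by positivity))
    field_simp
  have hsh : ∀ x, (∃ z ∈ Ω, x = (1 - η) • z + η • c) → x ∈ Ω ∧ ∀ a b, PosOn Ω a b →
      η * (a ⬝ᵥ c + b) ≤ a ⬝ᵥ x + b := by
    rintro x ⟨z, hz, rfl⟩
    exact shrunk_mem Ω hconv c z hcΩ hz η hη0.le hη1
  have hcell : ∀ x, (∃ z ∈ Ω, x = (1 - η) • z + η • c) →
      0 < volume.real (Cell Ω c x ρ) ∧ ∃ P : MvPolynomial (Fin d) ℝ,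
      P.totalDegree ≤ d * (K * n) ∧ (∀ y ∈ Cell Ω c x ρ, 1 / 2 ≤ |MvPolynomial.eval y P|) ∧
      ∫ y in Ω, (MvPolynomial.eval y P) ^ 2 ≤ A0 * volume.real (Cell Ω c x ρ) := by
    intro x hx
    obtain ⟨hxΩ, hxη⟩ := hsh x hx
    obtain ⟨hv, P, hPd, hPx, hPM, hPi⟩ := cell_poly hd Ω hc hconv hIntr c hcΩ hcen x hxΩ η ρ _ hη0 hxη
      hρ0 hρ n K hn hκ (hK n hn)
    refine ⟨hv, P, hPd, fun y hy => ?_, ?_⟩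
    · have hcast : ((d * (K * n) : ℕ) : ℝ) * θ' = d * K * β := by
        push_cast; rw [← hθ'n]; ring
      have := near_lip Ω hc hconv c x y hcΩ hxΩ (fun a b hab => hcen a b hab x hxΩ) η θ' hxη
        hθ'0 hθ'1 hθ'η hθ'd (fun a b hab => (hy a b hab).trans (by
          apply mul_le_mul_of_nonneg_right _ (Real.sqrt_nonneg _)
          rw [hρe]; linarith)) P (d * (K * n)) (by positivity) hPd (10 ^ d) hPM (by
            rw [mul_comm, hcast]; linarith)
      rw [hcast, hPx] at this
      have h2 := (abs_le.mp this).1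
      have h3 := le_abs_self (MvPolynomial.eval y P)
      linarith
    · refine hPi.trans (le_of_eq ?_)
      rw [hA0, show (n : ℝ) * ρ = β / 12 by rw [hρe, ← hθ'n]; ring]
  obtain ⟨T, ⟨hT1, hT2⟩, hTmax⟩ := exists_max_finset
    (fun T : Finset (Fin d → ℝ) => (∀ x ∈ T, ∃ z ∈ Ω, x = (1 - η) • z + η • c) ∧
      ∀ x ∈ T, ∀ y ∈ T, x ≠ y → Disjoint (Cell Ω c x ρ) (Cell Ω c y ρ)) (by simp)
    (4 * A0 * (2 * d * K) ^ d * n ^ d) (by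
      rintro T ⟨hT1, hT2⟩
      have hcl := fun x : T => hcell x.1 (hT1 x.1 x.2)
      choose hv P hPd hPl hPi using hcl
      have := l2_count Ω hc (fun x : T => Cell Ω c x.1 ρ)
        (fun x => (cell_closed Ω c x.1 ρ).measurableSet)
        (fun x => cell_sub Ω hc hconv c x.1 hcΩ (hsh _ (hT1 _ x.2)).1 η ρ (hsh _ (hT1 _ x.2)).2 hρ0 hρ)
        (fun x y hxy => hT2 _ x.2 _ y.2 (fun h => hxy (Subtype.ext h))) hv (d * (K * n)) P hPd hPl
        A0 hA0p hPi
      rw [Fintype.card_coe] at this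
      refine this.trans ?_
      rw [mul_assoc (4 * A0), ← mul_pow]
      gcongr
      push_cast
      have h1 : (1 : ℝ) ≤ d := by exact_mod_cast hd
      have : (1 : ℝ) ≤ d * (K * n) :=
        one_le_mul_of_one_le_of_one_le h1 (one_le_mul_of_one_le_of_one_le hKr hn1)
      linarith)
  have hTΩ : ∀ x ∈ T, x ∈ Ω := fun x hx => (hsh x (hT1 x hx)).1
  refine ⟨T, ?_, hTΩ, ?_⟩
  · have hcl := fun x : T => hcell x.1 (hT1 x.1 x.2)
    choose hv P hPd hPl hPi using hcl
    have := l2_count Ω hc (fun x : T => Cell Ω c x.1 ρ)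
      (fun x => (cell_closed Ω c x.1 ρ).measurableSet)
      (fun x => cell_sub Ω hc hconv c x.1 hcΩ (hsh _ (hT1 _ x.2)).1 η ρ (hsh _ (hT1 _ x.2)).2 hρ0 hρ)
      (fun x y hxy => hT2 _ x.2 _ y.2 (fun h => hxy (Subtype.ext h))) hv (d * (K * n)) P hPd hPl
      A0 hA0p hPi
    rw [Fintype.card_coe] at this
    refine this.trans ?_
    rw [mul_assoc (4 * A0), ← mul_pow]
    gcongr
    push_cast
    have h1 : (1 : ℝ) ≤ d := by exact_mod_cast hd
    have : (1 : ℝ) ≤ d * (K * n) :=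
      one_le_mul_of_one_le_of_one_le h1 (one_le_mul_of_one_le_of_one_le hKr hn1)
    linarith
  · intro Q hQ z' hz'
    obtain ⟨z, hzΩ, hzmax⟩ := hc.exists_isMaxOn ⟨z', hz'⟩ (mv_continuous Q).abs.continuousOn
    obtain ⟨M, hMe⟩ : ∃ M, M = |MvPolynomial.eval z Q| := ⟨_, rfl⟩
    have hM : ∀ y ∈ Ω, |MvPolynomial.eval y Q| ≤ M := fun y hy => by rw [hMe]; exact hzmax hy
    have hM0 : 0 ≤ M := by rw [hMe]; exact abs_nonneg _
    obtain ⟨x, hxe⟩ : ∃ x, x = (1 - η) • z + η • c := ⟨_, rfl⟩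
    have hx : ∃ z ∈ Ω, x = (1 - η) • z + η • c := ⟨z, hzΩ, hxe⟩
    have h1 := shrink_lip Ω hc hconv c z hcΩ hzΩ θ hθ0.le Q n hn hQ M hM (by rw [hθn]; norm_num)
    rw [← hη, ← hxe, mul_comm (n : ℝ) θ, hθn] at h1
    have hex : ∃ w ∈ T, (Cell Ω c x ρ ∩ Cell Ω c w ρ).Nonempty := by
      by_contra hcon
      push Not at hcon
      have hxx : x ∈ Cell Ω c x ρ := by
        intro a b _
        rw [sub_self, dotProduct_zero, abs_zero]
        positivity
      have hxT : x ∉ T := fun h => by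
        have := hcon x h
        rw [Set.inter_self] at this
        rw [this] at hxx
        exact hxx
      have := hTmax (insert x T) ⟨fun u hu => by
          rcases Finset.mem_insert.mp hu with rfl | hu
          · exact hx
          · exact hT1 u hu, fun u hu v hv huv => by
          rcases Finset.mem_insert.mp hu with rfl | hu'
          · rcases Finset.mem_insert.mp hv with rfl | hv
            · exact absurd rfl huv
            · exact Set.disjoint_iff_inter_eq_empty.mpr (hcon v hv)
          · rcases Finset.mem_insert.mp hv with rfl | hv
            · exact (Set.disjoint_iff_inter_eq_empty.mpr (hcon u hu')).symm
            · exact hT2 u hu' v hv huv⟩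
      rw [Finset.card_insert_of_notMem hxT] at this
      omega
    obtain ⟨w, hwT, y, hyx, hyw⟩ := hex
    refine ⟨w, hwT, ?_⟩
    obtain ⟨hxΩ, hxη⟩ := hsh x hx
    obtain ⟨hwΩ, hwη⟩ := hsh w (hT1 w hwT)
    have h2 := near_lip Ω hc hconv c x w hcΩ hxΩ (fun a b hab => hcen a b hab x hxΩ) η θ' hxη
      hθ'0 hθ'1 hθ'η hθ'd (fun a b hab =>
        (cell_meet Ω c x w y hcΩ hxΩ hwΩ η ρ hxη hwη hρ0 hρ hyx hyw a b hab).trans_eq (by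
          rw [hρe]; ring)) Q n hn hQ M hM (by rw [hθ'n]; linarith)
    rw [mul_comm (n : ℝ) θ', hθ'n] at h2
    have h3 : 11 * β * M ≤ 1 / 4 * M := by gcongr; linarith
    have h4 := hM z' hz'
    have h5 := abs_sub_abs_le_abs_sub (MvPolynomial.eval z Q) (MvPolynomial.eval x Q)
    have h6 := abs_sub_abs_le_abs_sub (MvPolynomial.eval x Q) (MvPolynomial.eval w Q)
    rw [abs_sub_comm] at h5 h6
    rw [← hMe] at h5
    linarith

theorem optimal_polynomial_meshes {d : ℕ} (hd : 1 ≤ d) :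
    ∃ C : ℝ, 0 < C ∧ ∀ n : ℕ, 0 < n → ∀ Ω : Set (EuclideanSpace ℝ (Fin d)),
      IsCompact Ω → Convex ℝ Ω → (interior Ω).Nonempty →
      ∃ (N : ℕ) (x : Fin N → EuclideanSpace ℝ (Fin d)),
        0 < N ∧ (N : ℝ) ≤ C * n ^ d ∧ (∀ j, x j ∈ Ω) ∧
        ∀ Q : MvPolynomial (Fin d) ℝ, Q.totalDegree ≤ n →
          ∀ z ∈ Ω, |MvPolynomial.eval (fun i => z i) Q| ≤
            2 * ⨆ j, |MvPolynomial.eval (fun i => x j i) Q| := by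
  obtain ⟨C, hC, h⟩ := core hd
  refine ⟨C, hC, fun n hn Ω hc hconv hIntr => ?_⟩
  let e := EuclideanSpace.equiv (Fin d) ℝ
  obtain ⟨T, hTc, hTΩ, hT⟩ := h n hn (Set.image e Ω) (hc.image e.continuous)
    (hconv.linear_image (e : EuclideanSpace ℝ (Fin d) →ₗ[ℝ] (Fin d → ℝ)))
    (by
      have : interior (Set.image e Ω) = Set.image e (interior Ω) := (e.toHomeomorph.image_interior Ω).symm
      rw [this]; exact hIntr.image e)
  have hne : T.Nonempty := by
    obtain ⟨z, hz⟩ := hIntr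
    obtain ⟨x, hx, _⟩ := hT 0 (by simp) (e z) ⟨z, interior_subset hz, rfl⟩
    exact ⟨x, hx⟩
  refine ⟨T.card, fun j => e.symm (T.equivFin.symm j), hne.card_pos, hTc, fun j => ?_, ?_⟩
  · obtain ⟨w, hw, hwe⟩ := hTΩ _ (T.equivFin.symm j).2
    show e.symm (T.equivFin.symm j).1 ∈ Ω
    rw [← hwe, e.symm_apply_apply]
    exact hw
  · intro Q hQ z hz
    obtain ⟨x, hx, hxe⟩ := hT Q hQ (e z) ⟨z, hz, rfl⟩
    refine le_trans hxe ?_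
    have hb : BddAbove (Set.range fun j : Fin T.card =>
        |MvPolynomial.eval (fun i => (e.symm (T.equivFin.symm j).1) i) Q|) :=
      (Set.finite_range _).bddAbove
    have h1 := le_ciSup hb (T.equivFin ⟨x, hx⟩)
    have h2 : |MvPolynomial.eval x Q| ≤ ⨆ j : Fin T.card,
        |MvPolynomial.eval (fun i => (e.symm (T.equivFin.symm j).1) i) Q| := by
      refine le_trans (le_of_eq ?_) h1
      rw [Equiv.symm_apply_apply]
      rfl
    linarith
end

section
/- Let Ω ⊂ ℝ² be given by Ω = { (x,y) : −1 ≤ x ≤ 1, f(x) ≤ y ≤ 1/3 }, where f : [−2,2] → ℝ is continuous and convex with f(0) = 0, f'_+(0) = 0, 0 ≤ f(x) ≤ 1/5 and |f'_±(x)| ≤ 1/3 for x ∈ [−1,1]. Define ρ̃((x₁,y₁),(x₂,y₂)) := ‖(x₁−x₂, y₁−y₂)‖ + sup_L |√(y₁−L(x₁)) − √(y₂−L(x₂))|, where the supremum is over linear functions L(x) = f(x₀) + a(x−x₀) with x₀ ∈ [−1,1] and a ∈ {f'_+(x₀), f'_−(x₀)}. Then there is an absolute constant C > 1 such that for every n,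 every polynomial Q ∈ Π_n² and every C₁²/n² ≤ δ ≤ 1/100 (with C₁ a suitable absolute constant) and (a,b) ∈ Ω, |Q(0,δ) − Q(a,b)| ≤ C·n·ρ̃((0,δ),(a,b))·max_{z∈Ω}|Q(z)|. -/
/-- The planar metric `ρ̃` built from supporting lines of the graph of `f`. -/
noncomputable def rhoTilde (f : ℝ → ℝ) (p q : ℝ × ℝ) : ℝ :=
  Real.sqrt ((p.1 - q.1) ^ 2 + (p.2 - q.2) ^ 2) +
    sSup {r : ℝ | ∃ x₀ ∈ Set.Icc (-1 : ℝ) 1, ∃ a : ℝ,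
      (a = derivWithin f (Set.Ici x₀) x₀ ∨ a = derivWithin f (Set.Iic x₀) x₀) ∧
      r = |Real.sqrt (p.2 - (f x₀ + a * (p.1 - x₀))) -
            Real.sqrt (q.2 - (f x₀ + a * (q.1 - x₀)))|}


lemma evalcomp (Q : MvPolynomial (Fin 2) ℝ) (u v : Polynomial ℝ) (x : ℝ) :
    (MvPolynomial.aeval ![u, v] Q).eval x = MvPolynomial.eval ![u.eval x, v.eval x] Q := by
  induction Q using MvPolynomial.induction_on with
  | C a => simp
  | add p q hp hq => simp [hp, hq]
  | mul_X p i hp => 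
    simp only [map_mul, Polynomial.eval_mul, hp, MvPolynomial.aeval_X, MvPolynomial.eval_X]
    fin_cases i <;> simp

noncomputable def jouk (q : Polynomial ℝ) (N : ℕ) (w : ℂ) : ℂ :=
  ∑ k ∈ Finset.range (N + 1), (q.coeff k : ℂ) * (1 / 2) ^ k * w ^ (N - k) * (w ^ 2 + 1) ^ k

lemma jouk_diff (q : Polynomial ℝ) (N : ℕ) : Differentiable ℂ (jouk q N) := by
  unfold jouk
  fun_prop

lemma jouk_recip (q : Polynomial ℝ) (N : ℕ) (w : ℂ) (hw : w ≠ 0) :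
    jouk q N w = w ^ (2 * N) * jouk q N w⁻¹ := by
  unfold jouk
  rw [Finset.mul_sum]
  refine Finset.sum_congr rfl fun k hk => ?_
  have hk' : k ≤ N := by simp at hk; omega
  obtain ⟨m, rfl⟩ := Nat.exists_eq_add_of_le hk'
  have e : k + m - k = m := by omega
  rw [e, show (2 * (k + m)) = m + m + 2 * k by ring, pow_add, pow_add, pow_mul w 2 k]
  have h1 : w ^ m * w⁻¹ ^ m = 1 := by rw [← mul_pow, mul_inv_cancel₀ hw, one_pow]
  have h2 : (w ^ 2) ^ k * (w⁻¹ ^ 2 + 1) ^ k = (w ^ 2 + 1) ^ k := by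
    rw [← mul_pow]; congr 1; field_simp; ring
  calc _ = (q.coeff k : ℂ) * (1 / 2) ^ k * w ^ m * 1 * (w ^ 2 + 1) ^ k := by ring
    _ = (q.coeff k : ℂ) * (1 / 2) ^ k * w ^ m * (w ^ m * w⁻¹ ^ m) *
          ((w ^ 2) ^ k * (w⁻¹ ^ 2 + 1) ^ k) := by rw [h1, h2]
    _ = _ := by ring

lemma jouk_circle (q : Polynomial ℝ) (N : ℕ) (hN : q.natDegree ≤ N) (θ : ℝ) :
    jouk q N (Complex.exp (θ * Complex.I)) =
      Complex.exp (θ * Complex.I) ^ N * ((q.eval (Real.cos θ) : ℝ) : ℂ) := by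
  unfold jouk
  rw [Polynomial.eval_eq_sum_range' (Nat.lt_succ_of_le hN), Complex.ofReal_sum, Finset.mul_sum]
  refine Finset.sum_congr rfl fun k hk => ?_
  have hk' : k ≤ N := by simp at hk; omega
  obtain ⟨m, rfl⟩ := Nat.exists_eq_add_of_le hk'
  have e : k + m - k = m := by omega
  have h : Complex.exp (θ * Complex.I) ^ 2 + 1 = 2 * Complex.exp (θ * Complex.I) * Complex.cos θ := by
    rw [Complex.cos]
    have : Complex.exp (θ * Complex.I) * Complex.exp (-θ * Complex.I) = 1 := by
      rw [← Complex.exp_add]; simp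
    linear_combination -this
  rw [e, h]
  push_cast
  rw [mul_pow, mul_pow, pow_add]
  have : ((1:ℂ)/2)^k * 2^k = 1 := by rw [← mul_pow]; norm_num
  linear_combination (q.coeff k * Complex.exp (θ * Complex.I) ^ m * Complex.exp (θ * Complex.I) ^ k * Complex.cos θ ^ k) * this

lemma jouk_bound_circle (q : Polynomial ℝ) (N : ℕ) (hN : q.natDegree ≤ N) (M : ℝ)
    (hM : ∀ x ∈ Set.Icc (-1 : ℝ) 1, |q.eval x| ≤ M) (w : ℂ) (hw : ‖w‖ = 1) :
    ‖jouk q N w‖ ≤ M := by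
  have : w = Complex.exp (Complex.arg w * Complex.I) := by
    have := Complex.norm_mul_exp_arg_mul_I w
    rw [hw] at this
    simpa using this.symm
  rw [this, jouk_circle q N hN, norm_mul, norm_pow, Complex.norm_exp_ofReal_mul_I]
  simp only [one_pow, one_mul, Complex.norm_real, Real.norm_eq_abs]
  exact hM _ ⟨Real.neg_one_le_cos _, Real.cos_le_one _⟩

lemma jouk_bound (q : Polynomial ℝ) (N : ℕ) (hN : q.natDegree ≤ N) (M : ℝ)
    (hM : ∀ x ∈ Set.Icc (-1 : ℝ) 1, |q.eval x| ≤ M) (w : ℂ) (R : ℝ) (hR : 1 ≤ R) (hw : ‖w‖ ≤ R) :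
    ‖jouk q N w‖ ≤ R ^ (2 * N) * M := by
  have hM0 : 0 ≤ M := (abs_nonneg _).trans (hM 0 (by norm_num))
  have inn : ∀ z : ℂ, ‖z‖ ≤ 1 → ‖jouk q N z‖ ≤ M := by
    intro z hz
    refine Complex.norm_le_of_forall_mem_frontier_norm_le (U := Metric.ball (0:ℂ) 1)
      Metric.isBounded_ball (jouk_diff q N).diffContOnCl ?_ ?_
    · intro z hz
      rw [frontier_ball (0:ℂ) one_ne_zero] at hz
      exact jouk_bound_circle q N hN M hM z (by simpa using hz)
    · rw [closure_ball (0:ℂ) one_ne_zero]; simpa using hz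
  have h1 : (1:ℝ) ≤ R ^ (2 * N) := one_le_pow₀ hR
  by_cases h : ‖w‖ ≤ 1
  · exact (inn w h).trans (le_mul_of_one_le_left hM0 h1)
  · push Not at h
    have hw0 : w ≠ 0 := by rintro rfl; simp at h; linarith
    rw [jouk_recip q N w hw0, norm_mul, norm_pow]
    have : ‖jouk q N w⁻¹‖ ≤ M := inn _ (by rw [norm_inv]; exact inv_le_one_of_one_le₀ h.le)
    gcongr

lemma jouk_deriv (q : Polynomial ℝ) (N : ℕ) (hN0 : 0 < N) (hN : q.natDegree ≤ N) (M : ℝ)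
    (hM : ∀ x ∈ Set.Icc (-1 : ℝ) 1, |q.eval x| ≤ M) (w : ℂ) (hw : ‖w‖ = 1) :
    ‖deriv (jouk q N) w‖ ≤ 8 * N * M := by
  have hM0 : 0 ≤ M := (abs_nonneg _).trans (hM 0 (by norm_num))
  have hN1 : (0:ℝ) < N := by exact_mod_cast hN0
  have hr : (0:ℝ) < 1 / N := by positivity
  have h := Complex.norm_deriv_le_of_forall_mem_sphere_norm_le (c := w) (C := 8 * M) hr
    (jouk_diff q N).diffContOnCl (fun z hz => by
      have hz1 : ‖z‖ ≤ 1 + 1 / N := by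
        have : ‖z - w‖ = 1 / N := by simpa using hz
        calc ‖z‖ = ‖w + (z - w)‖ := by ring_nf
          _ ≤ ‖w‖ + ‖z - w‖ := norm_add_le _ _
          _ = _ := by rw [hw, this]
      refine (jouk_bound q N hN M hM z (1 + 1 / N) (by linarith) hz1).trans ?_
      gcongr
      calc (1 + 1 / (N:ℝ)) ^ (2 * N) ≤ (Real.exp (1 / N)) ^ (2 * N) := by
            gcongr; rw [add_comm]; exact Real.add_one_le_exp _
        _ = Real.exp 1 ^ 2 := by
            rw [← Real.exp_nat_mul, ← Real.exp_nat_mul]; congr 1; push_cast; field_simp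
        _ ≤ 8 := by
            have := Real.exp_one_lt_d9
            have := Real.exp_pos 1
            nlinarith)
  calc _ ≤ _ := h
    _ = _ := by field_simp

lemma bern_trig (q : Polynomial ℝ) (N : ℕ) (hN0 : 0 < N) (hN : q.natDegree ≤ N) (M : ℝ)
    (hM : ∀ x ∈ Set.Icc (-1 : ℝ) 1, |q.eval x| ≤ M) (θ φ : ℝ) :
    |q.eval (Real.cos θ) - q.eval (Real.cos φ)| ≤ 9 * N * M * |θ - φ| := by
  have key : ∀ θ : ℝ, |deriv (fun θ : ℝ => q.eval (Real.cos θ)) θ| ≤ 9 * N * M := by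
    intro θ
    have hM0 : 0 ≤ M := (abs_nonneg _).trans (hM 0 (by norm_num))
    have hd : HasDerivAt (fun θ : ℝ => q.eval (Real.cos θ)) (q.derivative.eval (Real.cos θ) * (- Real.sin θ)) θ :=
      (q.hasDerivAt _).comp θ (Real.hasDerivAt_cos θ)
    set D := q.derivative.eval (Real.cos θ) * (- Real.sin θ)
    rw [hd.deriv]
    set e : ℂ := Complex.exp (θ * Complex.I) with he
    have hE : HasDerivAt (fun t : ℝ => Complex.exp (t * Complex.I)) (e * Complex.I) θ := by
      have h1 : HasDerivAt (fun t : ℝ => (t : ℂ) * Complex.I) Complex.I θ := by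
        simpa using (Complex.ofRealCLM.hasDerivAt (x := θ)).mul_const Complex.I
      exact h1.cexp
    have h2 : HasDerivAt (fun t : ℝ => jouk q N (Complex.exp (t * Complex.I)))
        (deriv (jouk q N) e * (e * Complex.I)) θ :=
      HasDerivAt.comp θ (h₂ := jouk q N) ((jouk_diff q N) e).hasDerivAt hE
    have h3 := (hE.pow N).mul hd.ofReal_comp
    have h4 := h2.unique (h3.congr_of_eventuallyEq (Filter.Eventually.of_forall fun t => by
      simpa using jouk_circle q N hN t))
    have hne : ‖e‖ = 1 := Complex.norm_exp_ofReal_mul_I θ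
    have h5 : e ^ N * (D : ℂ) = deriv (jouk q N) e * (e * Complex.I) 
        - (N * e ^ (N - 1) * (e * Complex.I)) * ((q.eval (Real.cos θ) : ℝ) : ℂ) := by
      rw [h4]; simp [← he]
    have h6 : |D| = ‖e ^ N * (D : ℂ)‖ := by simp [hne]
    rw [h6, h5]
    refine (norm_sub_le _ _).trans ?_
    have h7 := jouk_deriv q N hN0 hN M hM e hne
    have h8 := hM (Real.cos θ) ⟨Real.neg_one_le_cos _, Real.cos_le_one _⟩
    simp only [norm_mul, norm_pow, hne, Complex.norm_I, Complex.norm_real, Real.norm_eq_abs, one_pow, mul_one, Complex.norm_natCast]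
    have : (N:ℝ) * |q.eval (Real.cos θ)| ≤ N * M := by gcongr
    linarith
  have := Convex.norm_image_sub_le_of_norm_deriv_le (𝕜 := ℝ) (f := fun θ : ℝ => q.eval (Real.cos θ)) (s := Set.univ)
    (x := φ) (y := θ) (C := 9 * N * M)
    (fun x _ => ((q.hasDerivAt _).comp x (Real.hasDerivAt_cos x)).differentiableAt) (fun x _ => key x) convex_univ trivial trivial
  simpa using this

lemma arccos_lip (s t : ℝ) (hs : s ∈ Set.Icc (-1/2 : ℝ) (1/2)) (ht : t ∈ Set.Icc (-1/2 : ℝ) (1/2)) :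
    |Real.arccos s - Real.arccos t| ≤ 2 * |s - t| := by
  have := Convex.norm_image_sub_le_of_norm_hasDerivWithin_le (𝕜 := ℝ) (f := Real.arccos)
    (f' := fun x => -(1 / √(1 - x ^ 2))) (s := Set.Icc (-1/2 : ℝ) (1/2)) (C := 2) (x := t) (y := s)
    (fun x hx => (Real.hasDerivAt_arccos (by have := hx.1; intro h; linarith) 
      (by have := hx.2; intro h; linarith)).hasDerivWithinAt)
    (fun x hx => by
      have h : (1/2 : ℝ) ≤ √(1 - x ^ 2) := by
        apply Real.le_sqrt_of_sq_le
        nlinarith [hx.1, hx.2]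
      rw [norm_neg, Real.norm_eq_abs, abs_of_nonneg (by positivity)]
      rw [div_le_iff₀ (by linarith)]; linarith)
    (convex_Icc _ _) ht hs
  simpa using this

lemma bern (q : Polynomial ℝ) (N : ℕ) (hN0 : 0 < N) (hN : q.natDegree ≤ N) (M : ℝ)
    (hM : ∀ x ∈ Set.Icc (-1 : ℝ) 1, |q.eval x| ≤ M) (s t : ℝ)
    (hs : s ∈ Set.Icc (-1/2 : ℝ) (1/2)) (ht : t ∈ Set.Icc (-1/2 : ℝ) (1/2)) :
    |q.eval s - q.eval t| ≤ 18 * N * M * |s - t| := by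
  have hM0 : 0 ≤ M := (abs_nonneg _).trans (hM 0 (by norm_num))
  have h := bern_trig q N hN0 hN M hM (Real.arccos s) (Real.arccos t)
  rw [Real.cos_arccos (by linarith [hs.1]) (by linarith [hs.2]),
    Real.cos_arccos (by linarith [ht.1]) (by linarith [ht.2])] at h
  have h2 := arccos_lip s t hs ht
  have : 0 ≤ 9 * N * M := by positivity
  nlinarith

lemma support_line (f : ℝ → ℝ) (hf : ConvexOn ℝ (Set.Icc (-2 : ℝ) 2) f) (x₀ : ℝ)
    (hx₀ : x₀ ∈ Set.Icc (-1 : ℝ) 1) (s : ℝ)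
    (hs : s = derivWithin f (Set.Ici x₀) x₀ ∨ s = derivWithin f (Set.Iic x₀) x₀)
    (x : ℝ) (hx : x ∈ Set.Icc (-1 : ℝ) 1) : f x₀ + s * (x - x₀) ≤ f x := by
  have hi : ∀ z ∈ Set.Icc (-1 : ℝ) 1, z ∈ interior (Set.Icc (-2 : ℝ) 2) := by
    intro z hz; rw [interior_Icc]; exact ⟨by linarith [hz.1], by linarith [hz.2]⟩
  have hlr := hf.leftDeriv_le_rightDeriv_of_mem_interior (hi x₀ hx₀)
  have hl : derivWithin f (Set.Iic x₀) x₀ = derivWithin f (Set.Iio x₀) x₀ :=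
    (hf.hasDerivWithinAt_leftDeriv_of_mem_interior (hi x₀ hx₀)).Iic_of_Iio.derivWithin
      (uniqueDiffWithinAt_Iic x₀)
  rw [← derivWithin_Ioi_eq_Ici, hl] at hs
  rcases lt_trichotomy x x₀ with h | h | h
  · have h1 := hf.slope_le_leftDeriv_of_mem_interior (interior_subset (hi x hx)) (hi x₀ hx₀) h
    rw [slope_def_field, div_le_iff₀ (by linarith)] at h1
    have : derivWithin f (Set.Iio x₀) x₀ ≤ s := by rcases hs with rfl | rfl <;> linarith
    nlinarith
  · subst h; simp
  · have h1 := hf.rightDeriv_le_slope_of_mem_interior (hi x₀ hx₀) (interior_subset (hi x hx)) h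
    rw [slope_def_field, le_div_iff₀ (by linarith)] at h1
    have : s ≤ derivWithin f (Set.Ioi x₀) x₀ := by rcases hs with rfl | rfl <;> linarith
    nlinarith

/-- consequence of the sup bound: slope bound. -/
lemma slope_bound (δ b a s v w R : ℝ) (hδ : 0 < δ) (hb : 0 ≤ b) (hv : δ ≤ v) (hw : 0 ≤ w)
    (hvw : w = v + (b - δ) - s * a) (hR : R ≤ √δ / 10)
    (h0 : |√δ - √b| ≤ R) (h1 : |√v - √w| ≤ R) : |s * a| ≤ 6 * R * √v := by
  have hR0 : 0 ≤ R := (abs_nonneg _).trans h0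
  have e1 := Real.sq_sqrt hδ.le
  have e2 := Real.sq_sqrt hb
  have e3 := Real.sq_sqrt (hδ.le.trans hv)
  have e4 := Real.sq_sqrt hw
  have hvs : √δ ≤ √v := Real.sqrt_le_sqrt hv
  have p1 := Real.sqrt_nonneg δ
  have p2 := Real.sqrt_nonneg b
  have p3 := Real.sqrt_nonneg v
  have p4 := Real.sqrt_nonneg w
  have q1 : |v - w| ≤ R * (√v + √w) := by
    have : v - w = (√v - √w) * (√v + √w) := by linear_combination e4 - e3
    rw [this, abs_mul, abs_of_nonneg (by positivity : 0 ≤ √v + √w)]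
    gcongr
  have q2 : |δ - b| ≤ R * (√δ + √b) := by
    have : δ - b = (√δ - √b) * (√δ + √b) := by linear_combination e2 - e1
    rw [this, abs_mul, abs_of_nonneg (by positivity : 0 ≤ √δ + √b)]
    gcongr
  have q3 : |s * a| ≤ |v - w| + |δ - b| := by
    rw [show s * a = (v - w) - (δ - b) by rw [hvw]; ring]
    exact abs_sub _ _
  have a1 := abs_le.1 h0
  have a2 := abs_le.1 h1
  have : √v + √w + (√δ + √b) ≤ 6 * √v := by linarith
  nlinarith

set_option maxHeartbeats 1000000 in
lemma key_core (f : ℝ → ℝ) (hf : ConvexOn ℝ (Set.Icc (-2 : ℝ) 2) f) (f0 : f 0 = 0)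
    (hd0 : derivWithin f (Set.Ici (0 : ℝ)) 0 = 0)
    (hfb : ∀ x ∈ Set.Icc (-1 : ℝ) 1, 0 ≤ f x ∧ f x ≤ 1 / 5)
    (n : ℕ) (hn : 0 < n) (δ : ℝ) (hδ : 0 < δ) (hδ1 : δ ≤ 1 / 100)
    (Q : MvPolynomial (Fin 2) ℝ) (hQ : Q.totalDegree ≤ n) (M : ℝ)
    (hM : ∀ x ∈ Set.Icc (-1 : ℝ) 1, ∀ y, f x ≤ y → y ≤ 1 / 3 → |MvPolynomial.eval ![x, y] Q| ≤ M)
    (a b R : ℝ) (ha : a ∈ Set.Icc (-1 : ℝ) 1) (hb : f a ≤ b)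
    (haR : |a| ≤ R) (hR : R ≤ √δ / 10)
    (hsup : ∀ x₀ ∈ Set.Icc (-1 : ℝ) 1, ∀ s : ℝ,
      (s = derivWithin f (Set.Ici x₀) x₀ ∨ s = derivWithin f (Set.Iic x₀) x₀) →
      |√(δ - (f x₀ + s * (0 - x₀))) - √(b - (f x₀ + s * (a - x₀)))| ≤ R) :
    |MvPolynomial.eval ![0, δ] Q - MvPolynomial.eval ![a, b] Q| ≤ 600 * n * R * M := by
  have hR0 : 0 ≤ R := (abs_nonneg _).trans haR
  have hM0 : 0 ≤ M := (abs_nonneg _).trans (hM 0 (by norm_num) 0 f0.le (by norm_num))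
  have z0 : (0:ℝ) ∈ Set.Icc (-1 : ℝ) 1 := by norm_num
  have hb0 : 0 ≤ b := (hfb a ha).1.trans hb
  have h0 : |√δ - √b| ≤ R := by
    have := hsup 0 z0 0 (Or.inl hd0.symm)
    simpa [f0] using this
  have hsδ : √δ ≤ 1 / 10 := by
    rw [Real.sqrt_le_left (by norm_num)]; linarith
  have hsδ0 : 0 < √δ := Real.sqrt_pos.2 hδ
  have e1 := Real.sq_sqrt hδ.le
  have e2 := Real.sq_sqrt hb0
  have p2 := Real.sqrt_nonneg b
  have a0 := abs_le.1 h0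
  have hbδ : |b - δ| ≤ R * (2 * √δ + R) := by
    have : b - δ = (√b - √δ) * (√δ + √b) := by linear_combination e1 - e2
    rw [this, abs_mul, abs_of_nonneg (by positivity : 0 ≤ √δ + √b), abs_sub_comm]
    exact mul_le_mul h0 (by linarith) (by positivity) hR0
  have hslope : ∀ x₀ ∈ Set.Icc (-1 : ℝ) 1, ∀ s : ℝ,
      (s = derivWithin f (Set.Ici x₀) x₀ ∨ s = derivWithin f (Set.Iic x₀) x₀) →
      δ ≤ δ - (f x₀ + s * (0 - x₀)) ∧ |s * a| ≤ 6 * R * √(δ - (f x₀ + s * (0 - x₀))) := by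
    intro x₀ hx₀ s hs
    have l0 := support_line f hf x₀ hx₀ s hs 0 z0
    have la := support_line f hf x₀ hx₀ s hs a ha
    have hv : δ ≤ δ - (f x₀ + s * (0 - x₀)) := by linarith
    exact ⟨hv, slope_bound δ b a s _ (b - (f x₀ + s * (a - x₀))) R hδ hb0 hv (by linarith)
      (by ring) hR h0 (hsup x₀ hx₀ s hs)⟩
  have hdepth : 9 / 10 * √δ ≤ √(b - f a) := by
    have h1 := abs_le.1 (hsup a ha _ (Or.inl rfl))
    have h2 := (hslope a ha _ (Or.inl rfl)).1
    have h3 := Real.sqrt_le_sqrt h2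
    simp only [sub_self, mul_zero, add_zero] at h1
    linarith [h1.1, h1.2]
  set b' : ℝ := δ + 9 * R ^ 2 with hb'
  have hpar : ∀ x ∈ Set.Icc (-1 : ℝ) 1, a ^ 2 * f x ≤ a ^ 2 * δ + 9 * R ^ 2 * x ^ 2 := by
    intro x hx
    obtain ⟨h1, h2⟩ := hslope x hx _ (Or.inl rfl)
    set s := derivWithin f (Set.Ici x) x
    set v := δ - (f x + s * (0 - x)) with hv
    have e3 := Real.sq_sqrt (hδ.le.trans h1)
    have h3 : (s * a) ^ 2 ≤ 36 * R ^ 2 * v := by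
      rw [← e3, ← sq_abs]
      calc |s * a| ^ 2 ≤ (6 * R * √v) ^ 2 := by gcongr
        _ = _ := by ring
    have hfx : f x = δ + s * x - v := by rw [hv]; ring
    by_cases hR' : R = 0
    · have : a = 0 := by rw [hR'] at haR; exact abs_eq_zero.1 (le_antisymm haR (abs_nonneg _))
      rw [this, hR']; simp
    have hRp : 0 < R ^ 2 := by positivity
    have h4 : 0 ≤ (s * a ^ 2 - 18 * R ^ 2 * x) ^ 2 := sq_nonneg _
    have h5 : a ^ 2 * (s * a) ^ 2 ≤ a ^ 2 * (36 * R ^ 2 * v) := by gcongr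
    rw [hfx]
    have h6 : 36 * R ^ 2 * (a ^ 2 * (δ + s * x - v)) ≤ 36 * R ^ 2 * (a ^ 2 * δ + 9 * R ^ 2 * x ^ 2) := by
      nlinarith
    exact le_of_mul_le_mul_left h6 (by positivity)
  have hRs : R ≤ 1 / 100 := by linarith
  have hnn : ((n * 2 : ℕ) : ℝ) = 2 * n := by push_cast; ring
  have step1 : |MvPolynomial.eval ![0, δ] Q - MvPolynomial.eval ![a, b'] Q| ≤ 216 * n * R * M ∧ f a ≤ b' := by
    set c : ℝ := a / (6 * R) with hc
    have hc0 : c * (6 * R) = a := by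
      by_cases hR' : R = 0
      · have : a = 0 := by rw [hR'] at haR; exact abs_eq_zero.1 (le_antisymm haR (abs_nonneg _))
        rw [this, hR']; simp
      · rw [hc]; field_simp
    have hc1 : |c| ≤ 1 / 6 := by
      rw [hc, abs_div, abs_of_nonneg (by positivity : 0 ≤ 6 * R)]
      apply div_le_of_le_mul₀ (by positivity) (by norm_num)
      linarith
    have hc2 := abs_le.1 hc1
    have hbelow : ∀ t ∈ Set.Icc (-1 : ℝ) 1, c * t ∈ Set.Icc (-1 : ℝ) 1 ∧ f (c * t) ≤ δ + t ^ 2 / 4 := by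
      intro t ht
      have hm : c * t ∈ Set.Icc (-1 : ℝ) 1 := by
        rw [Set.mem_Icc, ← abs_le, abs_mul]
        have := abs_le.2 ht
        nlinarith [abs_nonneg c, abs_nonneg t]
      refine ⟨hm, ?_⟩
      by_cases ha0 : a = 0
      · have : c = 0 := by rw [hc, ha0]; simp
        rw [this, zero_mul, f0]; positivity
      · have h1 := hpar (c * t) hm
        have h2 : 9 * R ^ 2 * (c * t) ^ 2 = a ^ 2 * (t ^ 2 / 4) := by rw [← hc0]; ring
        rw [h2, ← mul_add] at h1
        exact le_of_mul_le_mul_left h1 (by positivity)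
    have hb6 : b' = δ + (6 * R) ^ 2 / 4 := by rw [hb']; ring
    constructor
    · let u : Polynomial ℝ := Polynomial.C c * Polynomial.X
      let v : Polynomial ℝ := Polynomial.C δ + Polynomial.C (1 / 4) * Polynomial.X ^ 2
      have hu : u.natDegree ≤ 2 := by
        simp only [u]; compute_degree; norm_num
      have hv : v.natDegree ≤ 2 := by simp only [v]; compute_degree
      have hdeg := MvPolynomial.aeval_natDegree_le Q hQ ![u, v] (n := 2)
        (by intro i; fin_cases i <;> simp [hu, hv])
      have hev : ∀ t, (MvPolynomial.aeval ![u, v] Q).eval t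
          = MvPolynomial.eval ![c * t, δ + t ^ 2 / 4] Q := by
        intro t
        rw [evalcomp]
        congr 2
        simp [u, v]; ring_nf
      have h := bern _ (n * 2) (by omega) hdeg M (fun t ht => by
        rw [hev]
        obtain ⟨h1, h2⟩ := hbelow t ht
        exact hM _ h1 _ h2 (by nlinarith [ht.1, ht.2])) 0 (6 * R) (by norm_num)
        ⟨by linarith, by linarith⟩
      rw [hev, hev, hnn, hc0, ← hb6, zero_sub, abs_neg, abs_of_nonneg (by positivity : 0 ≤ 6 * R)] at h
      simp only [mul_zero, ne_eq, OfNat.ofNat_ne_zero, not_false_eq_true, zero_pow, zero_div,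
        add_zero] at h
      linarith
    · have := (hbelow (6 * R) ⟨by linarith, by linarith⟩).2
      rwa [hc0, ← hb6] at this
  obtain ⟨step1, hfb'⟩ := step1
  have step2 : |MvPolynomial.eval ![a, b'] Q - MvPolynomial.eval ![a, b] Q| ≤ 384 * n * R * M := by
    have hfa := hfb a ha
    set T : ℝ := √(1 / 3 - f a) with hT
    have hT2 : T ^ 2 = 1 / 3 - f a := Real.sq_sqrt (by linarith)
    have hT0 : 9 / 25 ≤ T := Real.le_sqrt_of_sq_le (by linarith)
    have hTp : 0 < T := by linarith
    have hRR : R ^ 2 ≤ R * √δ / 10 := by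
      have := mul_le_mul_of_nonneg_left hR hR0
      linarith [sq R]
    have hRδ : R * √δ / 10 ≤ 1 / 1000 * (1 / 10) := by
      have := mul_le_mul hRs hsδ hsδ0.le (by norm_num)
      linarith
    have hRe : R * (2 * √δ + R) = 2 * (R * √δ) + R ^ 2 := by ring
    rw [hRe] at hbδ
    have hRnn : 0 ≤ R * √δ := by positivity
    have hab := abs_le.1 hbδ
    have hdiff : |b' - b| ≤ 3 * R * √δ := by
      rw [abs_le]; constructor <;> linarith [hab.1, hab.2, sq_nonneg R]
    let u : Polynomial ℝ := Polynomial.C a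
    let v : Polynomial ℝ := Polynomial.C (f a) + Polynomial.C (T ^ 2) * Polynomial.X ^ 2
    have hu : u.natDegree ≤ 2 := by simp [u]
    have hv : v.natDegree ≤ 2 := by simp only [v]; compute_degree
    have hdeg := MvPolynomial.aeval_natDegree_le Q hQ ![u, v] (n := 2)
      (by intro i; fin_cases i <;> simp [hu, hv])
    have hev : ∀ t, (MvPolynomial.aeval ![u, v] Q).eval t
        = MvPolynomial.eval ![a, f a + T ^ 2 * t ^ 2] Q := by
      intro t
      rw [evalcomp]
      simp [u, v]
    have hpt : ∀ y, f a ≤ y → y ≤ 1 / 50 → √(y - f a) / T ∈ Set.Icc (-1 / 2 : ℝ) (1 / 2) ∧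
        f a + T ^ 2 * (√(y - f a) / T) ^ 2 = y := by
      intro y hy hy1
      refine ⟨⟨?_, ?_⟩, ?_⟩
      · have : 0 ≤ √(y - f a) / T := by positivity
        linarith
      · rw [div_le_iff₀ hTp, Real.sqrt_le_left (by positivity)]
        nlinarith
      · have hne : T ^ 2 ≠ 0 := by positivity
        rw [div_pow, mul_div_cancel₀ _ hne, Real.sq_sqrt (by linarith)]; ring
    obtain ⟨m1, v1⟩ := hpt b' hfb' (by linarith)
    obtain ⟨m2, v2⟩ := hpt b hb (by linarith [hab.1, hab.2])
    have h := bern _ (n * 2) (by omega) hdeg M (fun t ht => by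
      rw [hev]
      have : t ^ 2 ≤ 1 := by nlinarith [ht.1, ht.2]
      have h3 : 0 ≤ T ^ 2 * t ^ 2 := by positivity
      refine hM _ ha _ (by linarith) ?_
      have : T ^ 2 * t ^ 2 ≤ T ^ 2 * 1 := by gcongr
      linarith) _ _ m1 m2
    rw [hev, hev, hnn, v1, v2] at h
    have hd : |√(b' - f a) / T - √(b - f a) / T| ≤ 32 / 3 * R := by
      rw [← sub_div, abs_div, abs_of_pos hTp, div_le_iff₀ hTp]
      have g1 := Real.sq_sqrt (sub_nonneg.2 hfb')
      have g2 := Real.sq_sqrt (sub_nonneg.2 hb)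
      have g3 := Real.sqrt_nonneg (b' - f a)
      have g4 : |√(b' - f a) - √(b - f a)| * (√(b' - f a) + √(b - f a)) = |b' - b| := by
        rw [← abs_of_nonneg (by positivity : 0 ≤ √(b' - f a) + √(b - f a)), ← abs_mul]
        congr 1
        linear_combination g1 - g2
      have g5 : |√(b' - f a) - √(b - f a)| * (9 / 10 * √δ) ≤ 3 * R * √δ := by
        refine le_trans ?_ (g4.le.trans hdiff)
        gcongr
        linarith
      have g6 : |√(b' - f a) - √(b - f a)| * (9 / 10) ≤ 3 * R := by
        refine le_of_mul_le_mul_right ?_ hsδ0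
        linarith
      have g7 := mul_le_mul_of_nonneg_left hT0 hR0
      linarith
    calc _ ≤ _ := h
      _ ≤ 18 * (2 * n) * M * (32 / 3 * R) := by gcongr
      _ = _ := by ring
  calc _ ≤ _ := abs_sub_le _ (MvPolynomial.eval ![a, b'] Q) _
    _ ≤ _ := by linarith

theorem two_dimensional_key_proposition :
    ∃ C₁ > (0 : ℝ), ∃ C > (1 : ℝ), ∀ f : ℝ → ℝ,
      ConvexOn ℝ (Set.Icc (-2 : ℝ) 2) f →
      ContinuousOn f (Set.Icc (-2 : ℝ) 2) →
      f 0 = 0 →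
      derivWithin f (Set.Ici (0 : ℝ)) 0 = 0 →
      (∀ x ∈ Set.Icc (-1 : ℝ) 1, 0 ≤ f x ∧ f x ≤ 1 / 5) →
      (∀ x ∈ Set.Icc (-1 : ℝ) 1,
        |derivWithin f (Set.Ici x) x| ≤ 1 / 3 ∧ |derivWithin f (Set.Iic x) x| ≤ 1 / 3) →
      ∀ G : Set (ℝ × ℝ),
        G = {p : ℝ × ℝ | p.1 ∈ Set.Icc (-1 : ℝ) 1 ∧ f p.1 ≤ p.2 ∧ p.2 ≤ 1 / 3} →
      ∀ n : ℕ, 0 < n → ∀ δ : ℝ, C₁ ^ 2 / n ^ 2 ≤ δ → δ ≤ 1 / 100 →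
      ∀ Q : MvPolynomial (Fin 2) ℝ, Q.totalDegree ≤ n →
      ∀ a b : ℝ, (a, b) ∈ G →
        |MvPolynomial.eval ![0, δ] Q - MvPolynomial.eval ![a, b] Q| ≤
          C * n * rhoTilde f (0, δ) (a, b) *
            sSup ((fun p : ℝ × ℝ => |MvPolynomial.eval ![p.1, p.2] Q|) '' G) := by
  refine ⟨1, one_pos, 1000, by norm_num, ?_⟩
  intro f hf _ f0 hd0 hfb hfs G hG n hn δ hδ hδ1 Q hQ a b hab
  have hn' : (0:ℝ) < n := by exact_mod_cast hn
  have hδp : 0 < δ := lt_of_lt_of_le (by positivity) hδ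
  have hbdd : BddAbove ((fun p : ℝ × ℝ => |MvPolynomial.eval ![p.1, p.2] Q|) '' G) := by
    have hK : IsCompact (Set.Icc (-1 : ℝ) 1 ×ˢ Set.Icc (0 : ℝ) (1 / 3)) := isCompact_Icc.prod isCompact_Icc
    have hcont : Continuous (fun p : ℝ × ℝ => |MvPolynomial.eval ![p.1, p.2] Q|) := by
      have : Continuous (fun p : ℝ × ℝ => (![p.1, p.2] : Fin 2 → ℝ)) := by
        refine continuous_pi fun i => ?_
        fin_cases i <;> simp <;> fun_prop
      exact ((MvPolynomial.continuous_eval Q).comp this).abs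
    refine (hK.bddAbove_image hcont.continuousOn).mono (Set.image_mono ?_)
    rw [hG]
    rintro ⟨x, y⟩ ⟨h1, h2, h3⟩
    exact ⟨h1, (hfb x h1).1.trans h2, h3⟩
  set M := sSup ((fun p : ℝ × ℝ => |MvPolynomial.eval ![p.1, p.2] Q|) '' G) with hMdef
  have hM : ∀ x ∈ Set.Icc (-1 : ℝ) 1, ∀ y, f x ≤ y → y ≤ 1 / 3 →
      |MvPolynomial.eval ![x, y] Q| ≤ M := by
    intro x hx y h1 h2
    refine le_csSup hbdd ⟨(x, y), ?_, rfl⟩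
    rw [hG]; exact ⟨hx, h1, h2⟩
  have hM0 : 0 ≤ M := (abs_nonneg _).trans (hM 0 (by norm_num) 0 f0.le (by norm_num))
  rw [hG] at hab
  obtain ⟨ha, hb, hb3⟩ := hab
  simp only at ha hb hb3
  set R := rhoTilde f (0, δ) (a, b) with hRdef
  set S := {r : ℝ | ∃ x₀ ∈ Set.Icc (-1 : ℝ) 1, ∃ s : ℝ,
      (s = derivWithin f (Set.Ici x₀) x₀ ∨ s = derivWithin f (Set.Iic x₀) x₀) ∧
      r = |Real.sqrt (δ - (f x₀ + s * (0 - x₀))) - Real.sqrt (b - (f x₀ + s * (a - x₀)))|} with hS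
  have hReq : R = √((0 - a) ^ 2 + (δ - b) ^ 2) + sSup S := rfl
  have hSb : BddAbove S := by
    refine ⟨4, ?_⟩
    rintro r ⟨x₀, hx₀, s, hs, rfl⟩
    have hs3 : |s| ≤ 1 / 3 := by
      rcases hs with rfl | rfl
      · exact (hfs x₀ hx₀).1
      · exact (hfs x₀ hx₀).2
    have gen : ∀ y z : ℝ, y ≤ 1 / 3 → |z - x₀| ≤ 2 → √(y - (f x₀ + s * (z - x₀))) ≤ 2 := by
      intro y z hy hz
      rw [Real.sqrt_le_left (by norm_num)]
      have h1 := (hfb x₀ hx₀).1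
      have h2 : |s * (z - x₀)| ≤ 1 / 3 * 2 := by rw [abs_mul]; gcongr
      have := abs_le.1 h2
      linarith
    have g1 := gen δ 0 (by linarith) (abs_le.2 ⟨by linarith [hx₀.2], by linarith [hx₀.1]⟩)
    have g2 := gen b a hb3 (abs_le.2 ⟨by linarith [hx₀.2, ha.1], by linarith [hx₀.1, ha.2]⟩)
    have g3 := Real.sqrt_nonneg (δ - (f x₀ + s * (0 - x₀)))
    have g4 := Real.sqrt_nonneg (b - (f x₀ + s * (a - x₀)))
    rw [abs_le]; constructor <;> linarith
  have hS0 : 0 ≤ sSup S := by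
    refine Real.sSup_nonneg ?_
    rintro r ⟨x₀, hx₀, s, hs, rfl⟩
    exact abs_nonneg _
  have hE : |a| ≤ √((0 - a) ^ 2 + (δ - b) ^ 2) := by
    refine Real.abs_le_sqrt ?_
    nlinarith [sq_nonneg (δ - b)]
  have hsup : ∀ x₀ ∈ Set.Icc (-1 : ℝ) 1, ∀ s : ℝ,
      (s = derivWithin f (Set.Ici x₀) x₀ ∨ s = derivWithin f (Set.Iic x₀) x₀) →
      |√(δ - (f x₀ + s * (0 - x₀))) - √(b - (f x₀ + s * (a - x₀)))| ≤ R := by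
    intro x₀ hx₀ s hs
    have := le_csSup hSb ⟨x₀, hx₀, s, hs, rfl⟩
    linarith [abs_nonneg a]
  have hR0 : 0 ≤ R := by linarith [abs_nonneg a]
  by_cases hR : R ≤ √δ / 10
  · refine (key_core f hf f0 hd0 hfb n hn δ hδp hδ1 Q hQ M hM a b R ha hb (by linarith) hR hsup).trans ?_
    have : 0 ≤ n * R * M := by positivity
    linarith
  · push Not at hR
    have h1 : 1 / (n:ℝ) ≤ √δ := by
      refine Real.le_sqrt_of_sq_le ?_
      rw [div_pow]; exact hδ
    have h2 : 1 / 10 ≤ n * R := by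
      have : (n:ℝ) * (1 / n / 10) ≤ n * R := by gcongr; linarith
      have e : (n:ℝ) * (1 / n / 10) = 1 / 10 := by field_simp
      linarith
    have h3 := hM 0 (by norm_num) δ (by linarith) (by linarith)
    have h4 := hM a ha b hb hb3
    have h5 := abs_sub (MvPolynomial.eval ![0, δ] Q) (MvPolynomial.eval ![a, b] Q)
    have h6 : 1 / 10 * M ≤ n * R * M := by gcongr
    linarith
end
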